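/- arXiv:1203.2238 — 3 statements merged into one kernel-verified Lean document; each statement's English description precedes it below -/
import Mathlib

section
/- The isoperimetric ratio gradient flow does not increase the length when started from a convex curve: let x : ℝ × [0,T) → ℝ² be a smooth family of closed curves evolving by the isoperimetric ratio gradient flow ∂_t x = (k − L(t)/(2A(t)))·N, and suppose the initial curve is convex, i.e. k(u, 0) > 0 for all u. Then (d/dt) L(t) = −∫₀¹ k(u,t)² |∂_u x(u,t)| du + π·L(t)/A(t) ≤ 0 for all t ∈ [0,T); in particular, t ↦ L(t) is nonincreasing on [0,T). -/
open Real

/-- Enclosed area `A(t) = (1/2)∫₀¹ det(x(u,t), ∂_u x(u,t)) du`, with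
`∂_u x = g·(cos νf, sin νf)`. -/
noncomputable def areaF (x : ℝ → ℝ → ℝ × ℝ) (g νf : ℝ → ℝ → ℝ) (t : ℝ) : ℝ :=
  (1 / 2) * ∫ u in (0:ℝ)..1,
    ((x u t).1 * (g u t * Real.sin (νf u t)) - (x u t).2 * (g u t * Real.cos (νf u t)))

/-- Total length `L(t) = ∫₀¹ |∂_u x(u,t)| du`. -/
noncomputable def lenF (g : ℝ → ℝ → ℝ) (t : ℝ) : ℝ :=
  ∫ u in (0:ℝ)..1, g u t


theorem wirt_piece (lam m a b : ℝ) (hl0 : 0 < lam) (hl1 : lam < 1) (hab : a ≤ b)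
    (q S ν κ : ℝ → ℝ) (hq : ∀ u, HasDerivAt q (S u * κ u) u)
    (hν : ∀ u, HasDerivAt ν (κ u) u) (hS : Continuous S) (hκ : Continuous κ)
    (hκp : ∀ u, 0 < κ u) (hm : ∀ u ∈ Set.Icc a b, |ν u - m| ≤ π / 2) :
    -lam * (q b) ^ 2 * tan (lam * (ν b - m)) + lam * (q a) ^ 2 * tan (lam * (ν a - m)) ≤
      ∫ u in a..b, ((S u) ^ 2 - lam ^ 2 * (q u) ^ 2) * κ u := by
  have hqc : Continuous q := continuous_iff_continuousAt.2 fun u => (hq u).continuousAt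
  have hνc : Continuous ν := continuous_iff_continuousAt.2 fun u => (hν u).continuousAt
  have hcos : ∀ u ∈ Set.Icc a b, cos (lam * (ν u - m)) ≠ 0 := by
    intro u hu
    have h := hm u hu
    have hpi := Real.pi_pos
    have h2 : |lam * (ν u - m)| < π / 2 := by
      rw [abs_mul, abs_of_pos hl0]
      nlinarith [abs_nonneg (ν u - m)]
    rw [abs_lt] at h2
    exact (Real.cos_pos_of_mem_Ioo ⟨by linarith [h2.1], h2.2⟩).ne'
  set E' : ℝ → ℝ := fun u => -2 * lam * q u * (S u * κ u) * tan (lam * (ν u - m))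
      - lam ^ 2 * (q u) ^ 2 * (1 + tan (lam * (ν u - m)) ^ 2) * κ u with hE'
  have hder : ∀ u ∈ Set.uIcc a b,
      HasDerivAt (fun u => -lam * (q u) ^ 2 * tan (lam * (ν u - m))) (E' u) u := by
    intro u hu
    rw [Set.uIcc_of_le hab] at hu
    have hc := hcos u hu
    have h1 := (Real.hasDerivAt_tan hc).comp u (((hν u).sub_const m).const_mul lam)
    have h2 := (((hq u).pow 2).const_mul (-lam)).mul h1
    refine h2.congr_deriv ?_
    have h3 : 1 / cos (lam * (ν u - m)) ^ 2 = 1 + tan (lam * (ν u - m)) ^ 2 := by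
      rw [Real.tan_eq_sin_div_cos]
      field_simp
      linarith [Real.sin_sq_add_cos_sq (lam * (ν u - m))]
    simp only [h3, hE', Function.comp, Pi.pow_apply]
    push_cast
    ring
  have htc : ContinuousOn (fun u => tan (lam * (ν u - m))) (Set.Icc a b) := by
    intro u hu
    have : ContinuousAt (fun u => tan (lam * (ν u - m))) u :=
      ContinuousAt.comp (g := tan) (Real.continuousAt_tan.2 (hcos u hu))
        (by fun_prop)
    exact this.continuousWithinAt
  have hE'c : ContinuousOn E' (Set.Icc a b) := by
    simp only [hE']
    fun_prop
  have hint : IntervalIntegrable E' MeasureTheory.volume a b :=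
    ContinuousOn.intervalIntegrable (by rwa [Set.uIcc_of_le hab])
  have hftc := intervalIntegral.integral_eq_sub_of_hasDerivAt hder hint
  have hmono : ∫ u in a..b, E' u ≤ ∫ u in a..b, ((S u) ^ 2 - lam ^ 2 * (q u) ^ 2) * κ u := by
    apply intervalIntegral.integral_mono_on hab hint
    · apply Continuous.intervalIntegrable; fun_prop
    · intro u hu
      have : 0 ≤ (S u + lam * q u * tan (lam * (ν u - m))) ^ 2 * κ u :=
        mul_nonneg (sq_nonneg _) (hκp u).le
      simp only [hE']
      nlinarith
  rw [hftc] at hmono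
  linarith

theorem wirt (a b u1 : ℝ) (h1 : u1 ∈ Set.Icc a b)
    (q S ν κ : ℝ → ℝ) (hq : ∀ u, HasDerivAt q (S u * κ u) u)
    (hν : ∀ u, HasDerivAt ν (κ u) u) (hS : Continuous S) (hκ : Continuous κ)
    (hκp : ∀ u, 0 < κ u) (hνab : ν b = ν a + π) (hqab : q b = q a) (hq1 : q u1 = 0) :
    ∫ u in a..b, (q u) ^ 2 * κ u ≤ ∫ u in a..b, (S u) ^ 2 * κ u := by
  have hqc : Continuous q := continuous_iff_continuousAt.2 fun u => (hq u).continuousAt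
  have hmono : Monotone ν := monotone_of_hasDerivAt_nonneg hν (fun u => (hκp u).le)
  have key : ∀ lam ∈ Set.Ioo (0:ℝ) 1,
      lam ^ 2 * ∫ u in a..b, (q u) ^ 2 * κ u ≤ ∫ u in a..b, (S u) ^ 2 * κ u := by
    intro lam hl
    have e1 := wirt_piece lam (ν u1 - π / 2) a u1 hl.1 hl.2 h1.1 q S ν κ hq hν hS hκ hκp (by
      intro u hu
      have := hmono hu.1; have := hmono hu.2; have := hmono h1.2
      rw [abs_le]; constructor <;> linarith)
    have e2 := wirt_piece lam (ν u1 + π / 2) u1 b hl.1 hl.2 h1.2 q S ν κ hq hν hS hκ hκp (by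
      intro u hu
      have := hmono hu.1; have := hmono hu.2; have := hmono h1.1
      rw [abs_le]; constructor <;> linarith)
    have e3 := intervalIntegral.integral_add_adjacent_intervals
      (μ := MeasureTheory.volume) (f := fun u => ((S u) ^ 2 - lam ^ 2 * (q u) ^ 2) * κ u)
      (a := a) (b := u1) (c := b)
      (Continuous.intervalIntegrable (by fun_prop) _ _)
      (Continuous.intervalIntegrable (by fun_prop) _ _)
    have e4 : ∫ u in a..b, ((S u) ^ 2 - lam ^ 2 * (q u) ^ 2) * κ u =
        (∫ u in a..b, (S u) ^ 2 * κ u) - lam ^ 2 * ∫ u in a..b, (q u) ^ 2 * κ u := by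
      rw [← intervalIntegral.integral_const_mul, ← intervalIntegral.integral_sub]
      · congr 1; ext u; ring
      · exact Continuous.intervalIntegrable (by fun_prop) _ _
      · exact Continuous.intervalIntegrable (by fun_prop) _ _
    have e5 : ν b - (ν u1 + π / 2) = ν a - (ν u1 - π / 2) := by rw [hνab]; ring
    rw [hq1] at e1 e2
    rw [e5, hqab] at e2
    linarith
  have ht : Filter.Tendsto (fun lam : ℝ => lam ^ 2 * ∫ u in a..b, (q u) ^ 2 * κ u)
      (nhdsWithin 1 (Set.Iio 1)) (nhds (1 ^ 2 * ∫ u in a..b, (q u) ^ 2 * κ u)) := by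
    apply Filter.Tendsto.mono_left _ nhdsWithin_le_nhds
    exact Continuous.tendsto (by fun_prop) 1
  rw [one_pow, one_mul] at ht
  refine le_of_tendsto ht ?_
  filter_upwards [Ioo_mem_nhdsLT (show (0:ℝ) < 1 by norm_num)] with lam hl
  exact key lam hl

theorem gage_half (a b A : ℝ) (hab : a ≤ b) (hA : 0 < A) (P S ν g κ : ℝ → ℝ)
    (hP : ∀ u, HasDerivAt P (S u * κ u) u) (hS : ∀ u, HasDerivAt S (g u - P u * κ u) u)
    (hν : ∀ u, HasDerivAt ν (κ u) u) (hgc : Continuous g) (hκ : Continuous κ)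
    (hg : ∀ u, 0 < g u) (hκp : ∀ u, 0 < κ u) (hνab : ν b = ν a + π)
    (hPab : P b = P a) (hSab : S b = S a) (hPA : ∫ u in a..b, P u * g u = A) :
    π / A * ∫ u in a..b, g u ≤ ∫ u in a..b, (κ u / g u) ^ 2 * g u := by
  have hPc : Continuous P := continuous_iff_continuousAt.2 fun u => (hP u).continuousAt
  have hSc : Continuous S := continuous_iff_continuousAt.2 fun u => (hS u).continuousAt
  have hg0 : ∀ u, g u ≠ 0 := fun u => (hg u).ne'
  have ii : ∀ f : ℝ → ℝ, Continuous f → IntervalIntegrable f MeasureTheory.volume a b :=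
    fun f hf => hf.intervalIntegrable _ _
  -- basic integrals
  have i1 : ∫ u in a..b, κ u = π := by
    rw [intervalIntegral.integral_eq_sub_of_hasDerivAt (fun u _ => hν u) (ii _ hκ), hνab]; ring
  have i2 : ∫ u in a..b, P u * κ u = ∫ u in a..b, g u := by
    have h := intervalIntegral.integral_eq_sub_of_hasDerivAt (a := a) (b := b)
      (fun u _ => hS u) (ii _ (by fun_prop))
    rw [intervalIntegral.integral_sub (ii _ (by fun_prop)) (ii _ (by fun_prop)), hSab] at h
    linarith
  have i3 : (∫ u in a..b, (S u) ^ 2 * κ u) - ∫ u in a..b, (P u) ^ 2 * κ u = -A := by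
    have h := intervalIntegral.integral_eq_sub_of_hasDerivAt (a := a) (b := b)
      (f := fun u => P u * S u) (f' := fun u => ((S u) ^ 2 * κ u - (P u) ^ 2 * κ u) + P u * g u)
      (fun u _ => ((hP u).mul (hS u)).congr_deriv (by ring)) (ii _ (by fun_prop))
    rw [intervalIntegral.integral_add (ii _ (by fun_prop)) (ii _ (by fun_prop)),
      intervalIntegral.integral_sub (ii _ (by fun_prop)) (ii _ (by fun_prop)),
      hSab, hPab, hPA] at h
    linarith
  set l := ∫ u in a..b, g u with hl
  have bon : ∀ u ∈ Set.Icc a b, 0 ≤ 2 * l * P u - A - π * (P u) ^ 2 := by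
    intro u1 hu1
    have h := wirt a b u1 hu1 (fun u => P u - P u1) S ν κ
      (fun u => (hP u).sub_const _) hν hSc hκ hκp hνab (by simp [hPab]) (by simp)
    have e : ∫ u in a..b, (P u - P u1) ^ 2 * κ u =
        (∫ u in a..b, (P u) ^ 2 * κ u) - 2 * P u1 * (∫ u in a..b, P u * κ u)
          + (P u1) ^ 2 * ∫ u in a..b, κ u := by
      rw [← intervalIntegral.integral_const_mul, ← intervalIntegral.integral_const_mul,
        ← intervalIntegral.integral_sub (ii _ (by fun_prop)) (ii _ (by fun_prop)),
        ← intervalIntegral.integral_add (ii _ (by fun_prop)) (ii _ (by fun_prop))]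
      congr 1; ext u; ring
    rw [e, i1, i2] at h
    nlinarith
  have b2 : 0 ≤ ∫ u in a..b, (2 * l * P u - A - π * (P u) ^ 2) * g u :=
    intervalIntegral.integral_nonneg hab fun u hu => mul_nonneg (bon u hu) (hg u).le
  have b3 : ∫ u in a..b, (2 * l * P u - A - π * (P u) ^ 2) * g u =
      2 * l * A - A * l - π * ∫ u in a..b, (P u) ^ 2 * g u := by
    have e : ∀ u, (2 * l * P u - A - π * (P u) ^ 2) * g u =
        2 * l * (P u * g u) - A * g u - π * ((P u) ^ 2 * g u) := fun u => by ring
    simp only [e]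
    rw [intervalIntegral.integral_sub (ii _ (by fun_prop)) (ii _ (by fun_prop)),
      intervalIntegral.integral_sub (ii _ (by fun_prop)) (ii _ (by fun_prop)),
      intervalIntegral.integral_const_mul, intervalIntegral.integral_const_mul,
      intervalIntegral.integral_const_mul, hPA]
  have hkc : Continuous fun u => κ u / g u := hκ.div hgc hg0
  have b4 : 0 ≤ ∫ u in a..b, (κ u / g u - π / A * P u) ^ 2 * g u :=
    intervalIntegral.integral_nonneg hab fun u hu => mul_nonneg (sq_nonneg _) (hg u).le
  have b5 : ∫ u in a..b, (κ u / g u - π / A * P u) ^ 2 * g u =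
      (∫ u in a..b, (κ u / g u) ^ 2 * g u) - 2 * (π / A) * l
        + (π / A) ^ 2 * ∫ u in a..b, (P u) ^ 2 * g u := by
    rw [← i2, ← intervalIntegral.integral_const_mul, ← intervalIntegral.integral_const_mul,
      ← intervalIntegral.integral_sub (ii _ (by fun_prop)) (ii _ (by fun_prop)),
      ← intervalIntegral.integral_add (ii _ (by fun_prop)) (ii _ (by fun_prop))]
    congr 1; ext u
    have := hg0 u
    field_simp
    ring
  have b6 : π * ∫ u in a..b, (P u) ^ 2 * g u ≤ A * l := by linarith
  have b7 : (π / A) ^ 2 * ∫ u in a..b, (P u) ^ 2 * g u ≤ π / A * l := by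
    have : (π / A) ^ 2 * ∫ u in a..b, (P u) ^ 2 * g u
        = π / A ^ 2 * (π * ∫ u in a..b, (P u) ^ 2 * g u) := by ring
    rw [this]
    have h2 : π / A * l = π / A ^ 2 * (A * l) := by field_simp
    rw [h2]
    exact mul_le_mul_of_nonneg_left b6 (by positivity)
  linarith

theorem gage (X Y ν g κ : ℝ → ℝ) (A : ℝ)
    (hX : ∀ u, HasDerivAt X (g u * cos (ν u)) u) (hY : ∀ u, HasDerivAt Y (g u * sin (ν u)) u)
    (hν : ∀ u, HasDerivAt ν (κ u) u) (hgc : Continuous g) (hκ : Continuous κ)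
    (hg : ∀ u, 0 < g u) (hκp : ∀ u, 0 < κ u)
    (hXp : ∀ u, X (u + 1) = X u) (hYp : ∀ u, Y (u + 1) = Y u)
    (hνp : ∀ u, ν (u + 1) = ν u + 2 * π)
    (hgp : ∀ u, g (u + 1) = g u) (hκper : ∀ u, κ (u + 1) = κ u)
    (hA : 0 < A)
    (hA2 : ∫ u in (0:ℝ)..1, (X u * (g u * sin (ν u)) - Y u * (g u * cos (ν u))) = 2 * A) :
    π / A * ∫ u in (0:ℝ)..1, g u ≤ ∫ u in (0:ℝ)..1, (κ u / g u) ^ 2 * g u := by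
  have hXc : Continuous X := continuous_iff_continuousAt.2 fun u => (hX u).continuousAt
  have hYc : Continuous Y := continuous_iff_continuousAt.2 fun u => (hY u).continuousAt
  have hνc : Continuous ν := continuous_iff_continuousAt.2 fun u => (hν u).continuousAt
  have hg0 : ∀ u, g u ≠ 0 := fun u => (hg u).ne'
  have hpi := Real.pi_pos
  have hkc : Continuous fun u => κ u / g u := hκ.div hgc hg0
  have hmono : StrictMono ν := strictMono_of_hasDerivAt_pos hν hκp
  have ii : ∀ (f : ℝ → ℝ) (a b : ℝ), Continuous f →
    IntervalIntegrable f MeasureTheory.volume a b := fun f a b hf => hf.intervalIntegrable _ _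
  have hβ : ∀ u, ∃ v, ν v = ν u + π := by
    intro u
    obtain ⟨v, _, hv⟩ := intermediate_value_Icc (show u ≤ u + 1 by linarith) hνc.continuousOn
      (show ν u + π ∈ Set.Icc (ν u) (ν (u + 1)) by rw [hνp]; constructor <;> linarith)
    exact ⟨v, hv⟩
  choose β hβ using hβ
  have hββ : ∀ u, β (β u) = u + 1 := fun u => hmono.injective (by rw [hβ, hβ, hνp]; ring)
  have hβm : Monotone β := by
    intro u v huv
    rw [← hmono.le_iff_le, hβ, hβ]
    linarith [hmono.monotone huv]
  have hβs : Function.Surjective β := fun u => ⟨β (u - 1), by rw [hββ]; ring⟩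
  have hβc : Continuous β := hβm.continuous_of_surjective hβs
  have hlt : ∀ u, u ≤ β u := fun u => by rw [← hmono.le_iff_le, hβ]; linarith
  set w : ℝ → ℝ := fun u => X u * (g u * sin (ν u)) - Y u * (g u * cos (ν u)) with hw
  have hwc : Continuous w := by simp only [hw]; fun_prop
  have hwp : Function.Periodic w 1 := fun u => by
    simp only [hw, hXp, hYp, hgp, hνp, Real.sin_add_two_pi, Real.cos_add_two_pi]
  set H : ℝ → ℝ := fun u => (∫ v in (0:ℝ)..(β u), w v) - (∫ v in (0:ℝ)..u, w v)
    - (X u * Y (β u) - Y u * X (β u)) with hH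
  have hHc : Continuous H := by
    have hF : Continuous fun u => ∫ v in (0:ℝ)..u, w v :=
      intervalIntegral.continuous_primitive (fun a b => ii _ _ _ hwc) 0
    have hF2 : Continuous fun u => ∫ v in (0:ℝ)..(β u), w v := hF.comp hβc
    simp only [hH]
    fun_prop
  have hsub : ∀ a b, (∫ v in (0:ℝ)..b, w v) - (∫ v in (0:ℝ)..a, w v) = ∫ v in a..b, w v :=
    fun a b => intervalIntegral.integral_interval_sub_left (ii _ _ _ hwc) (ii _ _ _ hwc)
  have hper : ∀ (f : ℝ → ℝ), Function.Periodic f 1 → ∀ a,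
      ∫ v in a..(a + 1), f v = ∫ v in (0:ℝ)..1, f v := by
    intro f hf a
    have := hf.intervalIntegral_add_eq a 0
    rwa [zero_add] at this
  have hHsum : H 0 + H (β 0) = 2 * A := by
    simp only [hH, hββ, hXp, hYp]
    have := hper w hwp 0
    rw [hA2] at this
    rw [intervalIntegral.integral_same]
    linarith
  obtain ⟨a, ha⟩ : ∃ a, H a = A := by
    rcases le_total (H 0) A with h | h
    · exact mem_range_of_exists_le_of_exists_ge hHc ⟨0, h⟩ ⟨β 0, by linarith⟩
    · exact mem_range_of_exists_le_of_exists_ge hHc ⟨β 0, by linarith⟩ ⟨0, h⟩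
  set b := β a with hb
  set c1 := (X a + X b) / 2 with hc1
  set c2 := (Y a + Y b) / 2 with hc2
  set P : ℝ → ℝ := fun u => (X u - c1) * sin (ν u) - (Y u - c2) * cos (ν u) with hPdef
  set S : ℝ → ℝ := fun u => (X u - c1) * cos (ν u) + (Y u - c2) * sin (ν u) with hSdef
  have hP : ∀ u, HasDerivAt P (S u * κ u) u := fun u => by
    have := (((hX u).sub_const c1).mul (hν u).sin).sub (((hY u).sub_const c2).mul (hν u).cos)
    refine this.congr_deriv ?_
    simp only [hSdef]; ring
  have hS : ∀ u, HasDerivAt S (g u - P u * κ u) u := fun u => by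
    have := (((hX u).sub_const c1).mul (hν u).cos).add (((hY u).sub_const c2).mul (hν u).sin)
    refine this.congr_deriv ?_
    simp only [hPdef]
    linear_combination g u * Real.sin_sq_add_cos_sq (ν u)
  have hPint : ∀ p q, ∫ u in p..q, P u * g u =
      (∫ u in p..q, w u) - c1 * (Y q - Y p) + c2 * (X q - X p) := by
    intro p q
    rw [← intervalIntegral.integral_eq_sub_of_hasDerivAt (fun u _ => hY u)
        (ii _ _ _ (by fun_prop)),
      ← intervalIntegral.integral_eq_sub_of_hasDerivAt (fun u _ => hX u)
        (ii _ _ _ (by fun_prop)), ← intervalIntegral.integral_const_mul,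
      ← intervalIntegral.integral_const_mul,
      ← intervalIntegral.integral_sub (ii _ _ _ (by fun_prop)) (ii _ _ _ (by fun_prop)),
      ← intervalIntegral.integral_add (ii _ _ _ (by fun_prop)) (ii _ _ _ (by fun_prop))]
    congr 1; ext u; simp only [hPdef, hw]; ring
  have hνb : ν b = ν a + π := hβ a
  have hPab : P b = P a := by
    simp only [hPdef, hνb, Real.sin_add_pi, Real.cos_add_pi, hc1, hc2]; ring
  have hSab : S b = S a := by
    simp only [hSdef, hνb, Real.sin_add_pi, Real.cos_add_pi, hc1, hc2]; ring
  have hPa1 : P (a + 1) = P a := by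
    simp only [hPdef, hXp, hYp, hνp, Real.sin_add_two_pi, Real.cos_add_two_pi]
  have hSa1 : S (a + 1) = S a := by
    simp only [hSdef, hXp, hYp, hνp, Real.sin_add_two_pi, Real.cos_add_two_pi]
  have I1 : ∫ u in a..b, P u * g u = A := by
    rw [hPint, ← ha, hH]
    simp only [hc1, hc2, ← hb]
    rw [hsub]; ring
  have I2 : ∫ u in b..(a + 1), P u * g u = A := by
    rw [hPint, hXp, hYp]
    have e1 : ∫ u in b..(a + 1), w u = 2 * A - ∫ u in a..b, w u := by
      have := hper w hwp a
      rw [hA2] at this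
      rw [← this]
      have := intervalIntegral.integral_add_adjacent_intervals (ii w a b hwc) (ii w b (a + 1) hwc)
      linarith
    have e2 := I1
    rw [hPint] at e2
    rw [e1]
    linarith
  have hba : b ≤ a + 1 := by rw [← hββ a]; exact hlt b
  have G1 := gage_half a b A (hlt a) hA P S ν g κ hP hS hν hgc hκ hg hκp hνb hPab hSab I1
  have G2 := gage_half b (a + 1) A hba hA P S ν g κ hP hS hν hgc hκ hg hκp
    (by rw [hνb, hνp]; ring) (by rw [hPab, hPa1]) (by rw [hSab, hSa1]) I2
  have f1 := intervalIntegral.integral_add_adjacent_intervals (ii g a b hgc) (ii g b (a + 1) hgc)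
  have hkkc : Continuous fun u => (κ u / g u) ^ 2 * g u := by fun_prop
  have f2 := intervalIntegral.integral_add_adjacent_intervals (ii _ a b hkkc) (ii _ b (a + 1) hkkc)
  rw [hper g hgp a] at f1
  rw [hper (fun u => (κ u / g u) ^ 2 * g u) (fun u => by simp only [hgp, hκper]) a] at f2
  rw [← f1, ← f2, mul_add]
  linarith

theorem strip_partials (T : ℝ) (hT : 0 < T) (F : ℝ × ℝ → ℝ)
    (hF : ContDiffOn ℝ (⊤ : ℕ∞) F ((Set.univ : Set ℝ) ×ˢ Set.Ico (0:ℝ) T)) :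
    ∃ Fu Ft M : ℝ × ℝ → ℝ,
      ContDiffOn ℝ (⊤ : ℕ∞) Fu ((Set.univ : Set ℝ) ×ˢ Set.Ico (0:ℝ) T) ∧
      ContDiffOn ℝ (⊤ : ℕ∞) Ft ((Set.univ : Set ℝ) ×ˢ Set.Ico (0:ℝ) T) ∧
      (∀ u, ∀ t ∈ Set.Ico (0:ℝ) T, HasDerivAt (fun u' => F (u', t)) (Fu (u, t)) u) ∧
      (∀ u, ∀ t ∈ Set.Ico (0:ℝ) T,
        HasDerivWithinAt (fun t' => F (u, t')) (Ft (u, t)) (Set.Ico 0 T) t) ∧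
      (∀ u, ∀ t ∈ Set.Ico (0:ℝ) T, HasDerivAt (fun u' => Ft (u', t)) (M (u, t)) u) ∧
      (∀ u, ∀ t ∈ Set.Ico (0:ℝ) T,
        HasDerivWithinAt (fun t' => Fu (u, t')) (M (u, t)) (Set.Ico 0 T) t) := by
  set s : Set (ℝ × ℝ) := (Set.univ : Set ℝ) ×ˢ Set.Ico (0:ℝ) T with hs
  have hsu : UniqueDiffOn ℝ s := uniqueDiffOn_univ.prod (uniqueDiffOn_Ico 0 T)
  have hcl : ∀ p ∈ s, p ∈ closure (interior s) := by
    intro p hp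
    rw [hs, interior_prod_eq, interior_univ, interior_Ico, closure_prod_eq, closure_univ,
      closure_Ioo hT.ne]
    exact ⟨trivial, Set.Ico_subset_Icc_self hp.2⟩
  have hD : ContDiffOn ℝ (⊤ : ℕ∞) (fderivWithin ℝ F s) s :=
    hF.fderivWithin hsu (by exact_mod_cast le_top)
  -- slices
  have slu : ∀ (f : ℝ × ℝ → ℝ) (f' : ℝ × ℝ →L[ℝ] ℝ) (u t : ℝ), t ∈ Set.Ico (0:ℝ) T →
      HasFDerivWithinAt f f' s (u, t) → HasDerivAt (fun u' => f (u', t)) (f' (1, 0)) u := by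
    intro f f' u t ht h
    have h1 : HasDerivWithinAt (fun u' : ℝ => ((u', t) : ℝ × ℝ)) ((1 : ℝ), (0 : ℝ)) Set.univ u :=
      ((hasDerivAt_id u).prodMk (hasDerivAt_const u t)).hasDerivWithinAt
    have h2 := h.comp_hasDerivWithinAt (t := s) (s := Set.univ) u h1 (fun u' _ => ⟨trivial, ht⟩)
    exact hasDerivWithinAt_univ.1 h2
  have slt : ∀ (f : ℝ × ℝ → ℝ) (f' : ℝ × ℝ →L[ℝ] ℝ) (u t : ℝ), t ∈ Set.Ico (0:ℝ) T →
      HasFDerivWithinAt f f' s (u, t) →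
      HasDerivWithinAt (fun t' => f (u, t')) (f' (0, 1)) (Set.Ico 0 T) t := by
    intro f f' u t ht h
    have h1 : HasDerivWithinAt (fun t' : ℝ => ((u, t') : ℝ × ℝ)) ((0 : ℝ), (1 : ℝ))
        (Set.Ico 0 T) t :=
      ((hasDerivAt_const t u).prodMk (hasDerivAt_id t)).hasDerivWithinAt
    exact h.comp_hasDerivWithinAt t h1 (fun t' ht' => ⟨trivial, ht'⟩)
  have hFd : ∀ p ∈ s, HasFDerivWithinAt F (fderivWithin ℝ F s p) s p := fun p hp =>
    ((hF.differentiableOn (by simp)) p hp).hasFDerivWithinAt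
  have hDd : ∀ p ∈ s, HasFDerivWithinAt (fderivWithin ℝ F s)
      (fderivWithin ℝ (fderivWithin ℝ F s) s p) s p := fun p hp =>
    ((hD.differentiableOn (by simp)) p hp).hasFDerivWithinAt
  have hap : ∀ (v : ℝ × ℝ), ∀ p ∈ s, HasFDerivWithinAt (fun p => fderivWithin ℝ F s p v)
      ((fderivWithin ℝ (fderivWithin ℝ F s) s p).flip v) s p := by
    intro v p hp
    have := (hDd p hp).clm_apply (hasFDerivWithinAt_const v p s)
    refine this.congr_fderiv ?_
    ext <;> simp
  refine ⟨fun p => fderivWithin ℝ F s p (1, 0), fun p => fderivWithin ℝ F s p (0, 1),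
    fun p => fderivWithin ℝ (fderivWithin ℝ F s) s p (1, 0) (0, 1), ?_, ?_, ?_, ?_, ?_, ?_⟩
  · exact hD.clm_apply contDiffOn_const
  · exact hD.clm_apply contDiffOn_const
  · intro u t ht
    exact slu F _ u t ht (hFd (u, t) ⟨trivial, ht⟩)
  · intro u t ht
    exact slt F _ u t ht (hFd (u, t) ⟨trivial, ht⟩)
  · intro u t ht
    exact slu _ _ u t ht (hap (0, 1) (u, t) ⟨trivial, ht⟩)
  · intro u t ht
    have h := slt _ _ u t ht (hap (1, 0) (u, t) ⟨trivial, ht⟩)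
    have hp : (u, t) ∈ s := ⟨trivial, ht⟩
    have hsym := (hF (u, t) hp).isSymmSndFDerivWithinAt (by
      rw [minSmoothness_of_isRCLikeNormedField]
      exact WithTop.coe_le_coe.2 (le_top : (2 : ℕ∞) ≤ ⊤)) hsu (hcl _ hp) hp
    refine h.congr_deriv ?_
    exact hsym (0, 1) (1, 0)

theorem evo (T : ℝ) (hT : 0 < T) (X Y ν : ℝ × ℝ → ℝ) (g νu : ℝ → ℝ → ℝ) (c : ℝ → ℝ)
    (hX : ContDiffOn ℝ (⊤ : ℕ∞) X ((Set.univ : Set ℝ) ×ˢ Set.Ico (0:ℝ) T))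
    (hY : ContDiffOn ℝ (⊤ : ℕ∞) Y ((Set.univ : Set ℝ) ×ˢ Set.Ico (0:ℝ) T))
    (hν : ContDiffOn ℝ (⊤ : ℕ∞) ν ((Set.univ : Set ℝ) ×ˢ Set.Ico (0:ℝ) T))
    (hg : ∀ u, ∀ t ∈ Set.Ico (0:ℝ) T, 0 < g u t)
    (hXu : ∀ u, ∀ t ∈ Set.Ico (0:ℝ) T,
      HasDerivAt (fun u' => X (u', t)) (g u t * cos (ν (u, t))) u)
    (hYu : ∀ u, ∀ t ∈ Set.Ico (0:ℝ) T,
      HasDerivAt (fun u' => Y (u', t)) (g u t * sin (ν (u, t))) u)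
    (hνu : ∀ u, ∀ t ∈ Set.Ico (0:ℝ) T, HasDerivAt (fun u' => ν (u', t)) (νu u t) u)
    (hXt : ∀ u, ∀ t ∈ Set.Ico (0:ℝ) T, HasDerivWithinAt (fun t' => X (u, t'))
      ((νu u t / g u t - c t) * -sin (ν (u, t))) (Set.Ico 0 T) t)
    (hYt : ∀ u, ∀ t ∈ Set.Ico (0:ℝ) T, HasDerivWithinAt (fun t' => Y (u, t'))
      ((νu u t / g u t - c t) * cos (ν (u, t))) (Set.Ico 0 T) t) :
    ContinuousOn (fun p : ℝ × ℝ => g p.1 p.2) ((Set.univ : Set ℝ) ×ˢ Set.Ico (0:ℝ) T) ∧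
    ContinuousOn (fun p : ℝ × ℝ => νu p.1 p.2) ((Set.univ : Set ℝ) ×ˢ Set.Ico (0:ℝ) T) ∧
    ContinuousOn c (Set.Ico (0:ℝ) T) ∧
    (∀ u, ∀ t ∈ Set.Ico (0:ℝ) T, HasDerivWithinAt (fun t' => g u t')
      (-((νu u t / g u t - c t) * νu u t)) (Set.Ico 0 T) t) ∧
    ∃ ku kuu kt : ℝ → ℝ → ℝ,
      (∀ u, ∀ t ∈ Set.Ico (0:ℝ) T, HasDerivAt (fun u' => νu u' t / g u' t) (ku u t) u) ∧
      (∀ u, ∀ t ∈ Set.Ico (0:ℝ) T, HasDerivAt (fun u' => ku u' t) (kuu u t) u) ∧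
      (∀ u, ∀ t ∈ Set.Ico (0:ℝ) T,
        HasDerivWithinAt (fun t' => νu u t' / g u t') (kt u t) (Set.Ico 0 T) t) ∧
      (∀ u, ∀ t ∈ Set.Ico (0:ℝ) T, ku u t = 0 →
        kt u t = kuu u t / (g u t) ^ 2 + (νu u t / g u t) ^ 2 * (νu u t / g u t - c t)) := by
  set s : Set (ℝ × ℝ) := (Set.univ : Set ℝ) ×ˢ Set.Ico (0:ℝ) T with hs
  have hut : ∀ t ∈ Set.Ico (0:ℝ) T, UniqueDiffWithinAt ℝ (Set.Ico (0:ℝ) T) t :=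
    uniqueDiffOn_Ico 0 T
  have hmem : ∀ u, ∀ t ∈ Set.Ico (0:ℝ) T, (u, t) ∈ s := fun u t ht => ⟨trivial, ht⟩
  obtain ⟨Xu, Xt, XM, sXu, sXt, dXu, dXt, dXtu, dXut⟩ := strip_partials T hT X hX
  obtain ⟨Yu, Yt, YM, sYu, sYt, dYu, dYt, dYtu, dYut⟩ := strip_partials T hT Y hY
  obtain ⟨Nu, Nt, NM, sNu, sNt, dNu, dNt, dNtu, dNut⟩ := strip_partials T hT ν hν
  have eXu : ∀ u, ∀ t ∈ Set.Ico (0:ℝ) T, Xu (u, t) = g u t * cos (ν (u, t)) :=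
    fun u t ht => (dXu u t ht).unique (hXu u t ht)
  have eYu : ∀ u, ∀ t ∈ Set.Ico (0:ℝ) T, Yu (u, t) = g u t * sin (ν (u, t)) :=
    fun u t ht => (dYu u t ht).unique (hYu u t ht)
  have eNu : ∀ u, ∀ t ∈ Set.Ico (0:ℝ) T, Nu (u, t) = νu u t :=
    fun u t ht => (dNu u t ht).unique (hνu u t ht)
  have eXt : ∀ u, ∀ t ∈ Set.Ico (0:ℝ) T, Xt (u, t) = (νu u t / g u t - c t) * -sin (ν (u, t)) :=
    fun u t ht => (hut t ht).eq_deriv _ (dXt u t ht) (hXt u t ht)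
  have eYt : ∀ u, ∀ t ∈ Set.Ico (0:ℝ) T, Yt (u, t) = (νu u t / g u t - c t) * cos (ν (u, t)) :=
    fun u t ht => (hut t ht).eq_deriv _ (dYt u t ht) (hYt u t ht)
  -- smoothness of `g`, `νu`, `k`
  have eG : ∀ p ∈ s, g p.1 p.2 = Xu p * cos (ν p) + Yu p * sin (ν p) := by
    rintro ⟨u, t⟩ ⟨_, ht⟩
    rw [eXu u t ht, eYu u t ht]
    linear_combination -(g u t) * Real.sin_sq_add_cos_sq (ν (u, t))
  have sG : ContDiffOn ℝ (⊤ : ℕ∞) (fun p : ℝ × ℝ => g p.1 p.2) s :=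
    ContDiffOn.congr ((sXu.mul hν.cos).add (sYu.mul hν.sin)) eG
  have sν : ContDiffOn ℝ (⊤ : ℕ∞) (fun p : ℝ × ℝ => νu p.1 p.2) s :=
    sNu.congr (fun p hp => (eNu p.1 p.2 hp.2).symm)
  have sk : ContDiffOn ℝ (⊤ : ℕ∞) (fun p : ℝ × ℝ => νu p.1 p.2 / g p.1 p.2) s :=
    sν.div sG (fun p hp => (hg p.1 p.2 hp.2).ne')
  obtain ⟨Gu, Gt, GM, -, -, dGu, dGt, -, -⟩ := strip_partials T hT _ sG
  obtain ⟨ku, kt, kM, sku, -, dku, dkt, -, -⟩ := strip_partials T hT _ sk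
  obtain ⟨kuu, kut, kM', -, -, dkuu, -, -, -⟩ := strip_partials T hT _ sku
  -- mixed derivatives
  have eXM1 : ∀ u, ∀ t ∈ Set.Ico (0:ℝ) T, XM (u, t) =
      -ku (u, t) * sin (ν (u, t)) - (νu u t / g u t - c t) * cos (ν (u, t)) * νu u t := by
    intro u t ht
    have h1 := ((dku u t ht).sub_const (c t)).mul (hνu u t ht).sin.neg
    have h2 : (fun u' => Xt (u', t)) = _ := funext fun u' => eXt u' t ht
    have h3 := dXtu u t ht
    rw [h2] at h3
    rw [h3.unique h1]; simp only [Pi.neg_apply]; ring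
  have eYM1 : ∀ u, ∀ t ∈ Set.Ico (0:ℝ) T, YM (u, t) =
      ku (u, t) * cos (ν (u, t)) - (νu u t / g u t - c t) * sin (ν (u, t)) * νu u t := by
    intro u t ht
    have h1 := ((dku u t ht).sub_const (c t)).mul (hνu u t ht).cos
    have h2 : (fun u' => Yt (u', t)) = _ := funext fun u' => eYt u' t ht
    have h3 := dYtu u t ht
    rw [h2] at h3
    rw [h3.unique h1]; ring
  have eXM2 : ∀ u, ∀ t ∈ Set.Ico (0:ℝ) T, XM (u, t) =
      Gt (u, t) * cos (ν (u, t)) - g u t * sin (ν (u, t)) * Nt (u, t) := by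
    intro u t ht
    have h1 := (dGt u t ht).mul (dNt u t ht).cos
    have h3 := (dXut u t ht).congr (fun t' ht' => (eXu u t' ht').symm) (eXu u t ht).symm
    rw [(hut t ht).eq_deriv _ h3 h1]; ring
  have eYM2 : ∀ u, ∀ t ∈ Set.Ico (0:ℝ) T, YM (u, t) =
      Gt (u, t) * sin (ν (u, t)) + g u t * cos (ν (u, t)) * Nt (u, t) := by
    intro u t ht
    have h1 := (dGt u t ht).mul (dNt u t ht).sin
    have h3 := (dYut u t ht).congr (fun t' ht' => (eYu u t' ht').symm) (eYu u t ht).symm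
    rw [(hut t ht).eq_deriv _ h3 h1]; ring
  have eGt : ∀ u, ∀ t ∈ Set.Ico (0:ℝ) T,
      Gt (u, t) = -((νu u t / g u t - c t) * νu u t) := by
    intro u t ht
    have a1 := eXM1 u t ht; have a2 := eYM1 u t ht
    rw [eXM2 u t ht] at a1; rw [eYM2 u t ht] at a2
    have a3 := Real.sin_sq_add_cos_sq (ν (u, t))
    linear_combination cos (ν (u, t)) * a1 + sin (ν (u, t)) * a2
      - (Gt (u, t) + (νu u t / g u t - c t) * νu u t) * a3
  have eNt : ∀ u, ∀ t ∈ Set.Ico (0:ℝ) T, Nt (u, t) = ku (u, t) / g u t := by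
    intro u t ht
    have a1 := eXM1 u t ht; have a2 := eYM1 u t ht
    rw [eXM2 u t ht] at a1; rw [eYM2 u t ht] at a2
    have a3 := Real.sin_sq_add_cos_sq (ν (u, t))
    rw [eq_div_iff (hg u t ht).ne']
    linear_combination -sin (ν (u, t)) * a1 + cos (ν (u, t)) * a2
      - (Nt (u, t) * g u t - ku (u, t)) * a3
  refine ⟨sG.continuousOn, sν.continuousOn, ?_, ?_, fun u t => ku (u, t), fun u t => kuu (u, t),
    fun u t => kt (u, t), fun u t ht => dku u t ht, fun u t ht => dkuu u t ht,
    fun u t ht => dkt u t ht, ?_⟩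
  · have e : ∀ t ∈ Set.Ico (0:ℝ) T, c t = νu 0 t / g 0 t
        - (-Xt (0, t) * sin (ν (0, t)) + Yt (0, t) * cos (ν (0, t))) := by
      intro t ht
      rw [eXt 0 t ht, eYt 0 t ht]
      linear_combination (νu 0 t / g 0 t - c t) * Real.sin_sq_add_cos_sq (ν (0, t))
    have hc : ContinuousOn (fun p : ℝ × ℝ => νu p.1 p.2 / g p.1 p.2
        - (-Xt p * sin (ν p) + Yt p * cos (ν p))) s := by
      have h1 := sk.continuousOn
      have h2 := ((sXt.neg.mul hν.sin).add (sYt.mul hν.cos)).continuousOn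
      exact h1.sub h2
    have hc2 : ContinuousOn (fun t : ℝ => ((0 : ℝ), t)) (Set.Ico 0 T) := by fun_prop
    exact (hc.comp hc2 (fun t ht => hmem 0 t ht)).congr e
  · intro u t ht
    rw [← eGt u t ht]
    exact dGt u t ht
  · intro u t ht h0
    simp only at h0 ⊢
    have hg0 := (hg u t ht).ne'
    have hNM : NM (u, t) = kuu (u, t) / g u t := by
      have h1 := (dkuu u t ht).div (dGu u t ht) hg0
      have h2 : (fun u' => Nt (u', t)) = _ := funext fun u' => eNt u' t ht
      have h3 := dNtu u t ht
      rw [h2] at h3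
      rw [h3.unique h1, h0]; field_simp; ring
    have hκt : HasDerivWithinAt (fun t' => νu u t') (NM (u, t)) (Set.Ico 0 T) t :=
      (dNut u t ht).congr (fun t' ht' => (eNu u t' ht').symm) (eNu u t ht).symm
    have h4 := (hut t ht).eq_deriv _ (dkt u t ht) (hκt.div (dGt u t ht) hg0)
    rw [h4, hNM, eGt u t ht]
    field_simp
    ring

theorem second_deriv_nonneg (f f' : ℝ → ℝ) (f'' x : ℝ) (hf : ∀ u, HasDerivAt f (f' u) u)
    (hf' : HasDerivAt f' f'' x) (hmin : ∀ u, f x ≤ f u) : f' x = 0 ∧ 0 ≤ f'' := by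
  have h0 : f' x = 0 :=
    IsLocalMin.hasDerivAt_eq_zero (Filter.Eventually.of_forall hmin) (hf x)
  refine ⟨h0, ?_⟩
  by_contra! hneg
  have hd : deriv f = f' := funext fun u => (hf u).deriv
  have hmax := isLocalMax_of_deriv_deriv_neg (f := f) (x₀ := x)
    (by rw [hd, hf'.deriv]; exact hneg) (by rw [hd, h0]) (hf x).continuousAt
  have hconst : f =ᶠ[nhds x] fun _ => f x := by
    filter_upwards [hmax] with u hu
    exact le_antisymm hu (hmin u)
  have h1 : deriv f =ᶠ[nhds x] deriv (fun _ => f x) := hconst.deriv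
  have h2 := h1.deriv_eq
  rw [hd, hf'.deriv] at h2
  simp at h2
  linarith

theorem left_deriv_nonpos (f : ℝ → ℝ) (f' t T : ℝ) (ht0 : 0 < t) (htT : t < T)
    (hf : HasDerivWithinAt f f' (Set.Ico 0 T) t) (hmin : ∀ s ∈ Set.Icc 0 t, f t ≤ f s) :
    f' ≤ 0 := by
  have h1 : HasDerivAt f f' t := hf.hasDerivAt (Ico_mem_nhds ht0 htT)
  have h2 := (hasDerivWithinAt_iff_tendsto_slope' (s := Set.Iio t) (by simp)).1
    h1.hasDerivWithinAt
  refine le_of_tendsto h2 ?_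
  filter_upwards [Ioo_mem_nhdsLT ht0] with s hs
  rw [slope_def_field]
  apply div_nonpos_of_nonneg_of_nonpos
  · linarith [hmin s ⟨hs.1.le, hs.2.le⟩]
  · linarith [hs.2]

theorem curvature_pos (T : ℝ) (g k ku kuu kt : ℝ → ℝ → ℝ) (c : ℝ → ℝ)
    (hkc : ContinuousOn (fun p : ℝ × ℝ => k p.1 p.2) ((Set.univ : Set ℝ) ×ˢ Set.Ico (0:ℝ) T))
    (hc : ContinuousOn c (Set.Ico (0:ℝ) T))
    (hkp : ∀ u, ∀ t ∈ Set.Ico (0:ℝ) T, k (u + 1) t = k u t)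
    (h1 : ∀ u, ∀ t ∈ Set.Ico (0:ℝ) T, HasDerivAt (fun u' => k u' t) (ku u t) u)
    (h2 : ∀ u, ∀ t ∈ Set.Ico (0:ℝ) T, HasDerivAt (fun u' => ku u' t) (kuu u t) u)
    (h3 : ∀ u, ∀ t ∈ Set.Ico (0:ℝ) T,
      HasDerivWithinAt (fun t' => k u t') (kt u t) (Set.Ico 0 T) t)
    (h4 : ∀ u, ∀ t ∈ Set.Ico (0:ℝ) T, ku u t = 0 →
        kt u t = kuu u t / (g u t) ^ 2 + (k u t) ^ 2 * (k u t - c t))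
    (h0 : ∀ u, 0 < k u 0) : ∀ u, ∀ t ∈ Set.Ico (0:ℝ) T, 0 < k u t := by
  intro u1 t1 ht1
  have red : ∀ u : ℝ, ∀ t ∈ Set.Ico (0:ℝ) T, ∃ v ∈ Set.Icc (0:ℝ) 1, k v t = k u t := by
    intro u t ht
    have hp : Function.Periodic (fun u => k u t) 1 := fun u => hkp u t ht
    obtain ⟨v, hv, he⟩ := hp.exists_mem_Ico₀ one_pos u
    exact ⟨v, Set.Ico_subset_Icc_self hv, he.symm⟩
  set R : Set (ℝ × ℝ) := Set.Icc (0:ℝ) 1 ×ˢ Set.Icc (0:ℝ) t1 with hR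
  have hRc : IsCompact R := isCompact_Icc.prod isCompact_Icc
  have hsub : ∀ t ∈ Set.Icc (0:ℝ) t1, t ∈ Set.Ico (0:ℝ) T := fun t ht =>
    ⟨ht.1, ht.2.trans_lt ht1.2⟩
  have hkR : ContinuousOn (fun p : ℝ × ℝ => k p.1 p.2) R :=
    hkc.mono fun p hp => ⟨trivial, hsub _ hp.2⟩
  have hcR : ContinuousOn (fun p : ℝ × ℝ => c p.2) R :=
    hc.comp continuousOn_snd fun p hp => hsub _ hp.2
  -- bound on the zero order coefficient
  obtain ⟨M, hM⟩ := hRc.exists_bound_of_continuousOn (hkR.mul (hkR.sub hcR))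
  -- initial lower bound
  have h00 : (0:ℝ) ∈ Set.Icc (0:ℝ) t1 := ⟨le_rfl, ht1.1⟩
  have hk0c : ContinuousOn (fun u => k u 0) (Set.Icc (0:ℝ) 1) := by
    have : ContinuousOn (fun u : ℝ => (u, (0:ℝ))) (Set.Icc (0:ℝ) 1) := by fun_prop
    exact hkR.comp this fun u hu => ⟨hu, h00⟩
  obtain ⟨u0, _, hu0⟩ := isCompact_Icc.exists_isMinOn (Set.nonempty_Icc.2 zero_le_one) hk0c
  set δ := k u0 0 with hδ
  have hδp : 0 < δ := h0 u0
  have hδm : ∀ u, δ ≤ k u 0 := by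
    intro u
    obtain ⟨v, hv, he⟩ := red u 0 (hsub 0 h00)
    rw [← he]; exact hu0 hv
  set K := M + 1 with hK
  set w : ℝ → ℝ → ℝ := fun u t => exp (-K * t) * (k u t - δ * exp (-K * t)) with hw
  have hwR : ContinuousOn (fun p : ℝ × ℝ => w p.1 p.2) R := by
    have e : Continuous fun p : ℝ × ℝ => exp (-K * p.2) := by fun_prop
    exact e.continuousOn.mul (hkR.sub (continuousOn_const.mul e.continuousOn))
  obtain ⟨⟨us, ts⟩, hmem, hmin⟩ := hRc.exists_isMinOn ⟨(0, 0), ⟨by simp, h00⟩⟩ hwR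
  have hmin' : ∀ u, ∀ t ∈ Set.Icc (0:ℝ) t1, w us ts ≤ w u t := by
    intro u t ht
    obtain ⟨v, hv, he⟩ := red u t (hsub t ht)
    have : w u t = w v t := by simp only [hw, he]
    rw [this]
    exact hmin (show (v, t) ∈ R from ⟨hv, ht⟩)
  have hts : ts ∈ Set.Icc (0:ℝ) t1 := hmem.2
  have htsT := hsub ts hts
  have hpos : 0 ≤ w us ts := by
    by_contra! hneg
    have hts0 : 0 < ts := by
      rcases hts.1.lt_or_eq with h | h
      · exact h
      · exfalso
        rw [← h] at hneg
        simp only [hw] at hneg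
        have := hδm us
        simp at hneg
        linarith
    have he : 0 < exp (-K * ts) := exp_pos _
    have hv : k us ts - δ * exp (-K * ts) < 0 := by
      by_contra! hh
      exact absurd hneg (not_lt.2 (mul_nonneg he.le hh))
    have hkmin : ∀ u, k us ts ≤ k u ts := by
      intro u
      have := hmin' u ts hts
      simp only [hw] at this
      have := le_of_mul_le_mul_left this he
      linarith
    obtain ⟨z1, z2⟩ := second_deriv_nonneg (fun u => k u ts) (fun u => ku u ts) (kuu us ts) us
      (fun u => h1 u ts htsT) (h2 us ts htsT) hkmin
    have hE : HasDerivWithinAt (fun t => exp (-K * t)) (exp (-K * ts) * -K) (Set.Ico 0 T) ts := by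
      have := ((hasDerivAt_id ts).const_mul (-K)).exp
      simpa using this.hasDerivWithinAt
    have hwt : HasDerivWithinAt (fun t => w us t)
        (exp (-K * ts) * -K * (k us ts - δ * exp (-K * ts)) +
          exp (-K * ts) * (kt us ts - δ * (exp (-K * ts) * -K))) (Set.Ico 0 T) ts :=
      hE.mul ((h3 us ts htsT).sub (hE.const_mul δ))
    have hle := left_deriv_nonpos _ _ ts T hts0 htsT.2 hwt
      (fun s hs => hmin' us s ⟨hs.1, hs.2.trans hts.2⟩)
    rw [h4 us ts htsT z1] at hle
    have hb := hM (us, ts) hmem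
    simp only [Pi.mul_apply, Pi.sub_apply, Real.norm_eq_abs] at hb
    rw [abs_le] at hb
    set V := k us ts * (k us ts - c ts) with hV
    have hq : 0 ≤ kuu us ts / (g us ts) ^ 2 := by positivity
    set e := exp (-K * ts) with hedef
    set v := k us ts - δ * e with hvdef
    have hmain : 0 < -K * v + (kuu us ts / (g us ts) ^ 2 + k us ts ^ 2 * (k us ts - c ts))
        + δ * e * K := by
      have e1 : k us ts ^ 2 * (k us ts - c ts) = (v + δ * e) * V := by
        rw [hvdef, hV]; ring
      rw [e1]
      have p1 : 0 < (-v) * (K - V) := mul_pos (by linarith) (by linarith [hb.2])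
      have p2 : 0 < (δ * e) * (K + V) := mul_pos (mul_pos hδp he) (by linarith [hb.1])
      nlinarith
    have := mul_pos he hmain
    linarith
  have hfin := hpos.trans (hmin' u1 t1 ⟨ht1.1, le_rfl⟩)
  simp only [hw] at hfin
  have he : 0 < exp (-K * t1) := exp_pos _
  have := nonneg_of_mul_nonneg_right hfin he
  have := mul_pos hδp he
  linarith

theorem len_deriv (T : ℝ) (g h : ℝ → ℝ → ℝ)
    (hgc : ∀ t ∈ Set.Ico (0:ℝ) T, Continuous fun u => g u t)
    (hhc : ContinuousOn (fun p : ℝ × ℝ => h p.1 p.2) ((Set.univ : Set ℝ) ×ˢ Set.Ico (0:ℝ) T))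
    (hd : ∀ u, ∀ t ∈ Set.Ico (0:ℝ) T, HasDerivWithinAt (fun t' => g u t') (h u t) (Set.Ico 0 T) t)
    (t : ℝ) (ht : t ∈ Set.Ico (0:ℝ) T) :
    HasDerivWithinAt (fun t => ∫ u in (0:ℝ)..1, g u t) (∫ u in (0:ℝ)..1, h u t) (Set.Ico 0 T) t := by
  obtain ⟨b, hb1, hb2⟩ := exists_between ht.2
  have hb0 : 0 ≤ b := ht.1.trans hb1.le
  have hsub : ∀ s ∈ Set.Icc (0:ℝ) b, s ∈ Set.Ico (0:ℝ) T := fun s hs => ⟨hs.1, hs.2.trans_lt hb2⟩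
  set cl : ℝ → ℝ := fun s => max 0 (min s b) with hcl
  have hclc : Continuous cl := by simp only [hcl]; fun_prop
  have hclm : ∀ s, cl s ∈ Set.Icc (0:ℝ) b := fun s =>
    ⟨le_max_left _ _, max_le hb0 (min_le_right _ _)⟩
  have hcle : ∀ s ∈ Set.Icc (0:ℝ) b, cl s = s := fun s hs => by
    simp only [hcl]; rw [min_eq_left hs.2, max_eq_right hs.1]
  have hH : Continuous fun p : ℝ × ℝ => h p.1 (cl p.2) := by
    have : Continuous fun p : ℝ × ℝ => (p.1, cl p.2) := by fun_prop
    exact hhc.comp_continuous this fun p => ⟨trivial, hsub _ (hclm _)⟩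
  have hH' : Continuous (Function.uncurry fun u s => h u (cl s)) := hH
  have hHs : Continuous (Function.uncurry fun s u => h u (cl s)) := hH.comp continuous_swap
  have hGc : Continuous fun s => ∫ u in (0:ℝ)..1, h u (cl s) :=
    intervalIntegral.continuous_parametric_intervalIntegral_of_continuous' hHs 0 1
  have hrep : ∀ s ∈ Set.Icc (0:ℝ) b, ∫ u in (0:ℝ)..1, g u s =
      (∫ u in (0:ℝ)..1, g u 0) + ∫ r in (0:ℝ)..s, ∫ u in (0:ℝ)..1, h u (cl r) := by
    intro s hs
    have e1 : ∀ u, ∫ r in (0:ℝ)..s, h u (cl r) = g u s - g u 0 := by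
      intro u
      apply intervalIntegral.integral_eq_sub_of_hasDerivAt_of_le hs.1
      · intro r hr
        exact ((hd u r (hsub r ⟨hr.1, hr.2.trans hs.2⟩)).continuousWithinAt).mono
          (fun y hy => hsub y ⟨hy.1, hy.2.trans hs.2⟩)
      · intro r hr
        have hr' : r ∈ Set.Icc (0:ℝ) b := ⟨hr.1.le, hr.2.le.trans hs.2⟩
        rw [hcle r hr']
        exact (hd u r (hsub r hr')).hasDerivAt (Ico_mem_nhds hr.1 (hsub r hr').2)
      · apply Continuous.intervalIntegrable
        exact hH.comp (by fun_prop : Continuous fun r : ℝ => (u, r))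
    have e2 := MeasureTheory.intervalIntegral_intervalIntegral_swap (a := 0) (b := s) (c := 0) (d := 1)
      (F := fun r u => h u (cl r)) (by
        apply MeasureTheory.IntegrableOn.mono_set (t := Set.uIcc 0 s ×ˢ Set.uIcc 0 1)
        · exact hHs.continuousOn.integrableOn_compact (isCompact_uIcc.prod isCompact_uIcc)
        · exact Set.prod_mono Set.uIoc_subset_uIcc Set.uIoc_subset_uIcc)
    rw [e2]
    simp only [e1]
    rw [intervalIntegral.integral_sub ((hgc s (hsub s hs)).intervalIntegrable _ _)
      ((hgc 0 (hsub 0 ⟨le_rfl, hb0⟩)).intervalIntegrable _ _)]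
    ring
  have hder : HasDerivAt (fun s => (∫ u in (0:ℝ)..1, g u 0) +
      ∫ r in (0:ℝ)..s, ∫ u in (0:ℝ)..1, h u (cl r)) (∫ u in (0:ℝ)..1, h u (cl t)) t :=
    (intervalIntegral.integral_hasDerivAt_right (hGc.intervalIntegrable _ _)
      (hGc.stronglyMeasurableAtFilter _ _) hGc.continuousAt).const_add _
  have htb : t ∈ Set.Icc (0:ℝ) b := ⟨ht.1, hb1.le⟩
  rw [hcle t htb] at hder
  have hw : HasDerivWithinAt (fun t => ∫ u in (0:ℝ)..1, g u t) (∫ u in (0:ℝ)..1, h u t)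
      (Set.Icc 0 b) t := hder.hasDerivWithinAt.congr hrep (hrep t htb)
  refine hw.mono_of_mem_nhdsWithin ?_
  rw [mem_nhdsWithin]
  exact ⟨Set.Iio b, isOpen_Iio, hb1, fun y hy => ⟨hy.2.1, le_of_lt hy.1⟩⟩

/-- The isoperimetric ratio gradient flow `∂_t x = (k − L/(2A))·N` started from a convex
curve does not increase the length:
`(d/dt) L(t) = −∫₀¹ k² |∂_u x| du + π·L(t)/A(t) ≤ 0`, so `L` is nonincreasing.
Here `k = νu/g` is the signed curvature. -/
theorem isoperimetric_flow_length_nonincreasing_convex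
    (T : ℝ) (hT : 0 < T) (x : ℝ → ℝ → ℝ × ℝ) (g νf νu : ℝ → ℝ → ℝ)
    (hxs : ContDiffOn ℝ (⊤ : ℕ∞) (fun p : ℝ × ℝ => x p.1 p.2)
      ((Set.univ : Set ℝ) ×ˢ Set.Ico (0:ℝ) T))
    (hνs : ContDiffOn ℝ (⊤ : ℕ∞) (fun p : ℝ × ℝ => νf p.1 p.2)
      ((Set.univ : Set ℝ) ×ˢ Set.Ico (0:ℝ) T))
    (hper : ∀ u, ∀ t ∈ Set.Ico (0:ℝ) T, x (u + 1) t = x u t)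
    (hνper : ∀ u, ∀ t ∈ Set.Ico (0:ℝ) T, νf (u + 1) t = νf u t + 2 * π)
    (hg : ∀ u, ∀ t ∈ Set.Ico (0:ℝ) T, 0 < g u t)
    (htang : ∀ u, ∀ t ∈ Set.Ico (0:ℝ) T,
      HasDerivAt (fun u' => x u' t)
        (g u t • ((Real.cos (νf u t), Real.sin (νf u t)) : ℝ × ℝ)) u)
    (hνu : ∀ u, ∀ t ∈ Set.Ico (0:ℝ) T, HasDerivAt (fun u' => νf u' t) (νu u t) u)
    (hinj : ∀ t ∈ Set.Ico (0:ℝ) T, Set.InjOn (fun u => x u t) (Set.Ico 0 1))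
    (hA : ∀ t ∈ Set.Ico (0:ℝ) T, 0 < areaF x g νf t)
    -- the isoperimetric ratio gradient flow equation `∂_t x = (k − L/(2A))·N`
    (hflow : ∀ u, ∀ t ∈ Set.Ico (0:ℝ) T,
      HasDerivWithinAt (fun t' => x u t')
        (((νu u t / g u t - lenF g t / (2 * areaF x g νf t)) •
          ((-Real.sin (νf u t), Real.cos (νf u t)) : ℝ × ℝ)))
        (Set.Ico 0 T) t)
    -- the initial curve is convex
    (hconv : ∀ u, 0 < νu u 0 / g u 0) :
    (∀ t ∈ Set.Ico (0:ℝ) T,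
      HasDerivWithinAt (lenF g)
        (-(∫ u in (0:ℝ)..1, (νu u t / g u t) ^ 2 * g u t) +
          π * lenF g t / areaF x g νf t) (Set.Ico 0 T) t ∧
      -(∫ u in (0:ℝ)..1, (νu u t / g u t) ^ 2 * g u t) +
        π * lenF g t / areaF x g νf t ≤ 0) ∧
    AntitoneOn (lenF g) (Set.Ico 0 T) := by
  set c : ℝ → ℝ := fun t => lenF g t / (2 * areaF x g νf t) with hc
  have hpi := Real.pi_pos
  obtain ⟨cg, cν, cc, dg, ku, kuu, kt, k1, k2, k3, k4⟩ :=
    evo T hT (fun p => (x p.1 p.2).1) (fun p => (x p.1 p.2).2) (fun p => νf p.1 p.2) g νu c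
      (contDiff_fst.comp_contDiffOn hxs) (contDiff_snd.comp_contDiffOn hxs) hνs hg
      (fun u t ht => by exact (hasFDerivAt_fst.comp_hasDerivAt u (htang u t ht)))
      (fun u t ht => by exact (hasFDerivAt_snd.comp_hasDerivAt u (htang u t ht)))
      hνu
      (fun u t ht => by
        exact (hasFDerivAt_fst.comp_hasDerivWithinAt t (hflow u t ht)))
      (fun u t ht => by
        exact (hasFDerivAt_snd.comp_hasDerivWithinAt t (hflow u t ht)))
  have hX : ∀ u, ∀ t ∈ Set.Ico (0:ℝ) T,
      HasDerivAt (fun u' => (x u' t).1) (g u t * cos (νf u t)) u := fun u t ht => by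
    exact (hasFDerivAt_fst.comp_hasDerivAt u (htang u t ht))
  have hY : ∀ u, ∀ t ∈ Set.Ico (0:ℝ) T,
      HasDerivAt (fun u' => (x u' t).2) (g u t * sin (νf u t)) u := fun u t ht => by
    exact (hasFDerivAt_snd.comp_hasDerivAt u (htang u t ht))
  -- periodicity
  have pκ : ∀ u, ∀ t ∈ Set.Ico (0:ℝ) T, νu (u + 1) t = νu u t := by
    intro u t ht
    have h1 := (hνu (u + 1) t ht).comp_add_const u 1
    have h2 : (fun u' => νf (u' + 1) t) = fun u' => νf u' t + 2 * π :=
      funext fun u' => hνper u' t ht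
    rw [h2] at h1
    exact h1.unique ((hνu u t ht).add_const _)
  have pg : ∀ u, ∀ t ∈ Set.Ico (0:ℝ) T, g (u + 1) t = g u t := by
    intro u t ht
    have h1 := (hX (u + 1) t ht).comp_add_const u 1
    have h2 := (hY (u + 1) t ht).comp_add_const u 1
    simp only [hper _ t ht] at h1 h2
    have e1 := h1.unique (hX u t ht)
    have e2 := h2.unique (hY u t ht)
    rw [hνper u t ht, Real.cos_add_two_pi] at e1
    rw [hνper u t ht, Real.sin_add_two_pi] at e2
    linear_combination cos (νf u t) * e1 + sin (νf u t) * e2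
      - (g (u + 1) t - g u t) * Real.sin_sq_add_cos_sq (νf u t)
  have ck : ContinuousOn (fun p : ℝ × ℝ => νu p.1 p.2 / g p.1 p.2)
      ((Set.univ : Set ℝ) ×ˢ Set.Ico (0:ℝ) T) := cν.div cg fun p hp => (hg p.1 p.2 hp.2).ne'
  have kpos := curvature_pos T g (fun u t => νu u t / g u t) ku kuu kt c ck cc
    (fun u t ht => by simp only [pκ u t ht, pg u t ht]) k1 k2 k3 k4 hconv
  have slice : ∀ t ∈ Set.Ico (0:ℝ) T, ∀ f : ℝ → ℝ → ℝ,
      ContinuousOn (fun p : ℝ × ℝ => f p.1 p.2) ((Set.univ : Set ℝ) ×ˢ Set.Ico (0:ℝ) T) →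
      Continuous fun u => f u t := by
    intro t ht f hf
    exact hf.comp_continuous (by fun_prop : Continuous fun u : ℝ => (u, t))
      fun u => ⟨trivial, ht⟩
  have main : ∀ t ∈ Set.Ico (0:ℝ) T,
      HasDerivWithinAt (lenF g)
        (-(∫ u in (0:ℝ)..1, (νu u t / g u t) ^ 2 * g u t) +
          π * lenF g t / areaF x g νf t) (Set.Ico 0 T) t ∧
      -(∫ u in (0:ℝ)..1, (νu u t / g u t) ^ 2 * g u t) +
        π * lenF g t / areaF x g νf t ≤ 0 := by
    intro t ht
    have sg := slice t ht g cg
    have sν := slice t ht νu cν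
    have hg0 : ∀ u, g u t ≠ 0 := fun u => (hg u t ht).ne'
    have skk : Continuous fun u => (νu u t / g u t) ^ 2 * g u t :=
      ((sν.div sg hg0).pow 2).mul sg
    constructor
    · have hL := len_deriv T g (fun u t => -((νu u t / g u t - c t) * νu u t))
        (fun t ht => slice t ht g cg)
        (((ck.sub (cc.comp continuousOn_snd fun p hp => hp.2)).mul cν).neg) dg t ht
      refine hL.congr_deriv ?_
      have e : ∀ u, -((νu u t / g u t - c t) * νu u t) =
          c t * νu u t - (νu u t / g u t) ^ 2 * g u t := by
        intro u
        have := hg0 u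
        field_simp
        ring
      have i1 : ∫ u in (0:ℝ)..1, νu u t = 2 * π := by
        rw [intervalIntegral.integral_eq_sub_of_hasDerivAt (fun u _ => hνu u t ht)
          (sν.intervalIntegrable _ _)]
        have := hνper 0 t ht
        rw [zero_add] at this
        rw [this]; ring
      simp only [e]
      rw [intervalIntegral.integral_sub ((sν.const_mul _).intervalIntegrable _ _)
        (skk.intervalIntegrable _ _), intervalIntegral.integral_const_mul, i1]
      have := (hA t ht).ne'
      simp only [hc]
      field_simp
      ring
    · have G := gage (fun u => (x u t).1) (fun u => (x u t).2) (fun u => νf u t)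
        (fun u => g u t) (fun u => νu u t) (areaF x g νf t)
        (fun u => hX u t ht) (fun u => hY u t ht) (fun u => hνu u t ht) sg sν
        (fun u => hg u t ht)
        (fun u => (div_pos_iff_of_pos_right (hg u t ht)).1 (kpos u t ht))
        (fun u => by simp only [hper u t ht]) (fun u => by simp only [hper u t ht])
        (fun u => hνper u t ht) (fun u => pg u t ht) (fun u => pκ u t ht) (hA t ht)
        (by unfold areaF; ring)
      have e : π * lenF g t / areaF x g νf t
          = π / areaF x g νf t * ∫ u in (0:ℝ)..1, g u t := by
        unfold lenF; ring
      rw [e]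
      linarith
  refine ⟨main, ?_⟩
  apply antitoneOn_of_deriv_nonpos (convex_Ico 0 T)
  · exact fun t ht => (main t ht).1.continuousWithinAt
  · intro t ht
    exact ((main t (interior_subset ht)).1.mono interior_subset).differentiableWithinAt
  · intro t ht
    have ht' := interior_subset ht
    rw [((main t ht').1.hasDerivAt (mem_interior_iff_mem_nhds.1 ht)).deriv]
    exact (main t ht').2
end

section
/- Initial length increase for the anisoperimetric ratio gradient flow started from a modified Wulff shape: let σ be a nonconstant anisotropy function which is not of the form σ(ν) = c₀ + c₁ cos ν + c₂ sin ν (so that the associated Wulff boundaries are not round circles), let a, b > 0 be constants and set σ̄ = a·σ + b. Let x : ℝ × [0,T) → ℝ² be a smooth family of closed curves evolving by the anisoperimetric ratio gradient flow ∂_t x = (k_σ − L_σ(t)/(2A(t)))·N whose initial curve x(·,0) parameterizes the Wulff boundary ∂W_{σ̄}, i.e. the image of x(·,0) equals {−σ̄(ν)(−sin ν, cos ν) + σ̄'(ν)(cos ν, sin ν) : ν ∈ ℝ}. Then (d/dt) L(t)|_{t=0} = (b/a)·(∫_{∂W_{σ̄}} k² ds − π·L(∂W_{σ̄})/|W_{σ̄}|)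 > 0, where L(t) = ∫₀¹ |∂_u x(u,t)| du. -/
open Real

/-- The Wulff area `|W_σ| = (1/2)∫₀^{2π} σ(ν)(σ(ν)+σ''(ν)) dν`. -/
noncomputable def wulffArea (σ : ℝ → ℝ) : ℝ :=
  (1 / 2) * ∫ ν in (0:ℝ)..(2 * π), σ ν * (σ ν + deriv (deriv σ) ν)

/-- The standard parameterization of the Wulff boundary `∂W_σ`:
`w(ν) = −σ(ν)(−sin ν, cos ν) + σ'(ν)(cos ν, sin ν)`. -/
noncomputable def wulffPoint (σ : ℝ → ℝ) (t : ℝ) : ℝ × ℝ :=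
  (-σ t) • ((-Real.sin t, Real.cos t) : ℝ × ℝ) +
    (deriv σ t) • ((Real.cos t, Real.sin t) : ℝ × ℝ)

/-- The modified anisotropy `σ̄ = a·σ + b`. -/
noncomputable def modAniso (σ : ℝ → ℝ) (a b : ℝ) : ℝ → ℝ :=
  fun s => a * σ s + b

/-- Anisotropic length `L_σ(t) = ∫₀¹ σ(ν(u,t))|∂_u x(u,t)| du`. -/
noncomputable def aLenF (σ : ℝ → ℝ) (g νf : ℝ → ℝ → ℝ) (t : ℝ) : ℝ :=
  ∫ u in (0:ℝ)..1, σ (νf u t) * g u t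

lemma aux_kernel_bound_half (y : ℝ) (h0 : 0 ≤ y) (h1 : y ≤ π) : |1 - y * Real.sin y| ≤ 1 := by
  have hs0 : 0 ≤ Real.sin y := Real.sin_nonneg_of_nonneg_of_le_pi h0 h1
  have hs1 := Real.sin_le_one y
  have hp1 := Real.pi_gt_d2
  have hp2 := Real.pi_lt_d2
  have key : y * Real.sin y ≤ 2 := by
    by_cases h2 : y ≤ 2
    · nlinarith
    by_cases h3 : y ≤ 2.3
    · push Not at h2
      have e : Real.sin y = Real.cos (y - π / 2) := by
        rw [Real.cos_sub_pi_div_two]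
      have hb := Real.cos_bound (x := y - π / 2) (by rw [abs_le]; constructor <;> linarith)
      rw [abs_le] at hb
      have hz1 : 0.42 ≤ y - π / 2 := by linarith
      have hz2 : y - π / 2 ≤ 0.74 := by linarith
      rw [abs_of_nonneg (by linarith)] at hb
      rw [e]
      set z := y - π / 2
      have hy : y ≤ z + 1.575 := by simp only [z]; linarith
      have hc : Real.cos z ≤ 1 - z ^ 2 / 2 + z ^ 4 * (5 / 96) := by linarith [hb.2]
      have hq : z ^ 2 ≤ 0.5476 := by nlinarith
      have hc2 : Real.cos z ≤ 1 - z ^ 2 * 0.471 := by nlinarith [sq_nonneg z]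
      have : y * Real.cos z ≤ (z + 1.575) * (1 - z ^ 2 * 0.471) := by
        apply mul_le_mul hy hc2 (by rw [← e]; exact hs0) (by linarith)
      nlinarith [sq_nonneg (z - 0.5), mul_nonneg (by linarith : 0 ≤ z) (sq_nonneg (z - 0.5))]
    · push Not at h3
      have : Real.sin y ≤ π - y := by
        rw [← Real.sin_pi_sub]; exact Real.sin_le (by linarith)
      nlinarith
  rw [abs_le]; constructor <;> nlinarith

lemma aux_kernel_bound (s : ℝ) (h0 : 0 ≤ s) (h1 : s ≤ 2 * π) :
    |1 - (π - s) * Real.sin s| ≤ 1 := by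
  by_cases h : s ≤ π
  · have := aux_kernel_bound_half (π - s) (by linarith) (by linarith)
    rwa [Real.sin_pi_sub] at this
  · push Not at h
    have := aux_kernel_bound_half (s - π) (by linarith) (by linarith)
    rw [Real.sin_sub_pi] at this
    convert this using 2
    ring

/-- integral over a period of a shifted function -/
lemma aux_shift (f : ℝ → ℝ) (hf : ∀ s, f (s + 2 * π) = f s) (θ : ℝ) :
    ∫ s in (0:ℝ)..(2 * π), f (θ + s) = ∫ s in (0:ℝ)..(2 * π), f s := by
  rw [intervalIntegral.integral_comp_add_left]
  have : Function.Periodic f (2 * π) := hf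
  have := this.intervalIntegral_add_eq θ 0
  simpa using this

lemma aux_int_deriv (f f' : ℝ → ℝ) (hf : ∀ s, HasDerivAt f (f' s) s) (hc : Continuous f')
    (hp : f (2 * π) = f 0) : ∫ s in (0:ℝ)..(2 * π), f' s = 0 := by
  rw [intervalIntegral.integral_eq_sub_of_hasDerivAt (fun s _ => hf s)
    (hc.intervalIntegrable _ _), hp, sub_self]

section kernel
variable (h h1 h2 : ℝ → ℝ) 

lemma aux_inner (hd : ∀ s, HasDerivAt h (h1 s) s) (hd1 : ∀ s, HasDerivAt h1 (h2 s) s)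
    (hc2 : Continuous h2) (hp : ∀ s, h (s + 2 * π) = h s) (hp1 : ∀ s, h1 (s + 2 * π) = h1 s)
    (θ : ℝ) :
    ∫ s in (0:ℝ)..(2 * π), (π - s) * Real.sin s * (h (θ + s) + h2 (θ + s)) =
      2 * π * h θ - 2 * ∫ s in (0:ℝ)..(2 * π), Real.cos s * h (θ + s) := by
  have hc : Continuous h := continuous_iff_continuousAt.2 fun s => (hd s).continuousAt
  have hsh : ∀ s, HasDerivAt (fun s => θ + s) 1 s := fun s => by
    simpa using (hasDerivAt_id s).const_add θ
  have hk : ∀ s : ℝ, HasDerivAt (fun s : ℝ => π - s) (-1) s := fun s => by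
    simpa using (hasDerivAt_id s).const_sub π
  have key : ∫ s in (0:ℝ)..(2 * π), ((π - s) * Real.sin s * (h (θ + s) + h2 (θ + s))
      + 2 * (Real.cos s * h (θ + s))) = 2 * π * h θ := by
    rw [intervalIntegral.integral_eq_sub_of_hasDerivAt
      (f := fun s => (π - s) * Real.sin s * h1 (θ + s)
        - (- Real.sin s + (π - s) * Real.cos s) * h (θ + s))]
    · have e := hp θ
      simp [e]; ring
    · intro s _
      have d1 := ((hd1 (θ + s)).comp s (hsh s))
      have d0 := ((hd (θ + s)).comp s (hsh s))
      have := (((hk s).mul (Real.hasDerivAt_sin s)).mul d1).sub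
        (((Real.hasDerivAt_sin s).neg.add ((hk s).mul (Real.hasDerivAt_cos s))).mul d0)
      refine this.congr_deriv ?_
      simp [Function.comp]
      ring
    · apply Continuous.intervalIntegrable; fun_prop
  rw [intervalIntegral.integral_add, intervalIntegral.integral_const_mul] at key
  · linarith
  · apply Continuous.intervalIntegrable; fun_prop
  · apply Continuous.intervalIntegrable; fun_prop

lemma aux_cosconv (hc : Continuous h) (hp : ∀ s, h (s + 2 * π) = h s) (θ : ℝ) :
    ∫ s in (0:ℝ)..(2 * π), Real.cos s * h (θ + s) =
      Real.cos θ * (∫ s in (0:ℝ)..(2 * π), Real.cos s * h s) +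
      Real.sin θ * (∫ s in (0:ℝ)..(2 * π), Real.sin s * h s) := by
  have := aux_shift (fun φ => Real.cos (φ - θ) * h φ) (by
    intro s; simp only [hp]; rw [show s + 2 * π - θ = s - θ + 2 * π by ring, Real.cos_add_two_pi]) θ
  simp only [add_sub_cancel_left] at this
  rw [this, ← intervalIntegral.integral_const_mul, ← intervalIntegral.integral_const_mul,
    ← intervalIntegral.integral_add]
  · congr 1; ext s; rw [Real.cos_sub]; ring
  · apply Continuous.intervalIntegrable; fun_prop
  · apply Continuous.intervalIntegrable; fun_prop

lemma aux_orth (hd : ∀ s, HasDerivAt h (h1 s) s) (hd1 : ∀ s, HasDerivAt h1 (h2 s) s)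
    (hc2 : Continuous h2) (hp : ∀ s, h (s + 2 * π) = h s) (hp1 : ∀ s, h1 (s + 2 * π) = h1 s) :
    (∫ s in (0:ℝ)..(2 * π), (h s + h2 s) * Real.cos s) = 0 ∧
    (∫ s in (0:ℝ)..(2 * π), (h s + h2 s) * Real.sin s) = 0 := by
  have hc : Continuous h := continuous_iff_continuousAt.2 fun s => (hd s).continuousAt
  have e0 : h (2 * π) = h 0 := by simpa using hp 0
  have e1 : h1 (2 * π) = h1 0 := by simpa using hp1 0
  constructor
  · apply aux_int_deriv (fun s => h1 s * Real.cos s + h s * Real.sin s)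
    · intro s
      refine (((hd1 s).mul (Real.hasDerivAt_cos s)).add
        ((hd s).mul (Real.hasDerivAt_sin s))).congr_deriv ?_
      ring
    · fun_prop
    · simp [e1]
  · apply aux_int_deriv (fun s => h1 s * Real.sin s - h s * Real.cos s)
    · intro s
      refine (((hd1 s).mul (Real.hasDerivAt_sin s)).sub
        ((hd s).mul (Real.hasDerivAt_cos s))).congr_deriv ?_
      ring
    · fun_prop
    · simp [e0]

lemma aux_kernel_ineq (hd : ∀ s, HasDerivAt h (h1 s) s) (hd1 : ∀ s, HasDerivAt h1 (h2 s) s)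
    (hc2 : Continuous h2) (hp : ∀ s, h (s + 2 * π) = h s) (hp1 : ∀ s, h1 (s + 2 * π) = h1 s)
    (hp2 : ∀ s, h2 (s + 2 * π) = h2 s) :
    (∫ s in (0:ℝ)..(2 * π), (h s + h2 s)) ^ 2
      - 2 * π * (∫ s in (0:ℝ)..(2 * π), h s * (h s + h2 s)) ≤
    (∫ s in (0:ℝ)..(2 * π), |h s + h2 s|) ^ 2 := by
  have hc : Continuous h := continuous_iff_continuousAt.2 fun s => (hd s).continuousAt
  have hpi := Real.pi_pos
  set C := ∫ s in (0:ℝ)..(2 * π), Real.cos s * h s with hC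
  set S := ∫ s in (0:ℝ)..(2 * π), Real.sin s * h s with hS
  set L := ∫ s in (0:ℝ)..(2 * π), (h s + h2 s) with hL
  set M := ∫ s in (0:ℝ)..(2 * π), |h s + h2 s| with hM
  obtain ⟨o1, o2⟩ := aux_orth h h1 h2 hd hd1 hc2 hp hp1
  have hin : ∀ θ, ∫ s in (0:ℝ)..(2 * π),
      (1 - (π - s) * Real.sin s) * (h (θ + s) + h2 (θ + s)) =
      L - 2 * π * h θ + 2 * (Real.cos θ * C + Real.sin θ * S) := by
    intro θ
    have e1 := aux_inner h h1 h2 hd hd1 hc2 hp hp1 θ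
    rw [aux_cosconv h hc hp] at e1
    have e2 := aux_shift (fun s => h s + h2 s) (by intro s; simp [hp, hp2]) θ
    simp_rw [sub_mul (1:ℝ), one_mul]
    rw [intervalIntegral.integral_sub, e1, e2]
    · ring
    · apply Continuous.intervalIntegrable; fun_prop
    · apply Continuous.intervalIntegrable; fun_prop
  have hbd : ∀ θ, |L - 2 * π * h θ + 2 * (Real.cos θ * C + Real.sin θ * S)| ≤ M := by
    intro θ
    rw [← hin θ]
    have e2 := aux_shift (fun s => |h s + h2 s|) (by intro s; simp [hp, hp2]) θ
    rw [hM, ← e2]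
    refine (intervalIntegral.abs_integral_le_integral_abs (by linarith)).trans ?_
    apply intervalIntegral.integral_mono_on (by linarith)
    · apply Continuous.intervalIntegrable; fun_prop
    · apply Continuous.intervalIntegrable; fun_prop
    · intro s hs
      rw [abs_mul]
      have := aux_kernel_bound s hs.1 hs.2
      nlinarith [abs_nonneg (h (θ + s) + h2 (θ + s))]
  have e : L ^ 2 - 2 * π * (∫ s in (0:ℝ)..(2 * π), h s * (h s + h2 s)) =
      ∫ θ in (0:ℝ)..(2 * π), (h θ + h2 θ) *
        (L - 2 * π * h θ + 2 * (Real.cos θ * C + Real.sin θ * S)) := by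
    have : ∀ θ, (h θ + h2 θ) * (L - 2 * π * h θ + 2 * (Real.cos θ * C + Real.sin θ * S)) =
      L * (h θ + h2 θ) - 2 * π * (h θ * (h θ + h2 θ)) + (2 * C * ((h θ + h2 θ) * Real.cos θ) +
        2 * S * ((h θ + h2 θ) * Real.sin θ)) := fun θ => by ring
    simp_rw [this]
    rw [intervalIntegral.integral_add, intervalIntegral.integral_add,
      intervalIntegral.integral_sub]
    · simp_rw [intervalIntegral.integral_const_mul, o1, o2]
      rw [← hL]; ring
    all_goals apply Continuous.intervalIntegrable; fun_prop
  rw [e]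
  have : (∫ θ in (0:ℝ)..(2 * π), (h θ + h2 θ) *
        (L - 2 * π * h θ + 2 * (Real.cos θ * C + Real.sin θ * S))) ≤
      ∫ θ in (0:ℝ)..(2 * π), M * |h θ + h2 θ| := by
    apply intervalIntegral.integral_mono_on (by linarith)
    · apply Continuous.intervalIntegrable; fun_prop
    · apply Continuous.intervalIntegrable; fun_prop
    · intro s hs
      refine (le_abs_self _).trans ?_
      rw [abs_mul, mul_comm]
      exact mul_le_mul_of_nonneg_right (hbd s) (abs_nonneg _)
  rw [intervalIntegral.integral_const_mul, ← hM] at this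
  rw [sq]; exact this

lemma aux_kernel_ineq_shift (hd : ∀ s, HasDerivAt h (h1 s) s) (hd1 : ∀ s, HasDerivAt h1 (h2 s) s)
    (hc2 : Continuous h2) (hp : ∀ s, h (s + 2 * π) = h s) (hp1 : ∀ s, h1 (s + 2 * π) = h1 s)
    (hp2 : ∀ s, h2 (s + 2 * π) = h2 s) (m : ℝ) :
    (∫ s in (0:ℝ)..(2 * π), h s) ^ 2
      - 2 * π * (∫ s in (0:ℝ)..(2 * π), h s * (h s + h2 s)) ≤
    (∫ s in (0:ℝ)..(2 * π), |h s + h2 s - m|) ^ 2 := by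
  have hc : Continuous h := continuous_iff_continuousAt.2 fun s => (hd s).continuousAt
  have k := aux_kernel_ineq (fun s => h s - m) h1 h2 (fun s => (hd s).sub_const m) hd1 hc2
    (by intro s; simp [hp]) hp1 hp2
  have z : ∫ s in (0:ℝ)..(2 * π), h2 s = 0 :=
    aux_int_deriv h1 h2 hd1 hc2 (by simpa using hp1 0)
  have e1 : ∫ s in (0:ℝ)..(2 * π), (h s - m + h2 s) = (∫ s in (0:ℝ)..(2 * π), h s) - 2 * π * m := by
    rw [intervalIntegral.integral_add, intervalIntegral.integral_sub, z]
    · simp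
    all_goals apply Continuous.intervalIntegrable; fun_prop
  have e2 : ∫ s in (0:ℝ)..(2 * π), (h s - m) * (h s - m + h2 s) =
      (∫ s in (0:ℝ)..(2 * π), h s * (h s + h2 s)) - 2 * m * (∫ s in (0:ℝ)..(2 * π), h s)
       + 2 * π * m ^ 2 := by
    have : ∀ s, (h s - m) * (h s - m + h2 s) =
      h s * (h s + h2 s) - 2 * m * h s - m * h2 s + m ^ 2 := fun s => by ring
    simp_rw [this]
    rw [intervalIntegral.integral_add, intervalIntegral.integral_sub,
      intervalIntegral.integral_sub, intervalIntegral.integral_const_mul,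
      intervalIntegral.integral_const_mul, z]
    · simp
    all_goals apply Continuous.intervalIntegrable; fun_prop
  have e3 : ∀ s, h s - m + h2 s = h s + h2 s - m := fun s => by ring
  rw [e1, e2] at k
  simp_rw [e3] at k
  refine le_trans (le_of_eq ?_) k
  ring

end kernel

lemma aux_tangent (α β x : ℝ) (hx : 0 < x) :
    α + β - x / 2 * (α ^ 2 + β ^ 2) + 1 / 2 * |(α ^ 2 - β ^ 2) * x - 2 * (α - β)| ≤ 1 / x := by
  rw [le_div_iff₀ hx]
  rcases abs_cases ((α ^ 2 - β ^ 2) * x - 2 * (α - β)) with ⟨h, _⟩ | ⟨h, _⟩ <;> rw [h]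
  · nlinarith [sq_nonneg (1 - β * x)]
  · nlinarith [sq_nonneg (1 - α * x)]

lemma aux_tangent_strict (α β x : ℝ) (hx : 0 < x) (h1 : α * x ≠ 1) (h2 : β * x ≠ 1) :
    α + β - x / 2 * (α ^ 2 + β ^ 2) + 1 / 2 * |(α ^ 2 - β ^ 2) * x - 2 * (α - β)| < 1 / x := by
  have h1' : 0 < (1 - α * x) ^ 2 := by
    have : 1 - α * x ≠ 0 := fun h => h1 (by linarith)
    positivity
  have h2' : 0 < (1 - β * x) ^ 2 := by
    have : 1 - β * x ≠ 0 := fun h => h2 (by linarith)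
    positivity
  rw [lt_div_iff₀ hx]
  rcases abs_cases ((α ^ 2 - β ^ 2) * x - 2 * (α - β)) with ⟨h, _⟩ | ⟨h, _⟩ <;> rw [h] <;> nlinarith

lemma aux_two_values (ρ : ℝ → ℝ) (hc : Continuous ρ)
    (hnc : ∀ c, ∃ s ∈ Set.Icc (0:ℝ) (2 * π), ρ s ≠ c) (p q : ℝ) :
    ∃ s ∈ Set.Icc (0:ℝ) (2 * π), ρ s ≠ p ∧ ρ s ≠ q := by
  by_contra! H
  obtain ⟨s1, h1, e1⟩ := hnc p
  obtain ⟨s2, h2, e2⟩ := hnc q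
  have a1 : ρ s1 = q := H s1 h1 e1
  have a2 : ρ s2 = p := by
    by_contra h; exact e2 (H s2 h2 h)
  have hne : p ≠ q := fun h => e1 (by rw [a1, h])
  have hpre : Set.OrdConnected (ρ '' Set.Icc (0:ℝ) (2 * π)) :=
    (isPreconnected_Icc.image ρ hc.continuousOn).ordConnected
  have hm := hpre.uIcc_subset ⟨s1, h1, rfl⟩ ⟨s2, h2, rfl⟩
  have hmem : (p + q) / 2 ∈ Set.uIcc (ρ s1) (ρ s2) := by
    rw [a1, a2, Set.mem_uIcc]
    rcases le_total p q with h | h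
    · right; constructor <;> linarith
    · left; constructor <;> linarith
  obtain ⟨s, hs, e⟩ := hm hmem
  by_cases h : ρ s = p
  · exact hne (by linarith)
  · have := H s hs h
    exact hne (by linarith)

lemma aux_gage (ρ : ℝ → ℝ) (hc : Continuous ρ) (hpos : ∀ s, 0 < ρ s)
    (hnc : ∀ c, ∃ s ∈ Set.Icc (0:ℝ) (2 * π), ρ s ≠ c) (L A : ℝ)
    (hL : ∫ s in (0:ℝ)..(2 * π), ρ s = L) (hA : 0 < A)
    (hK : ∀ m, L ^ 2 - 4 * π * A ≤ (∫ s in (0:ℝ)..(2 * π), |ρ s - m|) ^ 2) :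
    π * L / A < ∫ s in (0:ℝ)..(2 * π), 1 / ρ s := by
  have hpi := Real.pi_pos
  have hLpos : 0 < L := by
    rw [← hL]
    exact intervalIntegral.intervalIntegral_pos_of_pos (hc.intervalIntegrable _ _) hpos
      (by linarith)
  set D := Real.sqrt (L ^ 2 - 4 * π * A) with hD
  have hD0 : 0 ≤ D := Real.sqrt_nonneg _
  have hDm : ∀ m, D ≤ ∫ s in (0:ℝ)..(2 * π), |ρ s - m| := by
    intro m
    rw [hD]
    apply Real.sqrt_le_iff.2
    exact ⟨intervalIntegral.integral_nonneg (by linarith) (fun s _ => abs_nonneg _), hK m⟩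
  have hAp : 0 < π * A := by positivity
  have hD2 : D ^ 2 < L ^ 2 ∧ L ^ 2 - D ^ 2 ≤ 4 * π * A := by
    rcases le_total (L ^ 2 - 4 * π * A) 0 with h | h
    · have : D = 0 := Real.sqrt_eq_zero_of_nonpos h
      rw [this]; constructor
      · norm_num; positivity
      · linarith
    · have : D ^ 2 = L ^ 2 - 4 * π * A := Real.sq_sqrt h
      constructor <;> linarith
  have hDL : D < L := lt_of_pow_lt_pow_left₀ 2 hLpos.le hD2.1
  set α := 2 * π / (L - D) with hα
  set β := 2 * π / (L + D) with hβ
  have hαp : 0 < α := div_pos (by linarith) (by linarith)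
  have hβp : 0 < β := div_pos (by linarith) (by linarith)
  have ea : α * (L - D) = 2 * π := by rw [hα]; field_simp [(by linarith : L - D ≠ 0)]
  have eb : β * (L + D) = 2 * π := by rw [hβ]; field_simp
  have hβα : β ≤ α := by
    rw [hα, hβ]; apply div_le_div_of_nonneg_left <;> linarith
  obtain ⟨s0, hs0, n1, n2⟩ := aux_two_values ρ hc hnc (1 / α) (1 / β)
  have hci : Continuous fun s => 1 / ρ s :=
    continuous_const.div hc fun s => (hpos s).ne'
  have lt1 : ∫ s in (0:ℝ)..(2 * π), (α + β - ρ s / 2 * (α ^ 2 + β ^ 2)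
      + 1 / 2 * |(α ^ 2 - β ^ 2) * ρ s - 2 * (α - β)|) < ∫ s in (0:ℝ)..(2 * π), 1 / ρ s := by
    apply intervalIntegral.integral_lt_integral_of_continuousOn_of_le_of_exists_lt (by linarith)
    · apply Continuous.continuousOn; fun_prop
    · exact hci.continuousOn
    · intro s _; exact aux_tangent α β _ (hpos s)
    · refine ⟨s0, hs0, aux_tangent_strict α β _ (hpos s0) ?_ ?_⟩
      · intro h; apply n1; rw [eq_div_iff hαp.ne']; linarith
      · intro h; apply n2; rw [eq_div_iff hβp.ne']; linarith
  have eI : ∫ s in (0:ℝ)..(2 * π), (α + β - ρ s / 2 * (α ^ 2 + β ^ 2)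
      + 1 / 2 * |(α ^ 2 - β ^ 2) * ρ s - 2 * (α - β)|) =
      2 * π * (α + β) - L / 2 * (α ^ 2 + β ^ 2) + 1 / 2 * ((α ^ 2 - β ^ 2) *
        ∫ s in (0:ℝ)..(2 * π), |ρ s - 2 / (α + β)|) := by
    rw [intervalIntegral.integral_add, intervalIntegral.integral_sub,
      intervalIntegral.integral_mul_const, intervalIntegral.integral_div, hL,
      intervalIntegral.integral_const_mul, ← intervalIntegral.integral_const_mul (α ^ 2 - β ^ 2)]
    · congr 2
      · simp; ring
      · congr 1; ext s
        have : (α ^ 2 - β ^ 2) * ρ s - 2 * (α - β) = (α ^ 2 - β ^ 2) * (ρ s - 2 / (α + β)) := by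
          field_simp; ring
        rw [this, abs_mul, abs_of_nonneg (by nlinarith : 0 ≤ α ^ 2 - β ^ 2)]
    all_goals apply Continuous.intervalIntegrable; fun_prop
  rw [eI] at lt1
  refine lt_of_le_of_lt ?_ lt1
  have h1 : (α ^ 2 - β ^ 2) * D ≤ (α ^ 2 - β ^ 2) *
        ∫ s in (0:ℝ)..(2 * π), |ρ s - 2 / (α + β)| :=
    mul_le_mul_of_nonneg_left (hDm _) (by nlinarith)
  have h2 : 2 * π * (α + β) - L / 2 * (α ^ 2 + β ^ 2) + 1 / 2 * ((α ^ 2 - β ^ 2) * D) =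
      π * (α + β) := by
    have : 2 * π * (α + β) - L / 2 * (α ^ 2 + β ^ 2) + 1 / 2 * ((α ^ 2 - β ^ 2) * D) =
      2 * π * (α + β) - 1 / 2 * (α * (α * (L - D)) + β * (β * (L + D))) := by ring
    rw [this, ea, eb]; ring
  have h3 : π * L / A ≤ π * (α + β) := by
    have : α + β = 4 * π * L / (L ^ 2 - D ^ 2) := by
      have x1 : L - D ≠ 0 := by linarith
      have x2 : L + D ≠ 0 := by linarith
      have x3 : L ^ 2 - D ^ 2 ≠ 0 := by linarith [hD2.1]
      rw [hα, hβ, div_add_div _ _ x1 x2, div_eq_div_iff (mul_ne_zero x1 x2) x3]; ring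
    rw [this, mul_div_assoc]
    apply mul_le_mul_of_nonneg_left _ hpi.le
    rw [div_le_div_iff₀ hA (by linarith [hD2.1])]
    nlinarith [hD2.2]
  linarith

/-- a function with constant `y + y''` is of the round form -/
lemma aux_ode (h h1 h2 : ℝ → ℝ) (hd : ∀ s, HasDerivAt h (h1 s) s)
    (hd1 : ∀ s, HasDerivAt h1 (h2 s) s) (c : ℝ) (hcst : ∀ s, h s + h2 s = c) :
    ∃ c₀ c₁ c₂ : ℝ, ∀ s, h s = c₀ + c₁ * Real.cos s + c₂ * Real.sin s := by
  have k1 : ∀ s, HasDerivAt (fun s => (h s - c) * Real.cos s - h1 s * Real.sin s) 0 s := by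
    intro s
    refine ((((hd s).sub_const c).mul (Real.hasDerivAt_cos s)).sub
      ((hd1 s).mul (Real.hasDerivAt_sin s))).congr_deriv ?_
    have := hcst s
    rw [← this]; ring
  have k2 : ∀ s, HasDerivAt (fun s => (h s - c) * Real.sin s + h1 s * Real.cos s) 0 s := by
    intro s
    refine ((((hd s).sub_const c).mul (Real.hasDerivAt_sin s)).add
      ((hd1 s).mul (Real.hasDerivAt_cos s))).congr_deriv ?_
    have := hcst s
    rw [← this]; ring
  refine ⟨c, h 0 - c, h1 0, fun s => ?_⟩
  have e1 := is_const_of_deriv_eq_zero (fun s => (k1 s).differentiableAt)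
    (fun s => (k1 s).deriv) s 0
  have e2 := is_const_of_deriv_eq_zero (fun s => (k2 s).differentiableAt)
    (fun s => (k2 s).deriv) s 0
  simp only [Real.cos_zero, Real.sin_zero, mul_one, mul_zero, sub_zero, zero_add] at e1 e2
  have := Real.sin_sq_add_cos_sq s
  rw [← e1, ← e2]
  linear_combination (c - h s) * this

lemma aux_diff_int (g Gt : ℝ → ℝ → ℝ) (T : ℝ) (hT : 0 < T)
    (hd : ∀ u, ∀ t ∈ Set.Ico (0:ℝ) T,
      HasDerivWithinAt (fun t => g u t) (Gt u t) (Set.Ico 0 T) t)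
    (hgc : ContinuousOn (fun p : ℝ × ℝ => g p.1 p.2) ((Set.univ : Set ℝ) ×ˢ Set.Ico (0:ℝ) T))
    (hGc : ContinuousOn (fun p : ℝ × ℝ => Gt p.1 p.2) ((Set.univ : Set ℝ) ×ˢ Set.Ico (0:ℝ) T)) :
    HasDerivWithinAt (lenF g) (∫ u in (0:ℝ)..1, Gt u 0) (Set.Ico 0 T) 0 := by
  have hcg : ∀ t ∈ Set.Ico (0:ℝ) T, Continuous fun u => g u t := by
    intro t ht
    rw [← continuousOn_univ]
    exact hgc.comp (f := fun u : ℝ => (u, t)) (by fun_prop) (fun u _ => ⟨Set.mem_univ _, ht⟩)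
  have h0 : (0:ℝ) ∈ Set.Ico (0:ℝ) T := ⟨le_rfl, hT⟩
  obtain ⟨C, hC⟩ := (isCompact_Icc.prod isCompact_Icc : IsCompact
    (Set.Icc (0:ℝ) 1 ×ˢ Set.Icc (0:ℝ) (T / 2))).exists_bound_of_continuousOn
    (hGc.mono (Set.prod_mono (Set.subset_univ _) (fun t ht => ⟨ht.1, by linarith [ht.2]⟩)))
  have hlip : ∀ u ∈ Set.Icc (0:ℝ) 1, ∀ t ∈ Set.Icc (0:ℝ) (T / 2), ‖g u t - g u 0‖ ≤ C * ‖t - 0‖ := by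
    intro u hu t ht
    apply (convex_Icc (0:ℝ) (T / 2)).norm_image_sub_le_of_norm_hasDerivWithin_le
      (f := fun t => g u t) (f' := fun t => Gt u t)
    · intro s hs
      exact (hd u s ⟨hs.1, by linarith [hs.2]⟩).mono (fun t ht => ⟨ht.1, by linarith [ht.2]⟩)
    · intro s hs
      exact hC (u, s) ⟨hu, hs⟩
    · exact ⟨le_rfl, by linarith⟩
    · exact ht
  rw [hasDerivWithinAt_iff_tendsto_slope]
  have hev : ∀ᶠ t in nhdsWithin (0:ℝ) (Set.Ico 0 T \ {0}), t ∈ Set.Ico (0:ℝ) T ∧ t ≠ 0 ∧ t ≤ T / 2 := by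
    filter_upwards [self_mem_nhdsWithin, mem_nhdsWithin_of_mem_nhds (Iic_mem_nhds (by linarith : 0 < T / 2))]
      with t h1 h2
    exact ⟨h1.1, h1.2, h2⟩
  have heq : ∀ t ∈ Set.Ico (0:ℝ) T, slope (lenF g) 0 t =
      ∫ u in (0:ℝ)..1, slope (fun t => g u t) 0 t := by
    intro t ht
    simp only [slope_def_module, lenF, smul_eq_mul]
    rw [intervalIntegral.integral_const_mul, intervalIntegral.integral_sub
      ((hcg t ht).intervalIntegrable _ _) ((hcg 0 h0).intervalIntegrable _ _)]
  have key : Filter.Tendsto (fun t => ∫ u in (0:ℝ)..1, slope (fun t => g u t) 0 t)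
      (nhdsWithin (0:ℝ) (Set.Ico 0 T \ {0})) (nhds (∫ u in (0:ℝ)..1, Gt u 0)) := by
    apply intervalIntegral.tendsto_integral_filter_of_dominated_convergence (fun _ => C)
    · filter_upwards [hev] with t ht
      apply Continuous.aestronglyMeasurable
      have := hcg t ht.1
      have := hcg 0 h0
      simp only [slope_def_module]
      fun_prop
    · filter_upwards [hev] with t ht
      refine Filter.Eventually.of_forall fun u hu => ?_
      rw [Set.uIoc_of_le zero_le_one] at hu
      have := hlip u ⟨hu.1.le, hu.2⟩ t ⟨ht.1.1, ht.2.2⟩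
      have hp : 0 < ‖t - 0‖ := by simpa using ht.2.1
      rw [slope_def_module, norm_smul, norm_inv, inv_mul_le_iff₀ hp]
      linarith
    · simp
    · refine Filter.Eventually.of_forall fun u _ => ?_
      exact hasDerivWithinAt_iff_tendsto_slope.1 (hd u 0 h0)
  refine key.congr' ?_
  filter_upwards [hev] with t ht
  exact (heq t ht.1).symm

section partials
variable {E : Type*} [NormedAddCommGroup E] [NormedSpace ℝ E]

lemma aux_partial_u (F : ℝ × ℝ → E) (F' : ℝ × ℝ →L[ℝ] E) (T u t : ℝ) (ht : t ∈ Set.Ico (0:ℝ) T)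
    (hF : HasFDerivWithinAt F F' ((Set.univ : Set ℝ) ×ˢ Set.Ico (0:ℝ) T) (u, t)) :
    HasDerivAt (fun u' => F (u', t)) (F' (1, 0)) u := by
  rw [← hasDerivWithinAt_univ]
  exact HasFDerivWithinAt.comp_hasDerivWithinAt (f := fun u' : ℝ => (u', t)) u hF
    ((hasDerivWithinAt_id u _).prodMk (hasDerivWithinAt_const u _ t))
    (fun u' _ => ⟨Set.mem_univ _, ht⟩)

lemma aux_partial_t (F : ℝ × ℝ → E) (F' : ℝ × ℝ →L[ℝ] E) (T u t : ℝ)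
    (hF : HasFDerivWithinAt F F' ((Set.univ : Set ℝ) ×ˢ Set.Ico (0:ℝ) T) (u, t)) :
    HasDerivWithinAt (fun t' => F (u, t')) (F' (0, 1)) (Set.Ico 0 T) t := by
  exact HasFDerivWithinAt.comp_hasDerivWithinAt (f := fun t' : ℝ => (u, t')) t hF
    ((hasDerivWithinAt_const t _ u).prodMk (hasDerivWithinAt_id t _))
    (fun t' ht' => ⟨Set.mem_univ _, ht'⟩)

end partials

lemma aux_flow (T : ℝ) (hT : 0 < T) (x : ℝ → ℝ → ℝ × ℝ) (g νf : ℝ → ℝ → ℝ) (νu V : ℝ → ℝ)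
    (hxs : ContDiffOn ℝ (⊤ : ℕ∞) (fun p : ℝ × ℝ => x p.1 p.2)
      ((Set.univ : Set ℝ) ×ˢ Set.Ico (0:ℝ) T))
    (hνs : ContDiffOn ℝ (⊤ : ℕ∞) (fun p : ℝ × ℝ => νf p.1 p.2)
      ((Set.univ : Set ℝ) ×ˢ Set.Ico (0:ℝ) T))
    (htang : ∀ u, ∀ t ∈ Set.Ico (0:ℝ) T,
      HasDerivAt (fun u' => x u' t)
        (g u t • ((Real.cos (νf u t), Real.sin (νf u t)) : ℝ × ℝ)) u)
    (hνu : ∀ u, HasDerivAt (fun u' => νf u' 0) (νu u) u)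
    (hV : ∀ u, DifferentiableAt ℝ V u)
    (hflow : ∀ u, HasDerivWithinAt (fun t' => x u t')
        (V u • ((-Real.sin (νf u 0), Real.cos (νf u 0)) : ℝ × ℝ)) (Set.Ico 0 T) 0) :
    HasDerivWithinAt (lenF g) (∫ u in (0:ℝ)..1, - V u * νu u) (Set.Ico 0 T) 0 ∧
    Continuous (fun u => g u 0) := by
  set S := (Set.univ : Set ℝ) ×ˢ Set.Ico (0:ℝ) T with hS
  set F : ℝ × ℝ → ℝ × ℝ := fun p => x p.1 p.2 with hF
  have h0 : (0:ℝ) ∈ Set.Ico (0:ℝ) T := ⟨le_rfl, hT⟩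
  have hU : UniqueDiffOn ℝ S := uniqueDiffOn_univ.prod (uniqueDiffOn_Ico 0 T)
  set DF : ℝ × ℝ → (ℝ × ℝ →L[ℝ] ℝ × ℝ) := fderivWithin ℝ F S with hDF
  have hDFs : ContDiffOn ℝ (⊤ : ℕ∞) DF S := hxs.fderivWithin hU (by simp)
  have hFd : ∀ p ∈ S, HasFDerivWithinAt F (DF p) S p := fun p hp =>
    ((hxs.differentiableOn (by simp)) p hp).hasFDerivWithinAt
  have hFu : ∀ p ∈ S, DF p (1, 0) =
      g p.1 p.2 • ((Real.cos (νf p.1 p.2), Real.sin (νf p.1 p.2)) : ℝ × ℝ) := by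
    rintro ⟨u, t⟩ hp
    exact (aux_partial_u F _ T u t hp.2 (hFd _ hp)).unique (htang u t hp.2)
  set G : ℝ × ℝ → ℝ := fun p => (DF p (1, 0)).1 * Real.cos (νf p.1 p.2) +
    (DF p (1, 0)).2 * Real.sin (νf p.1 p.2) with hG
  have hGg : ∀ p ∈ S, G p = g p.1 p.2 := by
    intro p hp
    simp only [hG, hFu p hp, Prod.smul_mk, smul_eq_mul]
    have := Real.sin_sq_add_cos_sq (νf p.1 p.2)
    linear_combination g p.1 p.2 * this
  have hDF1 : ContDiffOn ℝ (⊤ : ℕ∞) (fun p => DF p (1, 0)) S :=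
    hDFs.clm_apply contDiffOn_const
  have hGs : ContDiffOn ℝ (⊤ : ℕ∞) G S :=
    (hDF1.fst.mul hνs.cos).add (hDF1.snd.mul hνs.sin)
  have hgc : ContinuousOn (fun p : ℝ × ℝ => g p.1 p.2) S :=
    hGs.continuousOn.congr fun p hp => (hGg p hp).symm
  set DG := fderivWithin ℝ G S with hDG
  have hDGs : ContDiffOn ℝ (⊤ : ℕ∞) DG S := hGs.fderivWithin hU (by simp)
  have hGd : ∀ p ∈ S, HasFDerivWithinAt G (DG p) S p := fun p hp =>
    ((hGs.differentiableOn (by simp)) p hp).hasFDerivWithinAt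
  have hgd : ∀ u, ∀ t ∈ Set.Ico (0:ℝ) T,
      HasDerivWithinAt (fun t => g u t) (DG (u, t) (0, 1)) (Set.Ico 0 T) t := by
    intro u t ht
    have := aux_partial_t G _ T u t (hGd (u, t) ⟨Set.mem_univ _, ht⟩)
    exact this.congr (fun t' ht' => (hGg (u, t') ⟨Set.mem_univ _, ht'⟩).symm)
      (hGg (u, t) ⟨Set.mem_univ _, ht⟩).symm
  have hGc : ContinuousOn (fun p : ℝ × ℝ => DG (p.1, p.2) (0, 1)) S :=
    (hDGs.clm_apply contDiffOn_const).continuousOn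
  have main := aux_diff_int g (fun u t => DG (u, t) (0, 1)) T hT hgd hgc hGc
  have hval : ∀ u, DG (u, 0) (0, 1) = - V u * νu u := by
    intro u
    have hp : ((u, 0) : ℝ × ℝ) ∈ S := ⟨Set.mem_univ _, h0⟩
    -- derivative of the first variation
    have hDD : HasFDerivWithinAt DF (fderivWithin ℝ DF S (u, 0)) S (u, 0) :=
      ((hDFs.differentiableOn (by simp)) _ hp).hasFDerivWithinAt
    have hsymm : IsSymmSndFDerivWithinAt ℝ F S (u, 0) := by
      apply (hxs (u, 0) hp).isSymmSndFDerivWithinAt (n := (⊤ : ℕ∞)) _ hU _ hp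
      · simp only [minSmoothness_of_isRCLikeNormedField]
        exact WithTop.coe_le_coe.2 (le_top : (2 : ℕ∞) ≤ ⊤)
      · rw [hS, interior_prod_eq, closure_prod_eq, interior_univ, closure_univ, interior_Ico,
          closure_Ioo hT.ne]
        exact ⟨Set.mem_univ _, le_rfl, hT.le⟩
    have hs := hsymm (0, 1) (1, 0)
    have ht1 := aux_partial_t DF _ T u 0 hDD
    have hu1 := aux_partial_u DF _ T u 0 h0 hDD
    have ht2 := ht1.clm_apply (hasDerivWithinAt_const 0 _ ((1, 0) : ℝ × ℝ))
    have hu2 := hu1.clm_apply (hasDerivAt_const u ((0, 1) : ℝ × ℝ))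
    simp only [map_zero, add_zero] at ht2 hu2
    have hFt : ∀ u', DF (u', 0) (0, 1) =
        V u' • ((-Real.sin (νf u' 0), Real.cos (νf u' 0)) : ℝ × ℝ) := by
      intro u'
      have a1 := aux_partial_t F _ T u' 0 (hFd (u', 0) ⟨Set.mem_univ _, h0⟩)
      exact (uniqueDiffOn_Ico 0 T 0 h0).eq_deriv _ a1 (hflow u')
    simp_rw [hFt] at hu2
    have hv := (hV u).hasDerivAt
    have hu3 := hv.smul (((hνu u).sin.neg).prodMk ((hνu u).cos))
    have e := hu2.unique hu3
    rw [← hs] at e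
    rw [e] at ht2
    -- derivative of the tangent angle
    have hνd := aux_partial_t (fun p : ℝ × ℝ => νf p.1 p.2) _ T u 0
      ((hνs.differentiableOn (by simp)) _ hp).hasFDerivWithinAt
    have hfst : HasDerivWithinAt (fun t => (DF (u, t) (1, 0)).1) _ (Set.Ico 0 T) 0 :=
      (ContinuousLinearMap.fst ℝ ℝ ℝ).hasFDerivAt.comp_hasDerivWithinAt 0 ht2
    have hsnd : HasDerivWithinAt (fun t => (DF (u, t) (1, 0)).2) _ (Set.Ico 0 T) 0 :=
      (ContinuousLinearMap.snd ℝ ℝ ℝ).hasFDerivAt.comp_hasDerivWithinAt 0 ht2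
    have tot := (hfst.mul hνd.cos).add (hsnd.mul hνd.sin)
    have a2 := aux_partial_t G _ T u 0 (hGd (u, 0) hp)
    have fin := (uniqueDiffOn_Ico 0 T 0 h0).eq_deriv _ a2 tot
    rw [fin, hFu (u, 0) hp]
    simp
    have := Real.sin_sq_add_cos_sq (νf u 0)
    linear_combination (- V u * νu u) * this
  constructor
  · simpa only [hval] using main
  · rw [← continuousOn_univ]
    exact hgc.comp (f := fun u : ℝ => (u, (0:ℝ))) (by fun_prop) (fun u _ => ⟨Set.mem_univ _, h0⟩)

section ident
variable (h h1 h2 : ℝ → ℝ)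

lemma aux_support (hd : ∀ s, HasDerivAt h (h1 s) s) (hd1 : ∀ s, HasDerivAt h1 (h2 s) s)
    (hp : ∀ s, h (s + 2 * π) = h s) (hp1 : ∀ s, h1 (s + 2 * π) = h1 s)
    (hpos : ∀ s, 0 < h s) (hconv : ∀ s, 0 < h s + h2 s) (θ φ : ℝ) :
    h φ * Real.cos (φ - θ) - h1 φ * Real.sin (φ - θ) ≤ h θ := by
  set f : ℝ → ℝ := fun φ => h φ * Real.cos (φ - θ) - h1 φ * Real.sin (φ - θ) with hf
  have hsub : ∀ s : ℝ, HasDerivAt (fun s => s - θ) 1 s := fun s => (hasDerivAt_id s).sub_const θ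
  have hfd : ∀ s, HasDerivAt f (-(h s + h2 s) * Real.sin (s - θ)) s := by
    intro s
    refine (((hd s).mul (hsub s).cos).sub ((hd1 s).mul (hsub s).sin)).congr_deriv ?_
    ring
  have hfp : Function.Periodic f (2 * π) := by
    intro s
    simp only [hf, hp, hp1]
    rw [show s + 2 * π - θ = s - θ + 2 * π by ring, Real.cos_add_two_pi, Real.sin_add_two_pi]
  have hfc : Continuous f := continuous_iff_continuousAt.2 fun s => (hfd s).continuousAt
  obtain ⟨φ₀, -, hmax⟩ := (isCompact_Icc (a := (0:ℝ)) (b := 2 * π)).exists_isMaxOn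
    (Set.nonempty_Icc.2 (by positivity)) hfc.continuousOn
  have hglob : ∀ s, f s ≤ f φ₀ := by
    intro s
    obtain ⟨s', hs', e⟩ := hfp.exists_mem_Ico₀ (by positivity) s
    rw [e]; exact hmax ⟨hs'.1, hs'.2.le⟩
  have hz : -(h φ₀ + h2 φ₀) * Real.sin (φ₀ - θ) = 0 :=
    (IsLocalMax.hasDerivAt_eq_zero (Filter.Eventually.of_forall hglob) (hfd φ₀))
  have hsin : Real.sin (φ₀ - θ) = 0 := by
    rcases mul_eq_zero.1 hz with h' | h'
    · linarith [hconv φ₀]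
    · exact h'
  refine (hglob φ).trans ?_
  simp only [hf, hsin, mul_zero, sub_zero]
  have hsc := Real.sin_sq_add_cos_sq (φ₀ - θ)
  rw [hsin] at hsc
  have hcc : (Real.cos (φ₀ - θ) - 1) * (Real.cos (φ₀ - θ) + 1) = 0 := by linarith
  rcases mul_eq_zero.1 hcc with h' | h'
  · have h1' : Real.cos (φ₀ - θ) = 1 := by linarith
    obtain ⟨n, hn⟩ := (Real.cos_eq_one_iff _).1 h1'
    have : φ₀ = θ + n * (2 * π) := by linarith
    have hper : Function.Periodic h (2 * π) := hp
    rw [h1', mul_one, this, hper.int_mul n]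
  · have h1' : Real.cos (φ₀ - θ) = -1 := by linarith
    rw [h1']; linarith [hpos φ₀, hpos θ]

lemma aux_ident (hd : ∀ s, HasDerivAt h (h1 s) s) (hd1 : ∀ s, HasDerivAt h1 (h2 s) s)
    (hp : ∀ s, h (s + 2 * π) = h s) (hp1 : ∀ s, h1 (s + 2 * π) = h1 s)
    (hpos : ∀ s, 0 < h s) (hconv : ∀ s, 0 < h s + h2 s)
    (w : ℝ → ℝ × ℝ) (hw : ∀ s, w s = (h s * Real.sin s + h1 s * Real.cos s,
      - h s * Real.cos s + h1 s * Real.sin s))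
    (y : ℝ → ℝ × ℝ) (g ν : ℝ → ℝ) (hνc : Continuous ν) (hg : ∀ u, 0 < g u)
    (hy : ∀ u, HasDerivAt y (g u • ((Real.cos (ν u), Real.sin (ν u)) : ℝ × ℝ)) u)
    (hr : Set.range y = Set.range w)
    (hA : 0 < ∫ u in (0:ℝ)..1,
      ((y u).1 * (g u * Real.sin (ν u)) - (y u).2 * (g u * Real.cos (ν u)))) :
    ∀ u, y u = w (ν u) := by
  have hc : Continuous h := continuous_iff_continuousAt.2 fun s => (hd s).continuousAt
  have hc1 : Continuous h1 := continuous_iff_continuousAt.2 fun s => (hd1 s).continuousAt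
  have hyc : Continuous y := continuous_iff_continuousAt.2 fun s => (hy s).continuousAt
  have hwc : Continuous w := by
    rw [show w = _ from funext hw]; fun_prop
  have hwp : Function.Periodic w (2 * π) := by
    intro s; rw [hw, hw, hp, hp1, Real.sin_add_two_pi, Real.cos_add_two_pi]
  have hwsup : ∀ φ θ, (w φ).1 * Real.sin θ - (w φ).2 * Real.cos θ =
      h φ * Real.cos (φ - θ) - h1 φ * Real.sin (φ - θ) := by
    intro φ θ; rw [hw, Real.cos_sub, Real.sin_sub]; ring
  have alt : ∀ u, y u = w (ν u) ∨ y u = w (ν u + π) := by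
    intro u
    obtain ⟨θ, hθ⟩ : y u ∈ Set.range w := hr ▸ Set.mem_range_self u
    have hmax : ∀ u', (y u').1 * Real.sin θ - (y u').2 * Real.cos θ ≤
        (y u).1 * Real.sin θ - (y u).2 * Real.cos θ := by
      intro u'
      obtain ⟨φ, hφ⟩ : y u' ∈ Set.range w := hr ▸ Set.mem_range_self u'
      rw [← hφ, ← hθ, hwsup, hwsup]
      have := aux_support h h1 h2 hd hd1 hp hp1 hpos hconv θ φ
      simpa using this
    have d1 : HasDerivAt (fun u => (y u).1) (g u * Real.cos (ν u)) u :=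
      (ContinuousLinearMap.fst ℝ ℝ ℝ).hasFDerivAt.comp_hasDerivAt u (hy u)
    have d2 : HasDerivAt (fun u => (y u).2) (g u * Real.sin (ν u)) u :=
      (ContinuousLinearMap.snd ℝ ℝ ℝ).hasFDerivAt.comp_hasDerivAt u (hy u)
    have hz := IsLocalMax.hasDerivAt_eq_zero (Filter.Eventually.of_forall hmax)
      ((d1.mul_const (Real.sin θ)).sub (d2.mul_const (Real.cos θ)))
    have hsin : Real.sin (ν u - θ) = 0 := by
      have : g u * Real.sin (ν u - θ) = 0 := by rw [Real.sin_sub]; linarith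
      rcases mul_eq_zero.1 this with h' | h'
      · linarith [hg u]
      · exact h'
    have hsc := Real.sin_sq_add_cos_sq (ν u - θ)
    rw [hsin] at hsc
    have hcc : (Real.cos (ν u - θ) - 1) * (Real.cos (ν u - θ) + 1) = 0 := by linarith
    rcases mul_eq_zero.1 hcc with h' | h'
    · left
      obtain ⟨n, hn⟩ := (Real.cos_eq_one_iff (ν u - θ)).1 (by linarith)
      rw [show ν u = θ + n * (2 * π) by linarith, hwp.int_mul n, hθ]
    · right
      obtain ⟨n, hn⟩ := (Real.cos_eq_one_iff (ν u + π - θ)).1 (by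
        rw [show ν u + π - θ = ν u - θ + π by ring, Real.cos_add_pi]; linarith)
      rw [show ν u + π = θ + n * (2 * π) by linarith, hwp.int_mul n, hθ]
  have pE : ∀ u, y u = w (ν u) → 0 < (y u).1 * Real.sin (ν u) - (y u).2 * Real.cos (ν u) := by
    intro u e; rw [e, hwsup]; simpa using hpos _
  have pF : ∀ u, y u = w (ν u + π) → (y u).1 * Real.sin (ν u) - (y u).2 * Real.cos (ν u) < 0 := by
    intro u e; rw [e, hwsup]; simpa using hpos _
  have hcl : IsClopen {u | y u = w (ν u)} := by
    refine ⟨isClosed_eq hyc (hwc.comp hνc), ?_⟩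
    rw [← isClosed_compl_iff]
    have : {u | y u = w (ν u)}ᶜ = {u | y u = w (ν u + π)} := by
      ext u
      simp only [Set.mem_compl_iff, Set.mem_ofPred_eq]
      constructor
      · intro h'; exact (alt u).resolve_left h'
      · intro h' h''; linarith [pE u h'', pF u h']
    rw [this]
    exact isClosed_eq hyc (hwc.comp (hνc.add continuous_const))
  rcases isClopen_iff.1 hcl with h' | h'
  · exfalso
    have hF : ∀ u, y u = w (ν u + π) := fun u =>
      (alt u).resolve_left (fun e => by
        have : u ∈ ({u | y u = w (ν u)} : Set ℝ) := e
        rw [h'] at this; exact this)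
    have : 0 ≤ ∫ u in (0:ℝ)..1,
      -((y u).1 * (g u * Real.sin (ν u)) - (y u).2 * (g u * Real.cos (ν u))) := by
      apply intervalIntegral.integral_nonneg zero_le_one
      intro u _
      have := mul_pos (hg u) (neg_pos.2 (pF u (hF u)))
      linarith
    rw [intervalIntegral.integral_neg] at this
    linarith
  · intro u
    have : u ∈ ({u | y u = w (ν u)} : Set ℝ) := by rw [h']; trivial
    exact this

lemma aux_speed (hd : ∀ s, HasDerivAt h (h1 s) s) (hd1 : ∀ s, HasDerivAt h1 (h2 s) s)
    (w : ℝ → ℝ × ℝ) (hw : ∀ s, w s = (h s * Real.sin s + h1 s * Real.cos s,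
      - h s * Real.cos s + h1 s * Real.sin s))
    (y : ℝ → ℝ × ℝ) (g ν νu : ℝ → ℝ)
    (hν : ∀ u, HasDerivAt ν (νu u) u)
    (hy : ∀ u, HasDerivAt y (g u • ((Real.cos (ν u), Real.sin (ν u)) : ℝ × ℝ)) u)
    (he : ∀ u, y u = w (ν u)) (u : ℝ) : g u = (h (ν u) + h2 (ν u)) * νu u := by
  have d1 : HasDerivAt (fun u => (y u).1) (g u * Real.cos (ν u)) u :=
    (ContinuousLinearMap.fst ℝ ℝ ℝ).hasFDerivAt.comp_hasDerivAt u (hy u)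
  have d2 : HasDerivAt (fun u => (y u).2) (g u * Real.sin (ν u)) u :=
    (ContinuousLinearMap.snd ℝ ℝ ℝ).hasFDerivAt.comp_hasDerivAt u (hy u)
  simp only [he, hw] at d1 d2
  have k0 := (hd (ν u)).comp u (hν u)
  have k1 := (hd1 (ν u)).comp u (hν u)
  have e1 := d1.unique ((k0.mul (hν u).sin).add (k1.mul (hν u).cos))
  have e2 := d2.unique ((k0.neg.mul (hν u).cos).add (k1.mul (hν u).sin))
  simp only [Function.comp, Pi.neg_apply] at e1 e2
  have := Real.sin_sq_add_cos_sq (ν u)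
  linear_combination Real.cos (ν u) * e1 + Real.sin (ν u) * e2 + ((h (ν u) + h2 (ν u)) * νu u - g u) * this

end ident

/-- change of variables `θ = ν(u)` over a period -/
lemma aux_subst (ν νu φ : ℝ → ℝ) (hν : ∀ u, HasDerivAt ν (νu u) u) (hνu : Continuous νu)
    (hφ : Continuous φ) (hφp : ∀ s, φ (s + 2 * π) = φ s) (hper : ν 1 = ν 0 + 2 * π) :
    ∫ u in (0:ℝ)..1, φ (ν u) * νu u = ∫ s in (0:ℝ)..(2 * π), φ s := by
  have := intervalIntegral.integral_comp_mul_deriv (a := 0) (b := 1) (f := ν) (f' := νu) (g := φ)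
    (fun u _ => hν u) hνu.continuousOn hφ
  simp only [Function.comp] at this
  rw [this, hper]
  have hP : Function.Periodic φ (2 * π) := hφp
  simpa using hP.intervalIntegral_add_eq (ν 0) 0

/-- Initial length increase for the anisoperimetric ratio gradient flow started from the
modified Wulff shape `∂W_{σ̄}`, `σ̄ = a·σ + b`:
`(d/dt) L(t)|₀ = (b/a)·(∫_{∂W_{σ̄}} k² ds − π·L(∂W_{σ̄})/|W_{σ̄}|) > 0`, where
`∫_{∂W_{σ̄}} k² ds = ∫₀^{2π} dν/(σ̄+σ̄'')` and `L(∂W_{σ̄}) = ∫₀^{2π} σ̄ dν`. -/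
theorem initial_length_increase_anisoperimetric_flow
    (σ : ℝ → ℝ)
    (hσs : ContDiff ℝ (⊤ : ℕ∞) σ) (hσper : ∀ ν, σ (ν + 2 * π) = σ ν)
    (hσpos : ∀ ν, 0 < σ ν) (hσconv : ∀ ν, 0 < σ ν + deriv (deriv σ) ν)
    -- σ is nonconstant and not of the form c₀ + c₁ cos ν + c₂ sin ν
    (hnc : ¬∃ c : ℝ, ∀ s, σ s = c)
    (hnr : ¬∃ c₀ c₁ c₂ : ℝ, ∀ s, σ s = c₀ + c₁ * Real.cos s + c₂ * Real.sin s)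
    (a b : ℝ) (ha : 0 < a) (hb : 0 < b)
    (T : ℝ) (hT : 0 < T) (x : ℝ → ℝ → ℝ × ℝ) (g νf νu : ℝ → ℝ → ℝ)
    (hxs : ContDiffOn ℝ (⊤ : ℕ∞) (fun p : ℝ × ℝ => x p.1 p.2)
      ((Set.univ : Set ℝ) ×ˢ Set.Ico (0:ℝ) T))
    (hνs : ContDiffOn ℝ (⊤ : ℕ∞) (fun p : ℝ × ℝ => νf p.1 p.2)
      ((Set.univ : Set ℝ) ×ˢ Set.Ico (0:ℝ) T))
    (hper : ∀ u, ∀ t ∈ Set.Ico (0:ℝ) T, x (u + 1) t = x u t)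
    (hνper : ∀ u, ∀ t ∈ Set.Ico (0:ℝ) T, νf (u + 1) t = νf u t + 2 * π)
    (hg : ∀ u, ∀ t ∈ Set.Ico (0:ℝ) T, 0 < g u t)
    (htang : ∀ u, ∀ t ∈ Set.Ico (0:ℝ) T,
      HasDerivAt (fun u' => x u' t)
        (g u t • ((Real.cos (νf u t), Real.sin (νf u t)) : ℝ × ℝ)) u)
    (hνu : ∀ u, ∀ t ∈ Set.Ico (0:ℝ) T, HasDerivAt (fun u' => νf u' t) (νu u t) u)
    (hinj : ∀ t ∈ Set.Ico (0:ℝ) T, Set.InjOn (fun u => x u t) (Set.Ico 0 1))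
    (hA : ∀ t ∈ Set.Ico (0:ℝ) T, 0 < areaF x g νf t)
    -- the anisoperimetric ratio gradient flow equation `∂_t x = (k_σ − L_σ/(2A))·N`
    (hflow : ∀ u, ∀ t ∈ Set.Ico (0:ℝ) T,
      HasDerivWithinAt (fun t' => x u t')
        ((((σ (νf u t) + deriv (deriv σ) (νf u t)) * (νu u t / g u t) -
            aLenF σ g νf t / (2 * areaF x g νf t)) •
          ((-Real.sin (νf u t), Real.cos (νf u t)) : ℝ × ℝ)))
        (Set.Ico 0 T) t)
    -- the initial curve parameterizes the Wulff boundary ∂W_{σ̄}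
    (hinit : Set.range (fun u => x u 0) = Set.range (wulffPoint (modAniso σ a b))) :
    HasDerivWithinAt (lenF g)
      ((b / a) *
        ((∫ s in (0:ℝ)..(2 * π),
            1 / (modAniso σ a b s + deriv (deriv (modAniso σ a b)) s)) -
          π * (∫ s in (0:ℝ)..(2 * π), modAniso σ a b s) / wulffArea (modAniso σ a b)))
      (Set.Ico 0 T) 0 ∧
    0 < (b / a) *
        ((∫ s in (0:ℝ)..(2 * π),
            1 / (modAniso σ a b s + deriv (deriv (modAniso σ a b)) s)) -
          π * (∫ s in (0:ℝ)..(2 * π), modAniso σ a b s) / wulffArea (modAniso σ a b)) := by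
  have hpi := Real.pi_pos
  have h0 : (0:ℝ) ∈ Set.Ico (0:ℝ) T := ⟨le_rfl, hT⟩
  -- derivatives of σ
  set σ1 := deriv σ with hσ1
  set σ2 := deriv σ1 with hσ2
  have s1 : ContDiff ℝ (⊤ : ℕ∞) σ1 := by
    have := (contDiff_infty_iff_deriv (𝕜 := ℝ) (f := σ)).1 (by exact_mod_cast hσs)
    exact_mod_cast this.2
  have s2 : ContDiff ℝ (⊤ : ℕ∞) σ2 := by
    have := (contDiff_infty_iff_deriv (𝕜 := ℝ) (f := σ1)).1 (by exact_mod_cast s1)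
    exact_mod_cast this.2
  have dσ : ∀ s, HasDerivAt σ (σ1 s) s := fun s =>
    ((hσs.differentiable (by simp)) s).hasDerivAt
  have dσ1 : ∀ s, HasDerivAt σ1 (σ2 s) s := fun s =>
    ((s1.differentiable (by simp)) s).hasDerivAt
  have dσ2 : Differentiable ℝ σ2 := s2.differentiable (by simp)
  have c0 : Continuous σ := hσs.continuous
  have c2 : Continuous σ2 := s2.continuous
  have p1 : ∀ s, σ1 (s + 2 * π) = σ1 s := by
    intro s
    rw [hσ1, ← deriv_comp_add_const, show (fun x => σ (x + 2 * π)) = σ from funext hσper]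
  have p2 : ∀ s, σ2 (s + 2 * π) = σ2 s := by
    intro s
    rw [hσ2, ← deriv_comp_add_const, show (fun x => σ1 (x + 2 * π)) = σ1 from funext p1]
  -- the modified anisotropy
  set h := modAniso σ a b with hh
  have hval : ∀ s, h s = a * σ s + b := fun s => rfl
  have dh : ∀ s, HasDerivAt h (a * σ1 s) s := fun s => ((dσ s).const_mul a).add_const b
  have dh1 : ∀ s, HasDerivAt (fun s => a * σ1 s) (a * σ2 s) s := fun s => (dσ1 s).const_mul a
  have eh1 : deriv h = fun s => a * σ1 s := funext fun s => (dh s).deriv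
  have eh2 : deriv (deriv h) = fun s => a * σ2 s := by
    rw [eh1]; exact funext fun s => (dh1 s).deriv
  have hhp : ∀ s, h (s + 2 * π) = h s := fun s => by rw [hval, hval, hσper]
  have hhp1 : ∀ s, a * σ1 (s + 2 * π) = a * σ1 s := fun s => by rw [p1]
  have hhp2 : ∀ s, a * σ2 (s + 2 * π) = a * σ2 s := fun s => by rw [p2]
  have hpos : ∀ s, 0 < h s := fun s => by
    have := hσpos s
    rw [hval]; positivity
  have hconv : ∀ s, 0 < h s + a * σ2 s := fun s => by
    have := mul_pos ha (hσconv s)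
    rw [hval]; linarith
  have ch : Continuous h := continuous_iff_continuousAt.2 fun s => (dh s).continuousAt
  have ch2 : Continuous fun s => a * σ2 s := by fun_prop
  have hWA : wulffArea h = (1 / 2) * ∫ s in (0:ℝ)..(2 * π), h s * (h s + a * σ2 s) := by
    rw [wulffArea, eh2]
  rw [eh2]
  have hWpos : 0 < wulffArea h := by
    rw [hWA]
    have : 0 < ∫ s in (0:ℝ)..(2 * π), h s * (h s + a * σ2 s) :=
      intervalIntegral.intervalIntegral_pos_of_pos
        (Continuous.intervalIntegrable (by fun_prop) _ _)
        (fun s => mul_pos (hpos s) (hconv s)) (by linarith)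
    positivity
  have hRint : ∫ s in (0:ℝ)..(2 * π), (h s + a * σ2 s) = ∫ s in (0:ℝ)..(2 * π), h s := by
    rw [intervalIntegral.integral_add (ch.intervalIntegrable _ _) (ch2.intervalIntegrable _ _),
      aux_int_deriv _ _ dh1 ch2 (by simpa using hhp1 0), add_zero]
  -- positivity (Gage's inequality)
  have hpositive : 0 < (b / a) * ((∫ s in (0:ℝ)..(2 * π), 1 / (h s + a * σ2 s)) -
      π * (∫ s in (0:ℝ)..(2 * π), h s) / wulffArea h) := by
    apply mul_pos (div_pos hb ha)
    rw [sub_pos]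
    apply aux_gage (fun s => h s + a * σ2 s) (by fun_prop) hconv _ _ _ hRint hWpos
    · intro m
      have := aux_kernel_ineq_shift h _ _ dh dh1 ch2 hhp hhp1 hhp2 m
      rw [hWA]
      refine le_trans (le_of_eq ?_) this
      ring
    · intro c
      by_contra! H
      apply hnr
      have Hall : ∀ s, h s + a * σ2 s = c := by
        intro s
        have hP : Function.Periodic (fun s => h s + a * σ2 s) (2 * π) := fun s => by
          simp only [hhp, hhp2]
        obtain ⟨s', hs', e⟩ := hP.exists_mem_Ico₀ (by positivity) s
        rw [e]; exact H s' ⟨hs'.1, hs'.2.le⟩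
      refine aux_ode σ σ1 σ2 dσ dσ1 ((c - b) / a) (fun s => ?_)
      rw [eq_div_iff ha.ne', ← Hall s, hval]; ring
  refine ⟨?_, hpositive⟩
  -- identification of the initial curve
  have hw : ∀ s, wulffPoint h s = (h s * Real.sin s + a * σ1 s * Real.cos s,
      - h s * Real.cos s + a * σ1 s * Real.sin s) := by
    intro s
    rw [wulffPoint, eh1]
    simp
  have hν0 : ∀ u, HasDerivAt (fun u => νf u 0) (νu u 0) u := fun u => hνu u 0 h0
  have cν : Continuous fun u => νf u 0 :=
    continuous_iff_continuousAt.2 fun u => (hν0 u).continuousAt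
  have hA0 := hA 0 h0
  have hid := aux_ident h _ _ dh dh1 hhp hhp1 hpos hconv (wulffPoint h) hw (fun u => x u 0)
    (fun u => g u 0) (fun u => νf u 0) cν (fun u => hg u 0 h0) (fun u => htang u 0 h0) hinit
    (by unfold areaF at hA0; linarith)
  have hsp := aux_speed h _ _ dh dh1 (wulffPoint h) hw (fun u => x u 0)
    (fun u => g u 0) (fun u => νf u 0) (fun u => νu u 0) hν0 (fun u => htang u 0 h0) hid
  have hquot : ∀ u, νu u 0 / g u 0 = 1 / (h (νf u 0) + a * σ2 (νf u 0)) := by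
    intro u
    rw [div_eq_div_iff (hg u 0 h0).ne' (hconv _).ne', hsp u]; ring
  set c := aLenF σ g νf 0 / (2 * areaF x g νf 0) with hc
  obtain ⟨hder, cg⟩ := aux_flow T hT x g νf (fun u => νu u 0)
    (fun u => (σ (νf u 0) + σ2 (νf u 0)) * (1 / (h (νf u 0) + a * σ2 (νf u 0))) - c)
    hxs hνs htang hν0
    (by
      intro u
      have d0 : DifferentiableAt ℝ (fun u => νf u 0) u := (hν0 u).differentiableAt
      have d1 : DifferentiableAt ℝ (fun u => σ (νf u 0)) u :=
        (dσ _).differentiableAt.comp u d0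
      have d2 : DifferentiableAt ℝ (fun u => σ2 (νf u 0)) u := (dσ2 _).comp u d0
      have d3 : DifferentiableAt ℝ (fun u => h (νf u 0)) u :=
        (dh _).differentiableAt.comp u d0
      exact ((d1.add d2).mul ((differentiableAt_const 1).div (d3.add (d2.const_mul a))
        (hconv _).ne')).sub_const c)
    (by
      intro u
      have := hflow u 0 h0
      rwa [hquot u] at this)
  have cνu : Continuous fun u => νu u 0 := by
    have : (fun u => νu u 0) = fun u => g u 0 / (h (νf u 0) + a * σ2 (νf u 0)) := by
      ext u; rw [eq_div_iff (hconv _).ne', hsp u]; ring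
    rw [this]
    exact cg.div (by fun_prop) fun u => (hconv _).ne'
  have hν1 : νf 1 0 = νf 0 0 + 2 * π := by simpa using hνper 0 0 h0
  -- anisotropic length and area of the initial curve
  have hLσ : aLenF σ g νf 0 = ∫ s in (0:ℝ)..(2 * π), σ s * (h s + a * σ2 s) := by
    rw [← aux_subst (fun u => νf u 0) (fun u => νu u 0) (fun s => σ s * (h s + a * σ2 s)) hν0 cνu
      (by fun_prop) (fun s => by rw [hσper, hhp, hhp2]) hν1, aLenF]
    congr 1; ext u
    rw [hsp u]; ring
  have hAr : areaF x g νf 0 = wulffArea h := by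
    rw [hWA, ← aux_subst (fun u => νf u 0) (fun u => νu u 0) (fun s => h s * (h s + a * σ2 s)) hν0
      cνu (by fun_prop) (fun s => by rw [hhp, hhp2]) hν1, areaF]
    congr 2; ext u
    rw [hid u, hw, hsp u]
    have := Real.sin_sq_add_cos_sq (νf u 0)
    simp only
    linear_combination (h (νf u 0) * (h (νf u 0) + a * σ2 (νf u 0)) * νu u 0) * this
  have hLσ2 : a * aLenF σ g νf 0 = 2 * wulffArea h - b * ∫ s in (0:ℝ)..(2 * π), h s := by
    rw [hLσ, hWA, ← hRint, ← intervalIntegral.integral_const_mul,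
      ← intervalIntegral.integral_const_mul b]
    have : ∀ I : ℝ, 2 * (1 / 2 * I) = I := fun I => by ring
    rw [this, ← intervalIntegral.integral_sub]
    · congr 1; ext s; rw [hval]; ring
    all_goals apply Continuous.intervalIntegrable; fun_prop
  have cR : Continuous fun s => 1 / (h s + a * σ2 s) :=
    continuous_const.div (by fun_prop) fun s => (hconv s).ne'
  have hfin : ∫ u in (0:ℝ)..1,
      -((σ (νf u 0) + σ2 (νf u 0)) * (1 / (h (νf u 0) + a * σ2 (νf u 0))) - c) * νu u 0 =
      (b / a) * (∫ s in (0:ℝ)..(2 * π), 1 / (h s + a * σ2 s)) + 2 * π * (c - 1 / a) := by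
    rw [aux_subst (fun u => νf u 0) (fun u => νu u 0)
      (fun s => -((σ s + σ2 s) * (1 / (h s + a * σ2 s)) - c)) hν0 cνu
      (by fun_prop) (fun s => by rw [hσper, p2, hhp]) hν1]
    have : ∀ s, -((σ s + σ2 s) * (1 / (h s + a * σ2 s)) - c) =
        (b / a) * (1 / (h s + a * σ2 s)) + (c - 1 / a) := by
      intro s
      have h3 := (hconv s).ne'
      have hq : σ s + σ2 s = ((h s + a * σ2 s) - b) / a := by
        rw [eq_div_iff ha.ne', hval]; ring
      rw [hq]
      generalize h s + a * σ2 s = R at h3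
      field_simp
      ring
    simp_rw [this]
    rw [intervalIntegral.integral_add, intervalIntegral.integral_const_mul]
    · simp; ring
    all_goals apply Continuous.intervalIntegrable; fun_prop
  rw [hfin] at hder
  refine hder.congr_deriv ?_
  have hcv : c = (2 * wulffArea h - b * ∫ s in (0:ℝ)..(2 * π), h s) / (a * (2 * wulffArea h)) := by
    rw [hc, hAr, ← hLσ2]; field_simp
  rw [hcv]
  have := hWpos.ne'
  field_simp
  ring
end

section
/- Initial area decrease for the anisoperimetric ratio gradient flow started from a modified Wulff shape: let σ be a nonconstant anisotropy function which is not of the form σ(ν) = c₀ + c₁ cos ν + c₂ sin ν (so that the associated Wulff boundaries are not round circles), let a, b > 0 be constants with a/b = √π/√|W_σ|, and set σ̄ = a·σ + b. Let x : ℝ × [0,T) → ℝ² be a smooth family of closed curves evolving by the anisoperimetric ratio gradient flow ∂_t x = (k_σ − L_σ(t)/(2A(t)))·N whose initial curve x(·,0) parameterizes the Wulff boundary ∂W_{σ̄}, i.e. the image of x(·,0) equals {−σ̄(ν)(−sin ν, cos ν) + σ̄'(ν)(cos ν, sin ν) : ν ∈ ℝ}. Then (d/dt) A(t)|_{t=0}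 = √(π·|W_σ|) − (1/2)·L(∂W_σ) < 0. -/
open Real

theorem aux_wirt (f f' : ℝ → ℝ) (hf : ∀ s, HasDerivAt f (f' s) s) (hf' : Continuous f')
    (hp : f (2 * π) = f 0) (hm : ∫ s in (0:ℝ)..(2 * π), f s = 0) :
    ∫ s in (0:ℝ)..(2 * π), f s ^ 2 ≤ ∫ s in (0:ℝ)..(2 * π), f' s ^ 2 := by
  have hpi : (0:ℝ) < 2 * π := by positivity
  have hfc : Continuous f := continuous_iff_continuousAt.2 fun s => (hf s).continuousAt
  have mem : ∀ h : ℝ → ℝ, Continuous h → MeasureTheory.MemLp (fun s => (h s : ℂ)) 2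
      (MeasureTheory.volume.restrict (Set.Ioc 0 (2 * π))) := by
    intro h hc
    have hc' : Continuous (fun s => (h s : ℂ)) := Complex.continuous_ofReal.comp hc
    obtain ⟨C, hC⟩ := (isCompact_Icc (a := (0:ℝ)) (b := 2 * π)).exists_bound_of_continuousOn
      hc'.continuousOn
    refine MeasureTheory.MemLp.of_bound hc'.aestronglyMeasurable C ?_
    refine (MeasureTheory.ae_restrict_iff' measurableSet_Ioc).2 (Filter.Eventually.of_forall ?_)
    intro s hs
    exact hC s ⟨hs.1.le, hs.2⟩
  have h1 := hasSum_sq_fourierCoeffOn hpi (mem f hfc)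
  have h2 := hasSum_sq_fourierCoeffOn hpi (mem f' hf')
  have hle := hasSum_le (fun n => ?_) h1 h2
  · simp only [sub_zero, smul_eq_mul, Complex.norm_real, norm_eq_abs, sq_abs] at hle
    exact le_of_mul_le_mul_left hle (by positivity)
  · by_cases hn : n = 0
    · subst hn
      have : fourierCoeffOn hpi (fun s => (f s : ℂ)) 0 = 0 := by
        rw [fourierCoeffOn_eq_integral]
        simp [intervalIntegral.integral_ofReal, hm]
      rw [this]; simp
    · have key := fourierCoeffOn_of_hasDerivAt hpi (f := fun s => (f s : ℂ))
        (f' := fun s => (f' s : ℂ)) hn (fun s _ => (hf s).ofReal_comp)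
        ((Complex.continuous_ofReal.comp hf').intervalIntegrable _ _)
      rw [key, hp]
      have hn1 : (1:ℝ) ≤ |(n:ℝ)| := by exact_mod_cast Int.one_le_abs hn
      have : ‖1 / (-2 * (π:ℂ) * Complex.I * n) * (fourier (-n) ((0:ℝ) : AddCircle (2 * π - 0)) *
          ((f 0 : ℂ) - f 0) - (((2 * π : ℝ) : ℂ) - ((0:ℝ):ℂ)) *
            fourierCoeffOn hpi (fun s => (f' s : ℂ)) n)‖
          = ‖fourierCoeffOn hpi (fun s => (f' s : ℂ)) n‖ / |(n:ℝ)| := by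
        simp [abs_of_pos Real.pi_pos]
        field_simp
      rw [this]
      gcongr
      exact div_le_self (norm_nonneg _) hn1

theorem aux_strict (f f1 f2 f3 : ℝ → ℝ) (h0 : ∀ s, HasDerivAt f (f1 s) s)
    (h1 : ∀ s, HasDerivAt f1 (f2 s) s) (h2 : ∀ s, HasDerivAt f2 (f3 s) s) (h3 : Continuous f3)
    (p0 : f (2 * π) = f 0) (p1 : f1 (2 * π) = f1 0) (p2 : f2 (2 * π) = f2 0)
    (hm : ∫ s in (0:ℝ)..(2 * π), f s = 0)
    (hQ : ∫ s in (0:ℝ)..(2 * π), f1 s ^ 2 ≤ ∫ s in (0:ℝ)..(2 * π), f s ^ 2) :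
    ∀ s ∈ Set.Icc (0:ℝ) (2 * π), f2 s + f s = 0 := by
  have hpi : (0:ℝ) < 2 * π := by positivity
  have c0 : Continuous f := continuous_iff_continuousAt.2 fun s => (h0 s).continuousAt
  have c1 : Continuous f1 := continuous_iff_continuousAt.2 fun s => (h1 s).continuousAt
  have c2 : Continuous f2 := continuous_iff_continuousAt.2 fun s => (h2 s).continuousAt
  have ii : ∀ h : ℝ → ℝ, Continuous h → IntervalIntegrable h MeasureTheory.volume 0 (2 * π) :=
    fun h hc => hc.intervalIntegrable _ _
  set G := ∫ s in (0:ℝ)..(2 * π), (f2 s + f s) ^ 2 with hG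
  have im2 : ∫ s in (0:ℝ)..(2 * π), f2 s = 0 := by
    rw [intervalIntegral.integral_eq_sub_of_hasDerivAt (fun s _ => h1 s) (ii _ c2), p1, sub_self]
  have mg : ∫ s in (0:ℝ)..(2 * π), (f2 s + f s) = 0 := by
    rw [intervalIntegral.integral_add (ii _ c2) (ii _ c0), im2, hm, add_zero]
  have dg : ∀ s, HasDerivAt (fun s => f2 s + f s) (f3 s + f1 s) s := fun s => (h2 s).add (h0 s)
  have qg := aux_wirt _ _ dg (h3.add c1) (by simp [p0, p2]) mg
  have ibp : ∫ s in (0:ℝ)..(2 * π), f1 s * (f3 s + f1 s) =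
      - ∫ s in (0:ℝ)..(2 * π), f2 s * (f2 s + f s) := by
    rw [intervalIntegral.integral_mul_deriv_eq_deriv_mul (fun s _ => h1 s) (fun s _ => dg s)
      (ii _ c2) (ii _ (h3.add c1)), p0, p1, p2]
    ring
  have hB : ∫ s in (0:ℝ)..(2 * π), (f1 s * (f3 s + f1 s)) =
      (∫ s in (0:ℝ)..(2 * π), f s * (f2 s + f s)) - G := by
    rw [ibp, hG, ← intervalIntegral.integral_sub (ii _ (by fun_prop)) (ii _ (by fun_prop)),
      ← intervalIntegral.integral_neg]
    congr 1; ext s; ring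
  have main : ∀ e : ℝ, 2 * e * G ≤ e ^ 2 * ((∫ s in (0:ℝ)..(2 * π), (f3 s + f1 s) ^ 2) - G) := by
    intro e
    have w := aux_wirt (fun s => f s + e * (f2 s + f s)) (fun s => f1 s + e * (f3 s + f1 s))
      (fun s => (h0 s).add ((dg s).const_mul e)) (by fun_prop) (by simp [p0, p2]) (by
        rw [intervalIntegral.integral_add (ii _ c0) (ii _ (by fun_prop)),
          intervalIntegral.integral_const_mul, hm, mg]; simp)
    have ex : ∀ p q : ℝ → ℝ, Continuous p → Continuous q →
        ∫ s in (0:ℝ)..(2 * π), (p s + e * q s) ^ 2 = (∫ s in (0:ℝ)..(2 * π), p s ^ 2) +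
          (2 * e) * (∫ s in (0:ℝ)..(2 * π), p s * q s) +
          e ^ 2 * ∫ s in (0:ℝ)..(2 * π), q s ^ 2 := by
      intro p q hp hq
      rw [← intervalIntegral.integral_const_mul, ← intervalIntegral.integral_const_mul,
        ← intervalIntegral.integral_add (ii _ (by fun_prop)) (ii _ (by fun_prop)),
        ← intervalIntegral.integral_add (ii _ (by fun_prop)) (ii _ (by fun_prop))]
      congr 1; ext s; ring
    rw [ex f (fun s => f2 s + f s) c0 (by fun_prop),
      ex f1 (fun s => f3 s + f1 s) c1 (by fun_prop), hB, ← hG] at w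
    nlinarith
  have hGle : G ≤ 0 := by
    by_contra hpos
    push Not at hpos
    rw [← hG] at qg
    set q := (∫ s in (0:ℝ)..(2 * π), (f3 s + f1 s) ^ 2) - G with hq
    have hq0 : 0 ≤ q := by linarith
    have := main (G / (q + 1))
    have e1 : (G / (q + 1)) * (q + 1) = G := by field_simp
    have e0 : 0 < G / (q + 1) := by positivity
    nlinarith
  intro s hs
  by_contra hne
  have := intervalIntegral.integral_pos (f := fun s => (f2 s + f s) ^ 2) hpi
    (by fun_prop) (fun _ _ => sq_nonneg _) ⟨s, hs, by positivity⟩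
  linarith

theorem aux_isop (σ : ℝ → ℝ)
    (hσs : ContDiff ℝ (⊤ : ℕ∞) σ) (hσper : ∀ ν, σ (ν + 2 * π) = σ ν)
    (hnr : ¬∃ c₀ c₁ c₂ : ℝ, ∀ s, σ s = c₀ + c₁ * Real.cos s + c₂ * Real.sin s) :
    2 * π * (∫ ν in (0:ℝ)..(2 * π), σ ν * (σ ν + deriv (deriv σ) ν)) <
      (∫ s in (0:ℝ)..(2 * π), σ s) ^ 2 := by
  have hpi : (0:ℝ) < 2 * π := by positivity
  have s1 : ContDiff ℝ (⊤ : ℕ∞) (deriv σ) := hσs.deriv' 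
  have s2 : ContDiff ℝ (⊤ : ℕ∞) (deriv (deriv σ)) := s1.deriv'
  have s3 : ContDiff ℝ (⊤ : ℕ∞) (deriv (deriv (deriv σ))) := s2.deriv'
  have dd : ∀ h : ℝ → ℝ, ContDiff ℝ (⊤ : ℕ∞) h → ∀ s, HasDerivAt h (deriv h s) s :=
    fun h hh s => (hh.differentiable (by simp) s).hasDerivAt
  have per : ∀ h : ℝ → ℝ, (∀ ν, h (ν + 2 * π) = h ν) → ∀ ν, deriv h (ν + 2 * π) = deriv h ν := by
    intro h hh ν
    rw [← deriv_comp_add_const]; congr 1; ext s; exact hh s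
  have P1 := per _ hσper
  have P2 := per _ P1
  have c0 := hσs.continuous
  have c1 := s1.continuous
  have c2 := s2.continuous
  have ii : ∀ h : ℝ → ℝ, Continuous h → IntervalIntegrable h MeasureTheory.volume 0 (2 * π) :=
    fun h hc => hc.intervalIntegrable _ _
  have z : ∀ h : ℝ → ℝ, (∀ ν, h (ν + 2 * π) = h ν) → h (2 * π) = h 0 := fun h hh => by
    simpa using hh 0
  set l := ∫ s in (0:ℝ)..(2 * π), σ s with hl
  set m := l / (2 * π) with hmdef
  have hml : m * (2 * π) = l := by rw [hmdef]; field_simp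
  have hm : ∫ s in (0:ℝ)..(2 * π), (σ s - m) = 0 := by
    rw [intervalIntegral.integral_sub (ii _ c0) (ii _ continuous_const),
      intervalIntegral.integral_const, ← hl, smul_eq_mul]
    linarith
  have hsq : ∫ s in (0:ℝ)..(2 * π), (σ s - m) ^ 2 =
      (∫ s in (0:ℝ)..(2 * π), σ s ^ 2) - m * l := by
    have : ∀ s, (σ s - m) ^ 2 = σ s ^ 2 - m * σ s - m * (σ s - m) := fun s => by ring
    simp_rw [this]
    rw [intervalIntegral.integral_sub (ii _ (by fun_prop)) (ii _ (by fun_prop)),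
      intervalIntegral.integral_sub (ii _ (by fun_prop)) (ii _ (by fun_prop)),
      intervalIntegral.integral_const_mul, intervalIntegral.integral_const_mul, hm]
    ring
  have hW : ∫ ν in (0:ℝ)..(2 * π), σ ν * (σ ν + deriv (deriv σ) ν) =
      (∫ s in (0:ℝ)..(2 * π), σ s ^ 2) - ∫ s in (0:ℝ)..(2 * π), deriv σ s ^ 2 := by
    have : ∀ s, σ s * (σ s + deriv (deriv σ) s) = σ s ^ 2 + σ s * deriv (deriv σ) s :=
      fun s => by ring
    simp_rw [this]
    rw [intervalIntegral.integral_add (ii _ (by fun_prop)) (ii _ (by fun_prop)),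
      intervalIntegral.integral_mul_deriv_eq_deriv_mul (fun s _ => dd _ hσs s)
        (fun s _ => dd _ s1 s) (ii _ c1) (ii _ c2), z _ hσper, z _ P1]
    simp only [pow_two]
    ring
  by_contra hcon
  push Not at hcon
  apply hnr
  have hQ : ∫ s in (0:ℝ)..(2 * π), deriv σ s ^ 2 ≤ ∫ s in (0:ℝ)..(2 * π), (σ s - m) ^ 2 := by
    rw [hsq]
    rw [hW, ← hml] at hcon
    rw [← hml]
    have : m * (2 * π) * m ≤ (∫ s in (0:ℝ)..(2 * π), σ s ^ 2) -
        ∫ s in (0:ℝ)..(2 * π), deriv σ s ^ 2 := by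
      refine le_of_mul_le_mul_left ?_ hpi
      nlinarith
    linarith
  have key := aux_strict (fun s => σ s - m) (deriv σ) (deriv (deriv σ))
    (deriv (deriv (deriv σ))) (fun s => (dd _ hσs s).sub_const m) (dd _ s1) (dd _ s2) s3.continuous
    (by simp [z _ hσper]) (z _ P1) (z _ P2) hm hQ
  have ode : ∀ s, deriv (deriv σ) s = - (σ s - m) := by
    intro s
    have pp : Function.Periodic (fun s => deriv (deriv σ) s + (σ s - m)) (2 * π) := by
      intro s; simp only [P2 s, hσper s]
    obtain ⟨y, hy, hys⟩ := pp.exists_mem_Ico hpi s 0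
    rw [zero_add] at hy
    have := key y ⟨hy.1, hy.2.le⟩
    have h2 : deriv (deriv σ) s + (σ s - m) = deriv (deriv σ) y + (σ y - m) := hys
    have h3 : deriv (deriv σ) y + (σ y - m) = 0 := this
    linarith
  have d1 : ∀ s, HasDerivAt (fun s => (σ s - m) * Real.cos s - deriv σ s * Real.sin s) 0 s := by
    intro s
    have := (((dd _ hσs s).sub_const m).mul (Real.hasDerivAt_cos s)).sub
      ((dd _ s1 s).mul (Real.hasDerivAt_sin s))
    refine this.congr_deriv ?_
    rw [ode]; ring
  have d2 : ∀ s, HasDerivAt (fun s => (σ s - m) * Real.sin s + deriv σ s * Real.cos s) 0 s := by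
    intro s
    have := (((dd _ hσs s).sub_const m).mul (Real.hasDerivAt_sin s)).add
      ((dd _ s1 s).mul (Real.hasDerivAt_cos s))
    refine this.congr_deriv ?_
    rw [ode]; ring
  refine ⟨m, σ 0 - m, deriv σ 0, fun s => ?_⟩
  have e1 := is_const_of_deriv_eq_zero (fun s => (d1 s).differentiableAt) (fun s => (d1 s).deriv) s 0
  have e2 := is_const_of_deriv_eq_zero (fun s => (d2 s).differentiableAt) (fun s => (d2 s).deriv) s 0
  simp at e1 e2
  rw [← e1, ← e2]
  linear_combination (-(σ s - m)) * Real.sin_sq_add_cos_sq s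

theorem aux_area (T : ℝ) (hT : 0 < T) (P Q Pu Qu Pt Qt : ℝ → ℝ → ℝ)
    (cPu : ContinuousOn (fun p : ℝ × ℝ => Pu p.1 p.2) (Set.univ ×ˢ Set.Ico (0:ℝ) T))
    (cQu : ContinuousOn (fun p : ℝ × ℝ => Qu p.1 p.2) (Set.univ ×ˢ Set.Ico (0:ℝ) T))
    (cPt : ContinuousOn (fun p : ℝ × ℝ => Pt p.1 p.2) (Set.univ ×ˢ Set.Ico (0:ℝ) T))
    (cQt : ContinuousOn (fun p : ℝ × ℝ => Qt p.1 p.2) (Set.univ ×ˢ Set.Ico (0:ℝ) T))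
    (dPu : ∀ u, ∀ t ∈ Set.Ico (0:ℝ) T, HasDerivAt (fun u' => P u' t) (Pu u t) u)
    (dQu : ∀ u, ∀ t ∈ Set.Ico (0:ℝ) T, HasDerivAt (fun u' => Q u' t) (Qu u t) u)
    (dPt : ∀ u, ∀ t ∈ Set.Ico (0:ℝ) T,
      HasDerivWithinAt (fun t' => P u t') (Pt u t) (Set.Ico 0 T) t)
    (dQt : ∀ u, ∀ t ∈ Set.Ico (0:ℝ) T,
      HasDerivWithinAt (fun t' => Q u t') (Qt u t) (Set.Ico 0 T) t)
    (pP : ∀ t ∈ Set.Ico (0:ℝ) T, P 1 t = P 0 t) (pQ : ∀ t ∈ Set.Ico (0:ℝ) T, Q 1 t = Q 0 t) :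
    HasDerivWithinAt (fun t => (1 / 2) * ∫ u in (0:ℝ)..1, (P u t * Qu u t - Q u t * Pu u t))
      (∫ u in (0:ℝ)..1, (Pt u 0 * Qu u 0 - Qt u 0 * Pu u 0)) (Set.Ico 0 T) 0 := by
  have h0 : (0:ℝ) ∈ Set.Ico (0:ℝ) T := ⟨le_rfl, hT⟩
  have slice : ∀ R : ℝ → ℝ → ℝ,
      ContinuousOn (fun p : ℝ × ℝ => R p.1 p.2) (Set.univ ×ˢ Set.Ico (0:ℝ) T) →
      ∀ t ∈ Set.Ico (0:ℝ) T, Continuous (fun u => R u t) := by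
    intro R hR t ht
    exact hR.comp_continuous (f := fun u : ℝ => (u, t)) (by fun_prop) (fun u => ⟨trivial, ht⟩)
  have slicet : ∀ R : ℝ → ℝ → ℝ,
      ContinuousOn (fun p : ℝ × ℝ => R p.1 p.2) (Set.univ ×ˢ Set.Ico (0:ℝ) T) →
      ∀ u, ContinuousOn (fun t => R u t) (Set.Ico 0 T) := by
    intro R hR u
    exact hR.comp (f := fun t : ℝ => (u, t)) (by fun_prop) (fun t ht => ⟨trivial, ht⟩)
  have cP : ∀ t ∈ Set.Ico (0:ℝ) T, Continuous (fun u => P u t) := fun t ht =>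
    continuous_iff_continuousAt.2 fun u => (dPu u t ht).continuousAt
  have cQ : ∀ t ∈ Set.Ico (0:ℝ) T, Continuous (fun u => Q u t) := fun t ht =>
    continuous_iff_continuousAt.2 fun u => (dQu u t ht).continuousAt
  have bd : ∀ R : ℝ → ℝ → ℝ,
      ContinuousOn (fun p : ℝ × ℝ => R p.1 p.2) (Set.univ ×ˢ Set.Ico (0:ℝ) T) →
      ∃ C : ℝ, 0 ≤ C ∧ ∀ u ∈ Set.Icc (0:ℝ) 1, ∀ t ∈ Set.Icc (0:ℝ) (T / 2), |R u t| ≤ C := by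
    intro R hR
    have hK : IsCompact (Set.Icc (0:ℝ) 1 ×ˢ Set.Icc (0:ℝ) (T / 2)) := isCompact_Icc.prod isCompact_Icc
    obtain ⟨C, hC⟩ := hK.exists_bound_of_continuousOn (hR.mono (fun p hp =>
      ⟨trivial, hp.2.1, lt_of_le_of_lt hp.2.2 (by linarith)⟩))
    exact ⟨C, (norm_nonneg _).trans (hC (0, 0) ⟨⟨le_rfl, zero_le_one⟩, ⟨le_rfl, by positivity⟩⟩),
      fun u hu t ht => hC (u, t) ⟨hu, ht⟩⟩
  obtain ⟨C1, p1, b1⟩ := bd Pu cPu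
  obtain ⟨C2, p2, b2⟩ := bd Qu cQu
  obtain ⟨C3, p3, b3⟩ := bd Pt cPt
  obtain ⟨C4, p4, b4⟩ := bd Qt cQt
  have lip : ∀ (R Rt : ℝ → ℝ → ℝ) (C : ℝ), (∀ u, ∀ t ∈ Set.Ico (0:ℝ) T,
      HasDerivWithinAt (fun t' => R u t') (Rt u t) (Set.Ico 0 T) t) →
      (∀ u ∈ Set.Icc (0:ℝ) 1, ∀ t ∈ Set.Icc (0:ℝ) (T / 2), |Rt u t| ≤ C) →
      ∀ u ∈ Set.Icc (0:ℝ) 1, ∀ t ∈ Set.Ioc (0:ℝ) (T / 2), |(R u t - R u 0) / t| ≤ C := by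
    intro R Rt C hd hb u hu t ht
    have hsub : Set.Icc (0:ℝ) (T / 2) ⊆ Set.Ico 0 T := fun s hs =>
      ⟨hs.1, lt_of_le_of_lt hs.2 (by linarith)⟩
    have := (convex_Icc (0:ℝ) (T / 2)).norm_image_sub_le_of_norm_hasDerivWithin_le
      (f := fun t' => R u t') (f' := fun t' => Rt u t') (C := C)
      (fun s hs => (hd u s (hsub hs)).mono hsub) (fun s hs => hb u hu s hs)
      (x := 0) (y := t) ⟨le_rfl, by positivity⟩ ⟨ht.1.le, ht.2⟩
    simp only [norm_eq_abs, sub_zero] at this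
    rw [abs_div, div_le_iff₀ (abs_pos.2 ht.1.ne')]
    exact this
  rw [hasDerivWithinAt_iff_tendsto_slope]
  have hev : ∀ᶠ t in nhdsWithin (0:ℝ) (Set.Ico 0 T \ {0}), t ∈ Set.Ioc (0:ℝ) (T / 2) := by
    have e1 : ∀ᶠ t in nhdsWithin (0:ℝ) (Set.Ico 0 T \ {0}), t ∈ Set.Ico 0 T \ {0} :=
      eventually_mem_nhdsWithin
    have e2 : ∀ᶠ t in nhdsWithin (0:ℝ) (Set.Ico 0 T \ {0}), t < T / 2 :=
      mem_nhdsWithin_of_mem_nhds (Iio_mem_nhds (by positivity))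
    filter_upwards [e1, e2] with t h1 h2
    exact ⟨lt_of_le_of_ne h1.1.1 (fun h => h1.2 h.symm), h2.le⟩
  have hin : ∀ t ∈ Set.Ioc (0:ℝ) (T / 2), t ∈ Set.Ico (0:ℝ) T := fun t ht =>
    ⟨ht.1.le, lt_of_le_of_lt ht.2 (by linarith)⟩
  let F : ℝ → ℝ → ℝ := fun t u => (P u t - P u 0) / t * ((Qu u 0 + Qu u t) / 2) -
    (Q u t - Q u 0) / t * ((Pu u 0 + Pu u t) / 2)
  have cF : ∀ t ∈ Set.Ico (0:ℝ) T, Continuous (F t) := by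
    intro t ht
    have := cP t ht; have := cP 0 h0; have := cQ t ht; have := cQ 0 h0
    have := slice _ cPu t ht; have := slice _ cPu 0 h0
    have := slice _ cQu t ht; have := slice _ cQu 0 h0
    simp only [F, div_eq_mul_inv]
    fun_prop
  have hslope : (fun t => ∫ u in (0:ℝ)..1, F t u) =ᶠ[nhdsWithin (0:ℝ) (Set.Ico 0 T \ {0})]
      slope (fun t => (1 / 2) * ∫ u in (0:ℝ)..1, (P u t * Qu u t - Q u t * Pu u t)) 0 := by
    filter_upwards [hev] with t ht'
    have ht := hin t ht'
    have := cP t ht; have := cP 0 h0; have := cQ t ht; have := cQ 0 h0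
    have := slice _ cPu t ht; have := slice _ cPu 0 h0
    have := slice _ cQu t ht; have := slice _ cQu 0 h0
    have ftc : ∫ u in (0:ℝ)..1, ((Pu u 0 * Q u t + P u 0 * Qu u t) -
        (Pu u t * Q u 0 + P u t * Qu u 0)) = 0 := by
      rw [intervalIntegral.integral_eq_sub_of_hasDerivAt
        (f := fun u => P u 0 * Q u t - P u t * Q u 0)
        (fun u _ => ((dPu u 0 h0).mul (dQu u t ht)).sub ((dPu u t ht).mul (dQu u 0 h0)))
        (Continuous.intervalIntegrable (by fun_prop) _ _)]
      simp only [pP t ht, pP 0 h0, pQ t ht, pQ 0 h0, sub_self]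
    have tne : t ≠ 0 := ht'.1.ne'
    have e : ∀ u, F t u = t⁻¹ * (1 / 2) * (((P u t * Qu u t - Q u t * Pu u t) -
        (P u 0 * Qu u 0 - Q u 0 * Pu u 0)) - ((Pu u 0 * Q u t + P u 0 * Qu u t) -
        (Pu u t * Q u 0 + P u t * Qu u 0))) := by
      intro u; simp only [F]; field_simp; ring
    simp_rw [e]
    rw [intervalIntegral.integral_const_mul,
      intervalIntegral.integral_sub (Continuous.intervalIntegrable (by fun_prop) _ _)
        (Continuous.intervalIntegrable (by fun_prop) _ _), ftc,
      intervalIntegral.integral_sub (Continuous.intervalIntegrable (by fun_prop) _ _)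
        (Continuous.intervalIntegrable (by fun_prop) _ _), slope_def_module]
    simp only [smul_eq_mul, sub_zero]
    ring
  refine Filter.Tendsto.congr' hslope ?_
  refine intervalIntegral.tendsto_integral_filter_of_dominated_convergence
    (fun _ => C3 * C2 + C4 * C1) ?_ ?_ (intervalIntegrable_const) ?_
  · filter_upwards [hev] with t ht
    exact (cF t (hin t ht)).aestronglyMeasurable
  · filter_upwards [hev] with t ht
    refine Filter.Eventually.of_forall fun u hu => ?_
    rw [Set.uIoc_of_le zero_le_one] at hu
    have hu' : u ∈ Set.Icc (0:ℝ) 1 := ⟨hu.1.le, hu.2⟩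
    have z0 : (0:ℝ) ∈ Set.Icc (0:ℝ) (T / 2) := ⟨le_rfl, by positivity⟩
    have zt : t ∈ Set.Icc (0:ℝ) (T / 2) := ⟨ht.1.le, ht.2⟩
    have l1 := lip P Pt C3 dPt b3 u hu' t ht
    have l2 := lip Q Qt C4 dQt b4 u hu' t ht
    have av : ∀ x y C : ℝ, |x| ≤ C → |y| ≤ C → |(x + y) / 2| ≤ C := by
      intro x y C hx hy
      rw [abs_le] at *
      constructor <;> linarith [hx.1, hx.2, hy.1, hy.2]
    have a1 := av _ _ _ (b2 u hu' 0 z0) (b2 u hu' t zt)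
    have a2 := av _ _ _ (b1 u hu' 0 z0) (b1 u hu' t zt)
    refine (norm_sub_le _ _).trans ?_
    rw [norm_mul, norm_mul]
    exact add_le_add (mul_le_mul l1 a1 (abs_nonneg _) p3) (mul_le_mul l2 a2 (abs_nonneg _) p4)
  · refine Filter.Eventually.of_forall fun u _ => ?_
    have sl : ∀ (R Rt : ℝ → ℝ → ℝ), HasDerivWithinAt (fun t' => R u t') (Rt u 0) (Set.Ico 0 T) 0 →
        Filter.Tendsto (fun t => (R u t - R u 0) / t) (nhdsWithin (0:ℝ) (Set.Ico 0 T \ {0}))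
          (nhds (Rt u 0)) := by
      intro R Rt h
      rw [hasDerivWithinAt_iff_tendsto_slope] at h
      refine h.congr fun t => ?_
      rw [slope_def_field, sub_zero]
    have ct : ∀ R : ℝ → ℝ → ℝ,
        ContinuousOn (fun p : ℝ × ℝ => R p.1 p.2) (Set.univ ×ˢ Set.Ico (0:ℝ) T) →
        Filter.Tendsto (fun t => (R u 0 + R u t) / 2) (nhdsWithin (0:ℝ) (Set.Ico 0 T \ {0}))
          (nhds (R u 0)) := by
      intro R hR
      have := ((slicet R hR u 0 h0).mono (Set.sdiff_subset (t := {0}))).tendsto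
      have := (this.const_add (R u 0)).div_const 2
      convert this using 2
      ring
    exact ((sl P Pt (dPt u 0 h0)).mul (ct Qu cQu)).sub ((sl Q Qt (dQt u 0 h0)).mul (ct Pu cPu))

/-- Support inequality for a positively curved Wulff boundary. -/
theorem aux_support_s19 (S S1 S2 : ℝ → ℝ) (d0 : ∀ s, HasDerivAt S (S1 s) s)
    (d1 : ∀ s, HasDerivAt S1 (S2 s) s) (per0 : ∀ s, S (s + 2 * π) = S s)
    (per1 : ∀ s, S1 (s + 2 * π) = S1 s) (hc : ∀ s, 0 < S s + S2 s) (θ φ : ℝ) :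
    S φ * Real.cos (φ - θ) - S1 φ * Real.sin (φ - θ) ≤ S θ := by
  have hpi : (0:ℝ) < 2 * π := by positivity
  let H : ℝ → ℝ := fun φ => S φ * Real.cos (φ - θ) - S1 φ * Real.sin (φ - θ)
  have dH : ∀ s, HasDerivAt H (-(S s + S2 s) * Real.sin (s - θ)) s := by
    intro s
    have e : HasDerivAt (fun s => s - θ) 1 s := (hasDerivAt_id s).sub_const θ
    have := ((d0 s).mul e.cos).sub ((d1 s).mul e.sin)
    refine this.congr_deriv ?_
    ring
  have pH : Function.Periodic H (2 * π) := by
    intro s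
    have : s + 2 * π - θ = (s - θ) + 2 * π := by ring
    simp only [H, per0, per1, this, Real.cos_add_two_pi, Real.sin_add_two_pi]
  have cH : Continuous H := continuous_iff_continuousAt.2 fun s => (dH s).continuousAt
  obtain ⟨y, hy, hys⟩ := pH.exists_mem_Ico hpi φ (θ - π)
  have hθ : H θ = S θ := by simp [H]
  change H φ ≤ S θ
  rw [hys, ← hθ]
  rcases le_total y θ with h | h
  · refine monotoneOn_of_deriv_nonneg (convex_Icc (θ - π) θ) cH.continuousOn
      (fun s _ => (dH s).differentiableAt.differentiableWithinAt) ?_ ⟨hy.1, h⟩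
      ⟨by linarith [Real.pi_pos], le_rfl⟩ h
    intro s hs
    rw [interior_Icc] at hs
    rw [(dH s).deriv]
    have := Real.sin_nonpos_of_nonpos_of_neg_pi_le (x := s - θ) (by linarith [hs.2]) (by linarith [hs.1])
    nlinarith [hc s]
  · refine antitoneOn_of_deriv_nonpos (convex_Icc θ (θ + π)) cH.continuousOn
      (fun s _ => (dH s).differentiableAt.differentiableWithinAt) ?_
      ⟨le_rfl, by linarith [Real.pi_pos]⟩ ⟨h, by linarith [hy.2]⟩ h
    intro s hs
    rw [interior_Icc] at hs
    rw [(dH s).deriv]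
    have := Real.sin_nonneg_of_nonneg_of_le_pi (x := s - θ) (by linarith [hs.1]) (by linarith [hs.2])
    nlinarith [hc s]

/-- A regular closed curve with the same image as the Wulff boundary and positive area is
its Gauss parameterization. -/
theorem aux_gauss (S S1 S2 : ℝ → ℝ) (d0 : ∀ s, HasDerivAt S (S1 s) s)
    (d1 : ∀ s, HasDerivAt S1 (S2 s) s) (per0 : ∀ s, S (s + 2 * π) = S s)
    (per1 : ∀ s, S1 (s + 2 * π) = S1 s) (hS : ∀ s, 0 < S s) (hc : ∀ s, 0 < S s + S2 s)
    (P Q g n : ℝ → ℝ) (hn : Continuous n) (hg : ∀ u, 0 < g u)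
    (dP : ∀ u, HasDerivAt P (g u * Real.cos (n u)) u)
    (dQ : ∀ u, HasDerivAt Q (g u * Real.sin (n u)) u)
    (hr : ∀ u, ∃ θ, P u = S θ * Real.sin θ + S1 θ * Real.cos θ ∧
      Q u = - S θ * Real.cos θ + S1 θ * Real.sin θ)
    (hA : 0 < ∫ u in (0:ℝ)..1, (P u * (g u * Real.sin (n u)) - Q u * (g u * Real.cos (n u)))) :
    ∀ u, P u = S (n u) * Real.sin (n u) + S1 (n u) * Real.cos (n u) ∧
      Q u = - S (n u) * Real.cos (n u) + S1 (n u) * Real.sin (n u) := by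
  have cS : Continuous S := continuous_iff_continuousAt.2 fun s => (d0 s).continuousAt
  have cS1 : Continuous S1 := continuous_iff_continuousAt.2 fun s => (d1 s).continuousAt
  have cP : Continuous P := continuous_iff_continuousAt.2 fun s => (dP s).continuousAt
  have cQ : Continuous Q := continuous_iff_continuousAt.2 fun s => (dQ s).continuousAt
  -- support inequality along the curve
  have hsup : ∀ u θ, P u * Real.sin θ - Q u * Real.cos θ ≤ S θ := by
    intro u θ
    obtain ⟨φ, h1, h2⟩ := hr u
    have := aux_support_s19 S S1 S2 d0 d1 per0 per1 hc θ φ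
    rw [Real.cos_sub, Real.sin_sub] at this
    rw [h1, h2]
    nlinarith
  let W1 : ℝ → ℝ := fun θ => S θ * Real.sin θ + S1 θ * Real.cos θ
  let W2 : ℝ → ℝ := fun θ => - S θ * Real.cos θ + S1 θ * Real.sin θ
  have cW1 : Continuous W1 := by fun_prop
  have cW2 : Continuous W2 := by fun_prop
  have pW1 : Function.Periodic W1 (2 * π) := fun s => by simp [W1, per0, per1]
  have pW2 : Function.Periodic W2 (2 * π) := fun s => by simp [W2, per0, per1]
  let E : Set ℝ := {u | P u = W1 (n u) ∧ Q u = W2 (n u)}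
  let O : Set ℝ := {u | P u = W1 (n u + π) ∧ Q u = W2 (n u + π)}
  have cE : IsClosed E := (isClosed_eq cP (by fun_prop)).inter (isClosed_eq cQ (by fun_prop))
  have cO : IsClosed O := (isClosed_eq cP (by fun_prop)).inter (isClosed_eq cQ (by fun_prop))
  have cover : Set.univ ⊆ E ∪ O := by
    intro u _
    obtain ⟨θ, h1, h2⟩ := hr u
    have dL : HasDerivAt (fun u => P u * Real.sin θ - Q u * Real.cos θ)
        (g u * Real.cos (n u) * Real.sin θ - g u * Real.sin (n u) * Real.cos θ) u :=
      ((dP u).mul_const _).sub ((dQ u).mul_const _)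
    have hmax : IsLocalMax (fun u => P u * Real.sin θ - Q u * Real.cos θ) u := by
      refine Filter.Eventually.of_forall fun v => ?_
      have e : P u * Real.sin θ - Q u * Real.cos θ = S θ := by
        rw [h1, h2]
        linear_combination S θ * Real.sin_sq_add_cos_sq θ
      show P v * Real.sin θ - Q v * Real.cos θ ≤ P u * Real.sin θ - Q u * Real.cos θ
      rw [e]; exact hsup v θ
    have hz := hmax.hasDerivAt_eq_zero dL
    have hsin : Real.sin (θ - n u) = 0 := by
      rw [Real.sin_sub]
      have := hg u
      have h3 : g u * (Real.sin θ * Real.cos (n u) - Real.cos θ * Real.sin (n u)) = 0 := by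
        linear_combination hz
      exact (mul_eq_zero.1 h3).resolve_left this.ne'
    obtain ⟨k, hk⟩ := Real.sin_eq_zero_iff.1 hsin
    rcases Int.even_or_odd' k with ⟨m, hm | hm⟩
    · left
      have : θ = n u + m * (2 * π) := by rw [hm] at hk; push_cast at hk; linarith
      refine ⟨?_, ?_⟩
      · rw [h1, ← pW1.int_mul m (n u), ← this]
      · rw [h2, ← pW2.int_mul m (n u), ← this]
    · right
      have : θ = n u + π + m * (2 * π) := by rw [hm] at hk; push_cast at hk; linarith
      refine ⟨?_, ?_⟩
      · rw [h1, ← pW1.int_mul m (n u + π), ← this]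
      · rw [h2, ← pW2.int_mul m (n u + π), ← this]
  have valE : ∀ u ∈ E, P u * Real.sin (n u) - Q u * Real.cos (n u) = S (n u) := by
    rintro u ⟨h1, h2⟩
    rw [h1, h2]
    simp only [W1, W2]
    linear_combination S (n u) * Real.sin_sq_add_cos_sq (n u)
  have valO : ∀ u ∈ O, P u * Real.sin (n u) - Q u * Real.cos (n u) = - S (n u + π) := by
    rintro u ⟨h1, h2⟩
    rw [h1, h2]
    simp only [W1, W2, Real.sin_add_pi, Real.cos_add_pi]
    linear_combination - S (n u + π) * Real.sin_sq_add_cos_sq (n u)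
  have hE : ∃ u, u ∈ E := by
    by_contra hno
    push Not at hno
    have hO : ∀ u, u ∈ O := fun u => (cover (Set.mem_univ u)).resolve_left (hno u)
    have : ∫ u in (0:ℝ)..1, (P u * (g u * Real.sin (n u)) - Q u * (g u * Real.cos (n u))) ≤ 0 := by
      have := intervalIntegral.integral_nonneg (μ := MeasureTheory.volume) (a := 0) (b := 1)
        (f := fun u => -(P u * (g u * Real.sin (n u)) - Q u * (g u * Real.cos (n u))))
        zero_le_one (fun u _ => by
          have := valO u (hO u)
          have e : -(P u * (g u * Real.sin (n u)) - Q u * (g u * Real.cos (n u))) =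
            g u * S (n u + π) := by linear_combination - g u * this
          rw [e]
          exact (mul_pos (hg u) (hS _)).le)
      rw [intervalIntegral.integral_neg] at this
      linarith
    linarith
  have hOe : ∀ u, u ∉ O := by
    intro u hu
    obtain ⟨v, hv⟩ := hE
    obtain ⟨z, -, hz1, hz2⟩ := isPreconnected_closed_iff.1 isPreconnected_univ E O cE cO cover
      ⟨v, trivial, hv⟩ ⟨u, trivial, hu⟩
    have a1 := valE z hz1
    have a2 := valO z hz2
    have := hS (n z)
    have := hS (n z + π)
    linarith
  intro u
  exact (cover (Set.mem_univ u)).resolve_right (hOe u)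

/-- Initial area decrease for the anisoperimetric ratio gradient flow started from the
modified Wulff shape `∂W_{σ̄}`, `σ̄ = a·σ + b` with `a/b = √π/√|W_σ|`:
`(d/dt) A(t)|₀ = √(π·|W_σ|) − (1/2)·L(∂W_σ) < 0`. -/
theorem initial_area_decrease_anisoperimetric_flow
    (σ : ℝ → ℝ)
    (hσs : ContDiff ℝ (⊤ : ℕ∞) σ) (hσper : ∀ ν, σ (ν + 2 * π) = σ ν)
    (hσpos : ∀ ν, 0 < σ ν) (hσconv : ∀ ν, 0 < σ ν + deriv (deriv σ) ν)
    -- σ is nonconstant and not of the form c₀ + c₁ cos ν + c₂ sin ν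
    (hnc : ¬∃ c : ℝ, ∀ s, σ s = c)
    (hnr : ¬∃ c₀ c₁ c₂ : ℝ, ∀ s, σ s = c₀ + c₁ * Real.cos s + c₂ * Real.sin s)
    (a b : ℝ) (ha : 0 < a) (hb : 0 < b)
    (hab : a / b = Real.sqrt π / Real.sqrt (wulffArea σ))
    (T : ℝ) (hT : 0 < T) (x : ℝ → ℝ → ℝ × ℝ) (g νf νu : ℝ → ℝ → ℝ)
    (hxs : ContDiffOn ℝ (⊤ : ℕ∞) (fun p : ℝ × ℝ => x p.1 p.2)
      ((Set.univ : Set ℝ) ×ˢ Set.Ico (0:ℝ) T))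
    (hνs : ContDiffOn ℝ (⊤ : ℕ∞) (fun p : ℝ × ℝ => νf p.1 p.2)
      ((Set.univ : Set ℝ) ×ˢ Set.Ico (0:ℝ) T))
    (hper : ∀ u, ∀ t ∈ Set.Ico (0:ℝ) T, x (u + 1) t = x u t)
    (hνper : ∀ u, ∀ t ∈ Set.Ico (0:ℝ) T, νf (u + 1) t = νf u t + 2 * π)
    (hg : ∀ u, ∀ t ∈ Set.Ico (0:ℝ) T, 0 < g u t)
    (htang : ∀ u, ∀ t ∈ Set.Ico (0:ℝ) T,
      HasDerivAt (fun u' => x u' t)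
        (g u t • ((Real.cos (νf u t), Real.sin (νf u t)) : ℝ × ℝ)) u)
    (hνu : ∀ u, ∀ t ∈ Set.Ico (0:ℝ) T, HasDerivAt (fun u' => νf u' t) (νu u t) u)
    (hinj : ∀ t ∈ Set.Ico (0:ℝ) T, Set.InjOn (fun u => x u t) (Set.Ico 0 1))
    (hA : ∀ t ∈ Set.Ico (0:ℝ) T, 0 < areaF x g νf t)
    -- the anisoperimetric ratio gradient flow equation `∂_t x = (k_σ − L_σ/(2A))·N`
    (hflow : ∀ u, ∀ t ∈ Set.Ico (0:ℝ) T,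
      HasDerivWithinAt (fun t' => x u t')
        ((((σ (νf u t) + deriv (deriv σ) (νf u t)) * (νu u t / g u t) -
            aLenF σ g νf t / (2 * areaF x g νf t)) •
          ((-Real.sin (νf u t), Real.cos (νf u t)) : ℝ × ℝ)))
        (Set.Ico 0 T) t)
    -- the initial curve parameterizes the Wulff boundary ∂W_{σ̄}
    (hinit : Set.range (fun u => x u 0) = Set.range (wulffPoint (modAniso σ a b))) :
    HasDerivWithinAt (areaF x g νf)
      (Real.sqrt (π * wulffArea σ) - (1 / 2) * ∫ s in (0:ℝ)..(2 * π), σ s)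
      (Set.Ico 0 T) 0 ∧
    Real.sqrt (π * wulffArea σ) - (1 / 2) * (∫ s in (0:ℝ)..(2 * π), σ s) < 0 := by
  have hpi : (0:ℝ) < 2 * π := by positivity
  have h0 : (0:ℝ) ∈ Set.Ico (0:ℝ) T := ⟨le_rfl, hT⟩
  have s1 : ContDiff ℝ (⊤ : ℕ∞) (deriv σ) := hσs.deriv'
  have s2 : ContDiff ℝ (⊤ : ℕ∞) (deriv (deriv σ)) := s1.deriv'
  have dd : ∀ h : ℝ → ℝ, ContDiff ℝ (⊤ : ℕ∞) h → ∀ s, HasDerivAt h (deriv h s) s :=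
    fun h hh s => (hh.differentiable (by simp) s).hasDerivAt
  have per : ∀ h : ℝ → ℝ, (∀ ν, h (ν + 2 * π) = h ν) → ∀ ν, deriv h (ν + 2 * π) = deriv h ν := by
    intro h hh ν
    rw [← deriv_comp_add_const]; congr 1; ext s; exact hh s
  have P1 := per _ hσper
  have P2 := per _ P1
  have c0 := hσs.continuous
  have c1 := s1.continuous
  have c2 := s2.continuous
  have ii : ∀ h : ℝ → ℝ, Continuous h → IntervalIntegrable h MeasureTheory.volume 0 (2 * π) :=
    fun h hc => hc.intervalIntegrable _ _
  -- the isoperimetric part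
  have hiso := aux_isop σ hσs hσper hnr
  set W := wulffArea σ with hW
  set l := ∫ s in (0:ℝ)..(2 * π), σ s with hl
  have hWi : ∫ ν in (0:ℝ)..(2 * π), σ ν * (σ ν + deriv (deriv σ) ν) = 2 * W := by
    rw [hW, wulffArea]; ring
  have hWpos : 0 < W := by
    have : 0 < ∫ ν in (0:ℝ)..(2 * π), σ ν * (σ ν + deriv (deriv σ) ν) :=
      intervalIntegral.integral_pos hpi (by fun_prop)
        (fun s _ => (mul_pos (hσpos s) (hσconv s)).le)
        ⟨0, ⟨le_rfl, hpi.le⟩, mul_pos (hσpos 0) (hσconv 0)⟩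
    linarith
  have hlpos : 0 < l :=
    intervalIntegral.integral_pos hpi (by fun_prop) (fun s _ => (hσpos s).le)
      ⟨0, ⟨le_rfl, hpi.le⟩, hσpos 0⟩
  rw [hWi] at hiso
  have hneg : Real.sqrt (π * W) - (1 / 2) * l < 0 := by
    have : Real.sqrt (π * W) < l / 2 := by
      rw [Real.sqrt_lt' (by positivity)]
      nlinarith
    linarith
  refine ⟨?_, hneg⟩
  have habr : a * W = b * Real.sqrt (π * W) := by
    rw [Real.sqrt_mul Real.pi_pos.le]
    have hw := Real.sq_sqrt hWpos.le
    have hw' : 0 < Real.sqrt W := Real.sqrt_pos.2 hWpos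
    rw [div_eq_div_iff hb.ne' hw'.ne'] at hab
    calc a * W = a * Real.sqrt W * Real.sqrt W := by rw [mul_assoc, ← pow_two, hw]
      _ = _ := by rw [hab]; ring
  have habr2 : a ^ 2 * W = π * b ^ 2 := by
    have h1 := Real.sq_sqrt (mul_pos Real.pi_pos hWpos).le
    have h2 : W * (a ^ 2 * W) = W * (π * b ^ 2) := by
      calc W * (a ^ 2 * W) = (a * W) ^ 2 := by ring
        _ = b ^ 2 * (Real.sqrt (π * W)) ^ 2 := by rw [habr]; ring
        _ = _ := by rw [h1]; ring
    exact mul_left_cancel₀ hWpos.ne' h2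
  -- continuity of the partial derivatives
  have hU : UniqueDiffOn ℝ ((Set.univ : Set ℝ) ×ˢ Set.Ico (0:ℝ) T) :=
    uniqueDiffOn_univ.prod (uniqueDiffOn_Ico 0 T)
  have cD := hxs.continuousOn_fderivWithin hU (by simp)
  have hD : ∀ u, ∀ t ∈ Set.Ico (0:ℝ) T, HasFDerivWithinAt (fun p : ℝ × ℝ => x p.1 p.2)
      (fderivWithin ℝ (fun p : ℝ × ℝ => x p.1 p.2) ((Set.univ : Set ℝ) ×ˢ Set.Ico (0:ℝ) T) (u, t))
      ((Set.univ : Set ℝ) ×ˢ Set.Ico (0:ℝ) T) (u, t) := fun u t ht =>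
    ((hxs.differentiableOn (by simp)) (u, t) ⟨trivial, ht⟩).hasFDerivWithinAt
  have eU : ∀ u, ∀ t ∈ Set.Ico (0:ℝ) T,
      fderivWithin ℝ (fun p : ℝ × ℝ => x p.1 p.2) ((Set.univ : Set ℝ) ×ˢ Set.Ico (0:ℝ) T) (u, t)
        (1, 0) = g u t • ((Real.cos (νf u t), Real.sin (νf u t)) : ℝ × ℝ) := by
    intro u t ht
    have hc : HasDerivWithinAt (fun u' : ℝ => (u', t)) ((1:ℝ), (0:ℝ)) Set.univ u :=
      ((hasDerivAt_id u).prodMk (hasDerivAt_const u t)).hasDerivWithinAt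
    have := (hD u t ht).comp_hasDerivWithinAt (f := fun u' : ℝ => (u', t)) u hc (fun v _ => ⟨trivial, ht⟩)
    exact (this.hasDerivAt Filter.univ_mem).unique (htang u t ht)
  have eT : ∀ u, ∀ t ∈ Set.Ico (0:ℝ) T,
      fderivWithin ℝ (fun p : ℝ × ℝ => x p.1 p.2) ((Set.univ : Set ℝ) ×ˢ Set.Ico (0:ℝ) T) (u, t)
        (0, 1) = ((((σ (νf u t) + deriv (deriv σ) (νf u t)) * (νu u t / g u t) -
            aLenF σ g νf t / (2 * areaF x g νf t)) •
          ((-Real.sin (νf u t), Real.cos (νf u t)) : ℝ × ℝ))) := by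
    intro u t ht
    have hc : HasDerivWithinAt (fun t' : ℝ => (u, t')) ((0:ℝ), (1:ℝ)) (Set.Ico 0 T) t :=
      ((hasDerivAt_const t u).prodMk (hasDerivAt_id t)).hasDerivWithinAt
    have := (hD u t ht).comp_hasDerivWithinAt (f := fun t' : ℝ => (u, t')) t hc
      (fun v hv => ⟨trivial, hv⟩)
    exact (uniqueDiffOn_Ico 0 T t ht).eq_deriv _ this (hflow u t ht)
  have cU : ContinuousOn (fun p : ℝ × ℝ => g p.1 p.2 •
      ((Real.cos (νf p.1 p.2), Real.sin (νf p.1 p.2)) : ℝ × ℝ))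
      ((Set.univ : Set ℝ) ×ˢ Set.Ico (0:ℝ) T) :=
    (cD.clm_apply continuousOn_const).congr (fun p hp => (eU p.1 p.2 hp.2).symm)
  have cT : ContinuousOn (fun p : ℝ × ℝ =>
      ((((σ (νf p.1 p.2) + deriv (deriv σ) (νf p.1 p.2)) * (νu p.1 p.2 / g p.1 p.2) -
            aLenF σ g νf p.2 / (2 * areaF x g νf p.2)) •
          ((-Real.sin (νf p.1 p.2), Real.cos (νf p.1 p.2)) : ℝ × ℝ))))
      ((Set.univ : Set ℝ) ×ˢ Set.Ico (0:ℝ) T) :=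
    (cD.clm_apply continuousOn_const).congr (fun p hp => (eT p.1 p.2 hp.2).symm)
  have area := aux_area T hT (fun u t => (x u t).1) (fun u t => (x u t).2)
    (fun u t => g u t * Real.cos (νf u t)) (fun u t => g u t * Real.sin (νf u t))
    (fun u t => ((σ (νf u t) + deriv (deriv σ) (νf u t)) * (νu u t / g u t) -
            aLenF σ g νf t / (2 * areaF x g νf t)) * (-Real.sin (νf u t)))
    (fun u t => ((σ (νf u t) + deriv (deriv σ) (νf u t)) * (νu u t / g u t) -
            aLenF σ g νf t / (2 * areaF x g νf t)) * Real.cos (νf u t))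
    (continuous_fst.comp_continuousOn cU) (continuous_snd.comp_continuousOn cU)
    (continuous_fst.comp_continuousOn cT) (continuous_snd.comp_continuousOn cT)
    (fun u t ht => (htang u t ht).fst) (fun u t ht => (htang u t ht).snd)
    (fun u t ht => (hflow u t ht).fst) (fun u t ht => (hflow u t ht).snd)
    (fun t ht => by have := hper 0 t ht; rw [zero_add] at this; simp only [this])
    (fun t ht => by have := hper 0 t ht; rw [zero_add] at this; simp only [this])
  refine HasDerivWithinAt.congr_deriv (f := areaF x g νf) area ?_
  -- the initial curve is the Gauss parameterization
  have cn : Continuous (fun u => νf u 0) :=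
    continuous_iff_continuousAt.2 fun u => (hνu u 0 h0).continuousAt
  have dS : ∀ s, HasDerivAt (modAniso σ a b) (a * deriv σ s) s := fun s =>
    ((dd _ hσs s).const_mul a).add_const b
  have hS1 : deriv (modAniso σ a b) = fun s => a * deriv σ s := funext fun s => (dS s).deriv
  have dS1 : ∀ s, HasDerivAt (fun s => a * deriv σ s) (a * deriv (deriv σ) s) s := fun s =>
    (dd _ s1 s).const_mul a
  have hR : ∀ s, 0 < modAniso σ a b s + a * deriv (deriv σ) s := by
    intro s
    have := mul_pos ha (hσconv s)
    simp only [modAniso]; linarith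
  have hSpos : ∀ s, 0 < modAniso σ a b s := fun s => by
    have := mul_pos ha (hσpos s)
    simp only [modAniso]; linarith
  have hA0 := hA 0 h0
  have gauss := aux_gauss (modAniso σ a b) (fun s => a * deriv σ s)
    (fun s => a * deriv (deriv σ) s) dS dS1 (fun s => by simp [modAniso, hσper])
    (fun s => by simp [P1]) hSpos hR
    (fun u => (x u 0).1) (fun u => (x u 0).2) (fun u => g u 0) (fun u => νf u 0) cn
    (fun u => hg u 0 h0) (fun u => (htang u 0 h0).fst) (fun u => (htang u 0 h0).snd)
    (fun u => by
      have : x u 0 ∈ Set.range (wulffPoint (modAniso σ a b)) := hinit ▸ ⟨u, rfl⟩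
      obtain ⟨θ, hθ⟩ := this
      refine ⟨θ, ?_, ?_⟩
      · rw [← hθ]; simp [wulffPoint, hS1]
      · rw [← hθ]; simp [wulffPoint, hS1])
    (by rw [areaF] at hA0; linarith)
  have hgn : ∀ u, g u 0 = (modAniso σ a b (νf u 0) + a * deriv (deriv σ) (νf u 0)) * νu u 0 := by
    intro u
    have dn := hνu u 0 h0
    have dSn := (dS (νf u 0)).comp u dn
    have dS1n := (dS1 (νf u 0)).comp u dn
    have e1 := (dSn.mul dn.sin).add (dS1n.mul dn.cos)
    have e2 := (dSn.neg.mul dn.cos).add (dS1n.mul dn.sin)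
    have q1 : HasDerivAt (fun u => (x u 0).1) _ u :=
      e1.congr_of_eventuallyEq (Filter.Eventually.of_forall fun v => (gauss v).1)
    have q2 : HasDerivAt (fun u => (x u 0).2) _ u :=
      e2.congr_of_eventuallyEq (Filter.Eventually.of_forall fun v => (gauss v).2)
    have t1 : HasDerivAt (fun u => (x u 0).1) (g u 0 * Real.cos (νf u 0)) u := (htang u 0 h0).fst
    have t2 : HasDerivAt (fun u => (x u 0).2) (g u 0 * Real.sin (νf u 0)) u := (htang u 0 h0).snd
    have r1 := t1.unique q1
    have r2 := t2.unique q2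
    simp only [Function.comp, Prod.smul_mk, smul_eq_mul, Pi.neg_apply] at r1 r2
    have tr := Real.sin_sq_add_cos_sq (νf u 0)
    linear_combination Real.cos (νf u 0) * r1 + Real.sin (νf u 0) * r2 +
      ((modAniso σ a b (νf u 0) + a * deriv (deriv σ) (νf u 0)) * νu u 0 - g u 0) * tr
  have cg : Continuous (fun u => g u 0) := by
    have c := cU.comp_continuous (f := fun u : ℝ => (u, (0:ℝ))) (by fun_prop)
      (fun u => ⟨trivial, h0⟩)
    have cc := ((continuous_fst.comp c).mul (Real.continuous_cos.comp cn)).add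
      ((continuous_snd.comp c).mul (Real.continuous_sin.comp cn))
    refine cc.congr fun u => ?_
    simp only [Function.comp, Prod.smul_mk, smul_eq_mul, Pi.mul_apply, Pi.add_apply]
    linear_combination g u 0 * Real.sin_sq_add_cos_sq (νf u 0)
  have cS : Continuous (modAniso σ a b) := by unfold modAniso; fun_prop
  have cνu : Continuous (fun u => νu u 0) := by
    have cRn : Continuous (fun u => modAniso σ a b (νf u 0) + a * deriv (deriv σ) (νf u 0)) := by
      fun_prop
    refine (cg.div cRn (fun u => (hR _).ne')).congr fun u => ?_
    simp only [Pi.div_apply]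
    rw [hgn u, mul_div_cancel_left₀ _ (hR _).ne']
  -- change of variables
  have sub : ∀ h : ℝ → ℝ, Continuous h → (∀ s, h (s + 2 * π) = h s) →
      ∫ u in (0:ℝ)..1, h (νf u 0) * νu u 0 = ∫ s in (0:ℝ)..(2 * π), h s := by
    intro h hc hp
    have e := intervalIntegral.integral_comp_mul_deriv (a := 0) (b := 1) (f := fun u => νf u 0)
      (f' := fun u => νu u 0) (g := h) (fun u _ => hνu u 0 h0) cνu.continuousOn hc
    have e' := hνper 0 0 h0
    rw [zero_add] at e'
    simp only [Function.comp, e'] at e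
    rw [e, Function.Periodic.intervalIntegral_add_eq (f := h) hp (νf 0 0) 0, zero_add]
  have i2 : ∫ s in (0:ℝ)..(2 * π), deriv (deriv σ) s = 0 := by
    rw [intervalIntegral.integral_eq_sub_of_hasDerivAt (fun s _ => dd _ s1 s) (ii _ c2)]
    have := P1 0
    rw [zero_add] at this
    rw [this, sub_self]
  have iR : ∫ s in (0:ℝ)..(2 * π), (σ s + deriv (deriv σ) s) = l := by
    rw [intervalIntegral.integral_add (ii _ c0) (ii _ c2), i2, add_zero]
  have ig : ∫ u in (0:ℝ)..1, g u 0 = a * l + b * (2 * π) := by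
    simp_rw [hgn]
    rw [sub (fun s => modAniso σ a b s + a * deriv (deriv σ) s) (by fun_prop)
      (fun s => by simp [modAniso, hσper, P2])]
    have : ∀ s, modAniso σ a b s + a * deriv (deriv σ) s = a * (σ s + deriv (deriv σ) s) + b :=
      fun s => by simp only [modAniso]; ring
    simp_rw [this]
    rw [intervalIntegral.integral_add (ii _ (by fun_prop)) (ii _ (by fun_prop)),
      intervalIntegral.integral_const_mul, iR, intervalIntegral.integral_const, smul_eq_mul]
    ring
  have iL : aLenF σ g νf 0 = a * (2 * W) + b * l := by
    rw [aLenF]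
    have : ∀ u, σ (νf u 0) * g u 0 = (fun s => σ s * (modAniso σ a b s +
        a * deriv (deriv σ) s)) (νf u 0) * νu u 0 := fun u => by rw [hgn]; ring
    simp_rw [this]
    rw [sub (fun s => σ s * (modAniso σ a b s + a * deriv (deriv σ) s)) (by fun_prop)
      (fun s => by simp [modAniso, hσper, P2])]
    have : ∀ s, σ s * (modAniso σ a b s + a * deriv (deriv σ) s) =
        a * (σ s * (σ s + deriv (deriv σ) s)) + b * σ s :=
      fun s => by simp only [modAniso]; ring
    simp_rw [this]
    rw [intervalIntegral.integral_add (ii _ (by fun_prop)) (ii _ (by fun_prop)),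
      intervalIntegral.integral_const_mul, intervalIntegral.integral_const_mul, hWi]
  have iA : areaF x g νf 0 = b * (a * l + b * (2 * π)) := by
    rw [areaF]
    have : ∀ u, (x u 0).1 * (g u 0 * Real.sin (νf u 0)) - (x u 0).2 * (g u 0 * Real.cos (νf u 0))
        = (fun s => modAniso σ a b s * (modAniso σ a b s +
        a * deriv (deriv σ) s)) (νf u 0) * νu u 0 := by
      intro u
      have e1 := (gauss u).1
      have e2 := (gauss u).2
      rw [e1, e2, hgn u]
      linear_combination (modAniso σ a b (νf u 0) * (modAniso σ a b (νf u 0) +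
        a * deriv (deriv σ) (νf u 0)) * νu u 0) * Real.sin_sq_add_cos_sq (νf u 0)
    simp_rw [this]
    rw [sub (fun s => modAniso σ a b s * (modAniso σ a b s + a * deriv (deriv σ) s)) (by fun_prop)
      (fun s => by simp [modAniso, hσper, P2])]
    have : ∀ s, modAniso σ a b s * (modAniso σ a b s + a * deriv (deriv σ) s) =
        a ^ 2 * (σ s * (σ s + deriv (deriv σ) s)) + (a * b) * σ s +
          (a * b) * (σ s + deriv (deriv σ) s) + b ^ 2 :=
      fun s => by simp only [modAniso]; ring
    simp_rw [this]
    rw [intervalIntegral.integral_add (ii _ (by fun_prop)) (ii _ (by fun_prop)),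
      intervalIntegral.integral_add (ii _ (by fun_prop)) (ii _ (by fun_prop)),
      intervalIntegral.integral_add (ii _ (by fun_prop)) (ii _ (by fun_prop)),
      intervalIntegral.integral_const_mul, intervalIntegral.integral_const_mul,
      intervalIntegral.integral_const_mul, hWi, iR, intervalIntegral.integral_const, smul_eq_mul]
    rw [← hl]
    linear_combination habr2
  have fin : ∀ u, ((σ (νf u 0) + deriv (deriv σ) (νf u 0)) * (νu u 0 / g u 0) -
            aLenF σ g νf 0 / (2 * areaF x g νf 0)) * (-Real.sin (νf u 0)) *
            (g u 0 * Real.sin (νf u 0)) -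
      ((σ (νf u 0) + deriv (deriv σ) (νf u 0)) * (νu u 0 / g u 0) -
            aLenF σ g νf 0 / (2 * areaF x g νf 0)) * Real.cos (νf u 0) *
            (g u 0 * Real.cos (νf u 0)) =
      aLenF σ g νf 0 / (2 * areaF x g νf 0) * g u 0 -
        (fun s => σ s + deriv (deriv σ) s) (νf u 0) * νu u 0 := by
    intro u
    have hgu := (hg u 0 h0).ne'
    have e : νu u 0 / g u 0 * g u 0 = νu u 0 := div_mul_cancel₀ _ hgu
    simp only
    generalize aLenF σ g νf 0 / (2 * areaF x g νf 0) = c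
    generalize νu u 0 / g u 0 = k at e ⊢
    rw [← e]
    linear_combination (-(((σ (νf u 0) + deriv (deriv σ) (νf u 0)) * k - c) * g u 0)) *
      Real.sin_sq_add_cos_sq (νf u 0)
  simp_rw [fin]
  rw [intervalIntegral.integral_sub (Continuous.intervalIntegrable (by fun_prop) _ _)
      (Continuous.intervalIntegrable (by fun_prop) _ _), intervalIntegral.integral_const_mul,
    ig, sub (fun s => σ s + deriv (deriv σ) s) (by fun_prop) (fun s => by simp [hσper, P2]), iR,
    iL, iA]
  have hX : 0 < a * l + b * (2 * π) := by positivity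
  rw [show a * (2 * W) = 2 * (a * W) by ring, habr]
  field_simp
  ring
end
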